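/- arXiv:cs/9811019 — 2 statements merged into one kernel-verified Lean document; each statement's English description precedes it below -/
import Mathlib

section
/- There exists a simple closed polygonal chain in ℝ³ that is unknotted — its image (the union of its edges) is the boundary of an embedded topological disk, i.e., there is a continuous injective map from the closed unit disk into ℝ³ mapping the unit circle onto the union of the edges — yet is locked, i.e., cannot be convexified by any motion. -/
noncomputable section

/-- Three-dimensional Euclidean space. -/
abbrev E3 := EuclideanSpace ℝ (Fin 3)

/-- `v 0, …, v (n-1)` is a simple closed polygonal chain (polygon) in ℝ³: `n ≥ 3`,
the vertices are pairwise distinct, and two edges `[v i, v ((i+1) % n)]`,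
`[v j, v ((j+1) % n)]` (for `i < j < n`) are disjoint unless they are cyclically
consecutive, in which case they meet exactly in their common vertex. -/
def IsSimpleClosedChain (n : ℕ) (v : ℕ → E3) : Prop :=
  3 ≤ n ∧
  (∀ i j, i < n → j < n → i ≠ j → v i ≠ v j) ∧
  (∀ i j, i < j → j < n →
    segment ℝ (v i) (v ((i + 1) % n)) ∩ segment ℝ (v j) (v ((j + 1) % n)) =
      if i + 1 = j then {v j}
      else if i = 0 ∧ j = n - 1 then {v 0}
      else ∅)

/-- A motion of the closed chain `v 0, …, v (n-1)`: a continuous family of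
configurations over `[0,1]`, starting at `v`, remaining a simple closed chain at
all times, and preserving all edge lengths. -/
def IsClosedChainMotion (n : ℕ) (v : ℕ → E3) (γ : ℝ → ℕ → E3) : Prop :=
  (∀ i, i < n → ContinuousOn (fun t => γ t i) (Set.Icc 0 1)) ∧
  (∀ i, i < n → γ 0 i = v i) ∧
  (∀ t ∈ Set.Icc (0 : ℝ) 1, IsSimpleClosedChain n (γ t)) ∧
  (∀ t ∈ Set.Icc (0 : ℝ) 1, ∀ i, i < n →
    ‖γ t ((i + 1) % n) - γ t i‖ = ‖v ((i + 1) % n) - v i‖)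

/-- The configuration `w 0, …, w (n-1)` is a planar convex polygon: all vertices lie
in a common plane (2-dimensional affine subspace), they are in strictly convex
position (no vertex is in the convex hull of the others), and the cyclic order of
the chain agrees with the order of the vertices along the boundary of their convex
hull: each edge lies on a supporting line of the configuration, with all other
vertices strictly on one side. -/
def IsConvexConfiguration (n : ℕ) (w : ℕ → E3) : Prop :=
  (∃ S : AffineSubspace ℝ E3, Module.finrank ℝ S.direction = 2 ∧
    ∀ i, i < n → w i ∈ S) ∧
  (∀ i, i < n → w i ∉ convexHull ℝ {x | ∃ j, j < n ∧ j ≠ i ∧ x = w j}) ∧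
  (∀ i, i < n → ∃ f : E3 →ₗ[ℝ] ℝ,
    f (w i) = f (w ((i + 1) % n)) ∧
    ∀ j, j < n → j ≠ i → j ≠ (i + 1) % n → f (w j) < f (w i))

/-- The closed chain `v 0, …, v (n-1)` can be convexified: there is a motion whose
final configuration is a planar convex polygon. -/
def CanBeConvexified (n : ℕ) (v : ℕ → E3) : Prop :=
  ∃ γ : ℝ → ℕ → E3, IsClosedChainMotion n v γ ∧ IsConvexConfiguration n (γ 1)

/-- The closed chain `v 0, …, v (n-1)` is unknotted: the union of its edges bounds an
embedded topological disk, i.e. there is a continuous injective map `φ` from the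
closed unit disk of ℝ² into ℝ³ mapping the unit circle onto the union of the edges.
(Since the disk is compact, the restriction of such a `φ` to the unit circle is
automatically a homeomorphism onto its image.) -/
def IsUnknotted (n : ℕ) (v : ℕ → E3) : Prop :=
  ∃ φ : EuclideanSpace ℝ (Fin 2) → E3,
    ContinuousOn φ (Metric.closedBall 0 1) ∧
    Set.InjOn φ (Metric.closedBall 0 1) ∧
    φ '' Metric.sphere 0 1 =
      {x | ∃ i, i < n ∧ x ∈ segment ℝ (v i) (v ((i + 1) % n))}

/-!
The chain is a heptagon with two very long edges from its vertex `O` to `b` and to `c`. Between `b`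
and `c` it runs through a short path `u₁u₂u₃u₄`. Seen from `O`, the edge `u₃u₄` crosses in front of
`u₁u₂`, so the path closes up to a small loop, and both long edges pass through that loop. The
lengths make `b` and `c` so distant from the path that the loop cannot slip off their ends, and
simplicity keeps the edges from passing through the sides of the loop. Formally, the caught
configurations are described by a closed condition and by an open one, which agree on simple chains
with the given edge lengths. Along a motion the set of times at which the chain is caught is thus
open and closed, hence all of `[0, 1]`; but no convex polygon is caught, since the edge `u₂u₃` would
have a supporting plane.

That the heptagon is unknotted is seen by building it up from a triangle, one vertex at a time: an
edge is pulled to a new vertex by a continuous injection of space which moves only the points of an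
open convex set disjoint from the other edges.
-/

lemma exists_sub_mul_nonneg_eq_zero {ι : Type*} [Finite ι] {p c : ι → ℝ}
    (hp : ∀ i, 0 < p i) (hc : ∃ i, 0 < c i) :
    ∃ t : ℝ, 0 ≤ t ∧ (∀ i, 0 ≤ p i - t * c i) ∧ ∃ i, p i - t * c i = 0 := by
  have := Fintype.ofFinite ι
  obtain ⟨i₀, hi₀⟩ := hc
  obtain ⟨i, hi, hmin⟩ := Finset.exists_min_image {i | 0 < c i} (fun i => p i / c i)
    ⟨i₀, by simpa using hi₀⟩
  replace hi : 0 < c i := by simpa using hi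
  have ht : 0 < p i / c i := div_pos (hp i) hi
  refine ⟨p i / c i, ht.le, fun j => sub_nonneg.2 ?_, i, by field_simp; ring⟩
  rcases lt_or_ge 0 (c j) with hj | hj
  · exact (le_div_iff₀ hj).1 (hmin j (by simpa using hj))
  · exact (mul_nonpos_of_nonneg_of_nonpos ht.le hj).trans (hp j).le

section ConvexHull

variable {ι E : Type*} [Fintype ι] [AddCommGroup E] [Module ℝ E]

lemma convexHull_range_eq_image_stdSimplex (v : ι → E) :
    convexHull ℝ (Set.range v) = (fun p => ∑ i, p i • v i) '' stdSimplex ℝ ι := by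
  classical
  have hv : v = Fintype.linearCombination ℝ v ∘ fun i => Pi.single i 1 := by
    ext i
    simp
  conv_lhs => rw [hv, Set.range_comp, ← LinearMap.image_convexHull,
    convexHull_rangle_single_eq_stdSimplex]
  rfl

lemma mem_convexHull_range {v : ι → E} {y : E} :
    y ∈ convexHull ℝ (Set.range v) ↔
      ∃ p : ι → ℝ, (∀ i, 0 ≤ p i) ∧ ∑ i, p i = 1 ∧ ∑ i, p i • v i = y := by
  rw [convexHull_range_eq_image_stdSimplex]
  exact exists_congr fun p => and_assoc

lemma mem_segment_zero_left {x y : E} :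
    y ∈ segment ℝ 0 x ↔ ∃ t ∈ Set.Icc (0 : ℝ) 1, t • x = y := by
  simp [segment_eq_image]

lemma not_disjoint_segment_of_add_smul_mem {v w b : E} {p q : ℝ} (hp : 0 ≤ p) (hq : 0 ≤ q)
    (hpq : 1 ≤ p + q) (h : p • v + q • w ∈ segment ℝ 0 b) :
    ¬ Disjoint (segment ℝ v w) (segment ℝ 0 b) := by
  have hpos : 0 < p + q := by linarith
  refine Set.not_disjoint_iff.2 ⟨(p + q)⁻¹ • (p • v + q • w),
    ⟨p / (p + q), q / (p + q), by positivity, by positivity, ?_, ?_⟩,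
    (convex_segment 0 b).smul_mem_of_zero_mem (left_mem_segment ℝ 0 b) h
      ⟨by positivity, inv_le_one_of_one_le₀ hpq⟩⟩
  · rw [← add_div, div_self hpos.ne']
  · simp only [smul_add, smul_smul, div_eq_inv_mul]

lemma zero_mem_convexHull_range_of_nonpos {v : ι → E} {c : ι → ℝ} (hc : ∀ i, c i ≤ 0)
    (hne : c ≠ 0) (h : ∑ i, c i • v i = 0) : 0 ∈ convexHull ℝ (Set.range v) := by
  have hsum : ∑ i, c i ≠ 0 := fun h0 => hne <| funext fun i =>
    (Finset.sum_eq_zero_iff_of_nonpos fun i _ => hc i).1 h0 i (Finset.mem_univ i)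
  refine mem_convexHull_range.2 ⟨fun i => c i / ∑ j, c j, fun i =>
    div_nonneg_of_nonpos (hc i) (Finset.sum_nonpos fun i _ => hc i), ?_, ?_⟩
  · rw [← Finset.sum_div, div_self hsum]
  · simp_rw [div_eq_inv_mul, mul_smul, ← Finset.smul_sum, h, smul_zero]

/- Moving the weights along a linear dependence whose weights have nonpositive sum keeps the total
weight at least one until some weight vanishes. -/
lemma linearIndependent_of_forall_weight_pos {v : ι → E} {p : ι → ℝ} (hp : ∀ i, 0 ≤ p i)
    (hsum : 1 ≤ ∑ i, p i)
    (hpos : ∀ q : ι → ℝ, (∀ i, 0 ≤ q i) → 1 ≤ ∑ i, q i → ∑ i, q i • v i = ∑ i, p i • v i →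
      ∀ i, 0 < q i)
    (h0 : 0 ∉ convexHull ℝ (Set.range v)) : LinearIndependent ℝ v := by
  have no_dependence : ∀ c : ι → ℝ, c ≠ 0 → ∑ i, c i • v i = 0 → ¬ ∑ i, c i ≤ 0 := by
    intro c hc hcv hcs
    by_cases hex : ∃ i, 0 < c i
    · obtain ⟨t, ht, hnonneg, i, hi⟩ :=
        exists_sub_mul_nonneg_eq_zero (hpos p hp hsum rfl) hex
      refine (hpos (fun i => p i - t * c i) hnonneg ?_ ?_ i).ne' hi
      · rw [Finset.sum_sub_distrib, ← Finset.mul_sum]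
        linarith [mul_nonpos_of_nonneg_of_nonpos ht hcs]
      · simp_rw [sub_smul, mul_smul, Finset.sum_sub_distrib, ← Finset.smul_sum, hcv, smul_zero,
          sub_zero]
    · push Not at hex
      exact h0 (zero_mem_convexHull_range_of_nonpos hex hc hcv)
  by_contra hli
  obtain ⟨c, hcv, i, hi⟩ := Fintype.not_linearIndependent_iff.1 hli
  have hc : c ≠ 0 := fun h => hi (congrFun h i)
  rcases le_total (∑ i, c i) 0 with h | h
  · exact no_dependence c hc hcv h
  · exact no_dependence (-c) (neg_ne_zero.2 hc) (by simpa using hcv) (by simpa using h)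

end ConvexHull

section Closed

variable {ι κ E X : Type*} [Finite ι] [Finite κ] [AddCommGroup E] [Module ℝ E] [TopologicalSpace E]
  [ContinuousAdd E] [ContinuousSMul ℝ E] [TopologicalSpace X]

lemma isClosed_setOf_exists_mem_convexHull {v : X → ι → E} (hv : ∀ i, Continuous fun t => v t i)
    {P : Set (X × E)} (hP : IsClosed P) :
    IsClosed {t | ∃ x ∈ convexHull ℝ (Set.range (v t)), (t, x) ∈ P} := by
  have := Fintype.ofFinite ι
  have := isCompact_iff_compactSpace.1 (isCompact_stdSimplex ℝ ι)
  have hcont : Continuous fun q : X × stdSimplex ℝ ι => (q.1, ∑ i, q.2.1 i • v q.1 i) :=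
    continuous_fst.prodMk <| continuous_finsetSum _ fun i _ =>
      ((continuous_apply i).comp (continuous_subtype_val.comp continuous_snd)).smul
        ((hv i).comp continuous_fst)
  convert isClosedMap_fst_of_compactSpace _ (hP.preimage hcont)
  ext t
  simp [convexHull_range_eq_image_stdSimplex]

lemma isClosed_setOf_convexHull_inter_nonempty [T2Space E] {v : X → ι → E} {w : X → κ → E}
    (hv : ∀ i, Continuous fun t => v t i) (hw : ∀ i, Continuous fun t => w t i) :
    IsClosed {t | (convexHull ℝ (Set.range (v t)) ∩ convexHull ℝ (Set.range (w t))).Nonempty} := by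
  refine isClosed_setOf_exists_mem_convexHull hv
    (P := {p | p.2 ∈ convexHull ℝ (Set.range (w p.1))}) ?_
  convert isClosed_setOf_exists_mem_convexHull (fun i => (hw i).comp continuous_fst)
    (isClosed_eq (continuous_snd.comp continuous_fst) continuous_snd) using 1
  ext p
  simp

end Closed

/- Stewart's theorem for the point `τ • c` of the side `[0, c]` of the triangle `0uc`, completed to
a square in `1 - τ`. -/
lemma norm_sq_le_of_norm_sub_smul_le {E : Type*} [NormedAddCommGroup E] [InnerProductSpace ℝ E]
    {u c : E} {τ m R : ℝ} (hτ : τ < 1) (h : ‖u - τ • c‖ ≤ R) (hm : m ^ 2 + R ^ 2 ≤ ‖u - c‖ ^ 2) :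
    ‖u‖ ^ 2 ≤ ‖c‖ ^ 2 + ‖u - c‖ ^ 2 - 2 * ‖c‖ * m := by
  have hsq : ‖u - τ • c‖ ^ 2 ≤ R ^ 2 := by gcongr
  have stewart : ‖u - τ • c‖ ^ 2 =
      (1 - τ) * ‖u‖ ^ 2 + τ * ‖u - c‖ ^ 2 - τ * (1 - τ) * ‖c‖ ^ 2 := by
    rw [norm_sub_sq_real, norm_sub_sq_real, inner_smul_right, norm_smul, mul_pow,
      Real.norm_eq_abs, sq_abs]
    ring
  refine le_of_mul_le_mul_left ?_ (sub_pos.2 hτ)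
  linarith [sq_nonneg ((1 - τ) * ‖c‖ - m)]

section Determinant

/-- The determinant of three vectors of `ℝ³`. -/
def det3 (x y z : E3) : ℝ := Matrix.det (Matrix.of ![x.ofLp, y.ofLp, z.ofLp])

lemma det3_apply (x y z : E3) : det3 x y z =
    x 0 * y 1 * z 2 - x 0 * y 2 * z 1 - x 1 * y 0 * z 2 + x 1 * y 2 * z 0 + x 2 * y 0 * z 1 -
      x 2 * y 1 * z 0 :=
  Matrix.det_fin_three _

lemma continuous_det3 {X : Type*} [TopologicalSpace X] {x y z : X → E3} (hx : Continuous x)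
    (hy : Continuous y) (hz : Continuous z) : Continuous fun t => det3 (x t) (y t) (z t) := by
  simp only [det3_apply]
  fun_prop

lemma det3_ne_zero_of_linearIndependent {x y z : E3} (h : LinearIndependent ℝ ![x, y, z]) :
    det3 x y z ≠ 0 := by
  have hrow := h.map' (WithLp.linearEquiv 2 ℝ (Fin 3 → ℝ)).toLinearMap (LinearEquiv.ker _)
  have hcomp : (WithLp.linearEquiv 2 ℝ (Fin 3 → ℝ)).toLinearMap ∘ ![x, y, z] =
      (Matrix.of ![x.ofLp, y.ofLp, z.ofLp]).row := by
    ext i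
    fin_cases i <;> rfl
  rw [hcomp] at hrow
  exact ((Matrix.isUnit_iff_isUnit_det _).1
    (Matrix.linearIndependent_rows_iff_isUnit.1 hrow)).ne_zero

lemma det3_plucker (a b c d : E3) :
    det3 b c d • a - det3 a c d • b + det3 a b d • c - det3 a b c • d = 0 := by
  ext i
  fin_cases i <;> simp [det3_apply] <;> ring

lemma det3_cramer (x y z b : E3) :
    det3 y z b • x + det3 z x b • y + det3 x y b • z = det3 x y z • b := by
  ext i
  fin_cases i <;> simp [det3_apply] <;> ring

end Determinant

section Crossing

/-- The segment `[a, b]` crosses the open triangle with vertices `0`, `c` and `d`, from the negative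
to the positive side of its plane; see `Crosses.exists_combination` and `crosses_of_combination`.
The encoding by strict inequalities between determinants makes this visibly an open condition. -/
def Crosses (a b c d : E3) : Prop :=
  det3 a c d < 0 ∧ 0 < det3 b c d ∧ det3 a b d < 0 ∧ 0 < det3 a b c ∧
    det3 a b c - det3 a b d < det3 b c d - det3 a c d

/-- The segment `[0, b]` crosses the open triangle with vertices `x`, `y` and `z`; see
`Pierces.segment_inter_convexHull_nonempty` and `pierces_of_combination`. -/
def Pierces (x y z b : E3) : Prop :=
  0 < det3 y z b ∧ 0 < det3 z x b ∧ 0 < det3 x y b ∧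
    det3 x y z < det3 y z b + det3 z x b + det3 x y b

variable {a b c d x y z : E3}

lemma Crosses.exists_combination (h : Crosses a b c d) :
    ∃ t ∈ Set.Ioo (0 : ℝ) 1, ∃ ρ σ : ℝ, 0 < ρ ∧ 0 < σ ∧ ρ + σ < 1 ∧
      (1 - t) • a + t • b = ρ • c + σ • d := by
  obtain ⟨hacd, hbcd, habd, habc, hlt⟩ := h
  set G := det3 b c d - det3 a c d with hG
  have hG0 : 0 < G := by linarith
  refine ⟨-det3 a c d / G, ⟨div_pos (neg_pos.2 hacd) hG0, (div_lt_one hG0).2 (by linarith)⟩,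
    -det3 a b d / G, det3 a b c / G, div_pos (neg_pos.2 habd) hG0, div_pos habc hG0, ?_, ?_⟩
  · rw [← add_div, div_lt_one hG0]
    linarith
  · have ht : 1 - -det3 a c d / G = det3 b c d / G := by
      rw [eq_div_iff hG0.ne', sub_mul, div_mul_cancel₀ _ hG0.ne', hG]
      ring
    rw [ht, ← sub_eq_zero, ← smul_zero G⁻¹, ← det3_plucker a b c d]
    simp only [div_eq_inv_mul]
    module

lemma crosses_of_det3 (hacd : det3 a c d < 0) (hbcd : 0 < det3 b c d) (habd : det3 a b d < 0)
    (habc : 0 < det3 a b c) {t ρ σ : ℝ} (hρσ : ρ + σ < 1)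
    (h : (1 - t) • a + t • b = ρ • c + σ • d) : Crosses a b c d := by
  have hcd := congrArg (det3 · c d) h
  have had := congrArg (det3 a · d) h
  have hac := congrArg (det3 a c ·) h
  simp only [det3_apply, PiLp.add_apply, PiLp.smul_apply, smul_eq_mul] at hcd had hac
  replace hcd : t * (det3 b c d - det3 a c d) = -det3 a c d := by
    simp only [det3_apply]; linear_combination hcd
  replace had : t * det3 a b d = ρ * det3 a c d := by
    simp only [det3_apply]; linear_combination had
  replace hac : t * det3 a b c = -(σ * det3 a c d) := by
    simp only [det3_apply]; linear_combination -hac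
  have ht : 0 < t := pos_of_mul_pos_left (hcd ▸ neg_pos.2 hacd) (by linarith)
  refine ⟨hacd, hbcd, habd, habc, lt_of_mul_lt_mul_left (a := t) ?_ ht.le⟩
  calc t * (det3 a b c - det3 a b d) = (ρ + σ) * -det3 a c d := by linear_combination hac - had
    _ < 1 * -det3 a c d := by gcongr; exact neg_pos.2 hacd
    _ = t * (det3 b c d - det3 a c d) := by rw [one_mul, hcd]

lemma crosses_of_combination (hbcd : 0 < det3 b c d) {t ρ σ : ℝ} (ht : t ∈ Set.Ioo (0 : ℝ) 1)
    (hρ : 0 < ρ) (hσ : 0 < σ) (hρσ : ρ + σ < 1)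
    (h : (1 - t) • a + t • b = ρ • c + σ • d) : Crosses a b c d := by
  obtain ⟨ht0, ht1⟩ := ht
  have hcd := congrArg (det3 · c d) h
  have had := congrArg (det3 a · d) h
  have hac := congrArg (det3 a c ·) h
  simp only [det3_apply, PiLp.add_apply, PiLp.smul_apply, smul_eq_mul] at hcd had hac
  have hacd : det3 a c d < 0 := by
    have : (1 - t) * det3 a c d = -(t * det3 b c d) := by
      simp only [det3_apply]; linear_combination hcd
    exact neg_of_mul_neg_right (this ▸ neg_neg_iff_pos.2 (mul_pos ht0 hbcd)) (sub_pos.2 ht1).le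
  have habd : det3 a b d < 0 := by
    have : t * det3 a b d = ρ * det3 a c d := by
      simp only [det3_apply]; linear_combination had
    exact neg_of_mul_neg_right (this ▸ mul_neg_of_pos_of_neg hρ hacd) ht0.le
  have habc : 0 < det3 a b c := by
    have : t * det3 a b c = -(σ * det3 a c d) := by
      simp only [det3_apply]; linear_combination -hac
    exact pos_of_mul_pos_right (this ▸ neg_pos.2 (mul_neg_of_pos_of_neg hσ hacd)) ht0.le
  exact crosses_of_det3 hacd hbcd habd habc hρσ h

lemma Pierces.segment_inter_convexHull_nonempty (hD : 0 < det3 x y z) (h : Pierces x y z b) :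
    (segment ℝ 0 b ∩ convexHull ℝ (Set.range ![x, y, z])).Nonempty := by
  obtain ⟨hyz, hzx, hxy, hlt⟩ := h
  set s := det3 y z b + det3 z x b + det3 x y b
  have hs0 : 0 < s := hD.trans hlt
  refine ⟨(det3 x y z / s) • b,
    mem_segment_zero_left.2 ⟨_, ⟨by positivity, (div_le_one hs0).2 hlt.le⟩, rfl⟩,
    mem_convexHull_range.2 ⟨![det3 y z b / s, det3 z x b / s, det3 x y b / s], ?_, ?_, ?_⟩⟩
  · simp only [Fin.forall_fin_succ]
    exact ⟨(div_pos hyz hs0).le, (div_pos hzx hs0).le, (div_pos hxy hs0).le, fun i => i.elim0⟩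
  · rw [Fin.sum_univ_three]
    change _ / s + _ / s + _ / s = 1
    rw [← add_div, ← add_div, div_self hs0.ne']
  · rw [Fin.sum_univ_three, div_eq_inv_mul (det3 x y z), mul_smul, ← det3_cramer x y z b]
    simp only [Matrix.cons_val_zero, Matrix.cons_val_one, Matrix.cons_val, div_eq_inv_mul]
    module

lemma pierces_of_combination (hD : 0 < det3 x y z) {p : Fin 3 → ℝ} (hp : ∀ i, 0 < p i)
    (hsum : ∑ i, p i = 1) {τ : ℝ} (hτ : τ ∈ Set.Ico (0 : ℝ) 1)
    (h : ∑ i, p i • ![x, y, z] i = τ • b) : Pierces x y z b := by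
  simp only [Fin.sum_univ_three, Matrix.cons_val_zero, Matrix.cons_val_one, Matrix.cons_val]
    at h hsum
  have hyz := congrArg (det3 y z) h
  have hzx := congrArg (det3 z x) h
  have hxy := congrArg (det3 x y) h
  simp only [det3_apply, PiLp.add_apply, PiLp.smul_apply, smul_eq_mul] at hyz hzx hxy
  replace hyz : τ * det3 y z b = p 0 * det3 x y z := by
    simp only [det3_apply]; linear_combination -hyz
  replace hzx : τ * det3 z x b = p 1 * det3 x y z := by
    simp only [det3_apply]; linear_combination -hzx
  replace hxy : τ * det3 x y b = p 2 * det3 x y z := by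
    simp only [det3_apply]; linear_combination -hxy
  have pos : ∀ {e : ℝ} (i), τ * e = p i * det3 x y z → 0 < e := fun i he =>
    pos_of_mul_pos_right (he ▸ mul_pos (hp i) hD) hτ.1
  have hyz0 := pos 0 hyz
  have hzx0 := pos 1 hzx
  have hxy0 := pos 2 hxy
  refine ⟨hyz0, hzx0, hxy0, ?_⟩
  calc det3 x y z = τ * (det3 y z b + det3 z x b + det3 x y b) := by
        linear_combination -hyz - hzx - hxy - det3 x y z * hsum
    _ < 1 * (det3 y z b + det3 z x b + det3 x y b) := by
        gcongr
        exact hτ.2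
    _ = _ := one_mul _

end Crossing

section Trap

variable {u₁ u₂ u₃ u₄ b c x y z : E3} {α β l : ℝ}

/-- The segment `[0, b]` crosses the open triangle with vertices `x`, `u₂` and `u₃`, where `x` is
the point of `[u₁, u₂]` behind the point of `[u₃, u₄]` seen from the origin; see
`piercesClasp_iff`. -/
def PiercesClasp (u₁ u₂ u₃ u₄ b : E3) : Prop :=
  0 < det3 u₂ u₃ b ∧ 0 < det3 u₃ u₄ b ∧ 0 < det3 u₁ u₂ b ∧
    det3 u₁ u₂ u₃ < det3 u₂ u₃ b - det3 u₁ u₃ b + det3 u₁ u₂ b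

lemma det3_clasp (u₁ u₂ w : E3) (α : ℝ) :
    det3 ((1 - α) • u₁ + α • u₂) u₂ w = (1 - α) * det3 u₁ u₂ w := by
  simp only [det3_apply, PiLp.add_apply, PiLp.smul_apply, smul_eq_mul]
  ring

lemma piercesClasp_iff (hα : α < 1) (hβ : 0 < β) (hl : 0 < l)
    (hx : (1 - α) • u₁ + α • u₂ = x) (hy : (1 - β) • u₃ + β • u₄ = l • x) :
    PiercesClasp u₁ u₂ u₃ u₄ b ↔ Pierces x u₂ u₃ b := by
  have h3x : l * det3 u₃ x b = β * det3 u₃ u₄ b := by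
    have := congrArg (det3 u₃ · b) hy
    simp only [det3_apply, PiLp.add_apply, PiLp.smul_apply, smul_eq_mul] at this ⊢
    linear_combination -this
  have h3x_pos : 0 < det3 u₃ u₄ b ↔ 0 < det3 u₃ x b := by
    rw [← mul_pos_iff_of_pos_left hβ, ← h3x, mul_pos_iff_of_pos_left hl]
  subst hx
  have hsum : det3 u₂ u₃ b + det3 u₃ ((1 - α) • u₁ + α • u₂) b + (1 - α) * det3 u₁ u₂ b =
      (1 - α) * (det3 u₂ u₃ b - det3 u₁ u₃ b + det3 u₁ u₂ b) := by
    simp only [det3_apply, PiLp.add_apply, PiLp.smul_apply, smul_eq_mul]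
    ring
  rw [PiercesClasp, Pierces, h3x_pos, det3_clasp, det3_clasp, hsum,
    mul_pos_iff_of_pos_left (sub_pos.2 hα), mul_lt_mul_iff_right₀ (sub_pos.2 hα)]

/-- The trap, relative to the vertex of the chain placed at the origin: seen from there, the edges
`u₁u₂` and `u₃u₄` cross, with the second one in front, and the long edges `b` and `c` pass through
the triangle cut out by this crossing and `u₂`, `u₃`; moreover `u₁u₂` passes through the triangle
spanned by the origin, `u₄` and `b`. -/
def IsCaught (u₁ u₂ u₃ u₄ b c : E3) : Prop :=
  (segment ℝ u₁ u₂ ∩ convexHull ℝ (Set.range ![0, u₄, b])).Nonempty ∧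
  ∃ x ∈ segment ℝ u₁ u₂, (segment ℝ u₃ u₄ ∩ segment ℝ 0 x).Nonempty ∧
    (segment ℝ 0 b ∩ convexHull ℝ (Set.range ![x, u₂, u₃])).Nonempty ∧
    (segment ℝ 0 c ∩ convexHull ℝ (Set.range ![x, u₂, u₃])).Nonempty ∧
    0 ≤ det3 x u₂ u₃

/-- The counterpart of `IsCaught` in which all crossings are transverse and avoid the boundaries of
the triangles. -/
def IsStrictlyCaught (u₁ u₂ u₃ u₄ b c : E3) : Prop :=
  Crosses u₂ u₁ u₄ b ∧ Crosses u₄ u₃ u₁ u₂ ∧ PiercesClasp u₁ u₂ u₃ u₄ b ∧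
    PiercesClasp u₁ u₂ u₃ u₄ c

lemma Crosses.segment_inter_convexHull_nonempty {a d : E3} (h : Crosses a b c d) :
    (segment ℝ a b ∩ convexHull ℝ (Set.range ![0, c, d])).Nonempty := by
  obtain ⟨t, ht, ρ, σ, hρ, hσ, hlt, h⟩ := h.exists_combination
  refine ⟨(1 - t) • a + t • b, ⟨1 - t, t, by linarith [ht.2], ht.1.le, by ring, rfl⟩,
    mem_convexHull_range.2 ⟨![1 - ρ - σ, ρ, σ], ?_, ?_, ?_⟩⟩
  · simp only [Fin.forall_fin_succ]
    exact ⟨by change 0 ≤ 1 - ρ - σ; linarith, hρ.le, hσ.le, fun i => i.elim0⟩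
  · rw [Fin.sum_univ_three]
    change 1 - ρ - σ + ρ + σ = 1
    ring
  · simp [Fin.sum_univ_three, h]

lemma Crosses.exists_clasp (h : Crosses u₄ u₃ u₁ u₂) :
    ∃ α ∈ Set.Ioo (0 : ℝ) 1, ∃ β ∈ Set.Ioo (0 : ℝ) 1, ∃ l ∈ Set.Ioo (0 : ℝ) 1,
      (1 - β) • u₃ + β • u₄ = l • ((1 - α) • u₁ + α • u₂) := by
  obtain ⟨t, ht, ρ, σ, hρ, hσ, hlt, h⟩ := h.exists_combination
  have hl : 0 < ρ + σ := by positivity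
  refine ⟨σ / (ρ + σ), ⟨by positivity, (div_lt_one hl).2 (by linarith)⟩, 1 - t,
    ⟨by linarith [ht.2], by linarith [ht.1]⟩, ρ + σ, ⟨hl, hlt⟩, ?_⟩
  have hα : 1 - σ / (ρ + σ) = ρ / (ρ + σ) := by
    field_simp
    ring
  rw [hα, smul_add, smul_smul, smul_smul, mul_div_cancel₀ _ hl.ne', mul_div_cancel₀ _ hl.ne', ← h]
  module

lemma IsStrictlyCaught.isCaught (h : IsStrictlyCaught u₁ u₂ u₃ u₄ b c) :
    IsCaught u₁ u₂ u₃ u₄ b c := by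
  obtain ⟨h4b, hclasp, hb, hc⟩ := h
  obtain ⟨α, ⟨hα0, hα1⟩, β, ⟨hβ0, hβ1⟩, l, ⟨hl0, hl1⟩, hy⟩ := hclasp.exists_clasp
  have hD : 0 < det3 ((1 - α) • u₁ + α • u₂) u₂ u₃ := by
    have : det3 u₁ u₂ u₃ = det3 u₃ u₁ u₂ := by simp only [det3_apply]; ring
    rw [det3_clasp, this]
    exact mul_pos (sub_pos.2 hα1) hclasp.2.1
  refine ⟨segment_symm ℝ u₂ u₁ ▸ h4b.segment_inter_convexHull_nonempty, (1 - α) • u₁ + α • u₂,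
    ⟨1 - α, α, by linarith, hα0.le, by ring, rfl⟩,
    ⟨_, ⟨1 - β, β, by linarith, hβ0.le, by ring, rfl⟩,
      mem_segment_zero_left.2 ⟨l, ⟨hl0.le, hl1.le⟩, hy.symm⟩⟩, ?_, ?_, hD.le⟩
  · exact ((piercesClasp_iff hα1 hβ0 hl0 rfl hy).1 hb).segment_inter_convexHull_nonempty hD
  · exact ((piercesClasp_iff hα1 hβ0 hl0 rfl hy).1 hc).segment_inter_convexHull_nonempty hD

/-- The segment `[0, d]` avoids the three edges of the path `u₁u₂u₃u₄`. -/
def AvoidsPath (u₁ u₂ u₃ u₄ d : E3) : Prop :=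
  Disjoint (segment ℝ u₁ u₂) (segment ℝ 0 d) ∧ Disjoint (segment ℝ u₂ u₃) (segment ℝ 0 d) ∧
    Disjoint (segment ℝ u₃ u₄) (segment ℝ 0 d)

/- A vanishing weight would put a point of the cone over one of the three edges, beyond that edge,
on `[0, d]`; on the side from `x` to `u₃` this uses that `l • x` lies on `[u₃, u₄]`. -/
lemma AvoidsPath.weight_pos {d : E3} (h : AvoidsPath u₁ u₂ u₃ u₄ d) (hx : x ∈ segment ℝ u₁ u₂)
    (hl : l ∈ Set.Ioc (0 : ℝ) 1) (hy : l • x ∈ segment ℝ u₃ u₄) {p : Fin 3 → ℝ}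
    (hp : ∀ i, 0 ≤ p i) (hsum : 1 ≤ ∑ i, p i)
    (hmem : ∑ i, p i • ![x, u₂, u₃] i ∈ segment ℝ 0 d) (i : Fin 3) : 0 < p i := by
  obtain ⟨h12, h23, h34⟩ := h
  have hx2 : segment ℝ x u₂ ⊆ segment ℝ u₁ u₂ :=
    (convex_segment u₁ u₂).segment_subset hx (right_mem_segment ℝ u₁ u₂)
  have hy3 : segment ℝ (l • x) u₃ ⊆ segment ℝ u₃ u₄ :=
    (convex_segment u₃ u₄).segment_subset hy (left_mem_segment ℝ u₃ u₄)
  simp only [Fin.sum_univ_three, Matrix.cons_val_zero, Matrix.cons_val_one, Matrix.cons_val]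
    at hsum hmem
  refine (hp i).lt_of_ne' fun hi => ?_
  fin_cases i <;> simp only [Fin.zero_eta, Fin.mk_one, Fin.reduceFinMk] at hi <;>
    simp only [hi, zero_smul, zero_add, add_zero] at hsum hmem
  · exact not_disjoint_segment_of_add_smul_mem (hp 1) (hp 2) hsum hmem h23
  · refine not_disjoint_segment_of_add_smul_mem (v := l • x) (div_nonneg (hp 0) hl.1.le) (hp 2)
      ?_ ?_ (h34.mono_left hy3)
    · linarith [le_div_self (hp 0) hl.1 hl.2]
    · rwa [smul_smul, div_mul_cancel₀ _ hl.1.ne']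
  · exact not_disjoint_segment_of_add_smul_mem (hp 0) (hp 1) hsum hmem (h12.mono_left hx2)

lemma AvoidsPath.linearIndependent {d : E3} (h : AvoidsPath u₁ u₂ u₃ u₄ d)
    (hx : x ∈ segment ℝ u₁ u₂) (hl : l ∈ Set.Ioc (0 : ℝ) 1) (hy : l • x ∈ segment ℝ u₃ u₄)
    (h0 : 0 ∉ convexHull ℝ (Set.range ![x, u₂, u₃]))
    (hd : (segment ℝ 0 d ∩ convexHull ℝ (Set.range ![x, u₂, u₃])).Nonempty) :
    LinearIndependent ℝ ![x, u₂, u₃] := by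
  obtain ⟨q, hqd, hq⟩ := hd
  obtain ⟨p, hp, hsum, rfl⟩ := mem_convexHull_range.1 hq
  exact linearIndependent_of_forall_weight_pos hp hsum.ge
    (fun r hr hrsum hrp => h.weight_pos hx hl hy hr hrsum (hrp ▸ hqd)) h0

lemma AvoidsPath.exists_combination {d : E3} (h : AvoidsPath u₁ u₂ u₃ u₄ d)
    (hx : x ∈ segment ℝ u₁ u₂) (hl : l ∈ Set.Ioc (0 : ℝ) 1) (hy : l • x ∈ segment ℝ u₃ u₄)
    (h0 : 0 ∉ convexHull ℝ (Set.range ![x, u₂, u₃]))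
    (h1 : d ∉ convexHull ℝ (Set.range ![x, u₂, u₃]))
    (hd : (segment ℝ 0 d ∩ convexHull ℝ (Set.range ![x, u₂, u₃])).Nonempty) :
    ∃ p : Fin 3 → ℝ, (∀ i, 0 < p i) ∧ ∑ i, p i = 1 ∧
      ∃ τ ∈ Set.Ioo (0 : ℝ) 1, ∑ i, p i • ![x, u₂, u₃] i = τ • d := by
  obtain ⟨q, hqd, hq⟩ := hd
  obtain ⟨p, hp, hsum, rfl⟩ := mem_convexHull_range.1 hq
  obtain ⟨τ, hτ, hτd⟩ := mem_segment_zero_left.1 hqd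
  refine ⟨p, h.weight_pos hx hl hy hp hsum.ge hqd, hsum, τ, ⟨hτ.1.lt_of_ne' ?_, hτ.2.lt_of_ne ?_⟩,
    hτd.symm⟩
  · rintro rfl
    exact h0 (by rwa [← hτd, zero_smul] at hq)
  · rintro rfl
    exact h1 (by rwa [← hτd, one_smul] at hq)

/-- The metric and disjointness constraints under which the trap cannot be left: they hold for every
simple closed chain with the edge lengths of `trapChain`, placed with its sixth vertex at the
origin. -/
structure IsTrapGeometry (u₁ u₂ u₃ u₄ b c : E3) : Prop where
  dist₁₂_le : dist u₁ u₂ ≤ 21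
  dist₂₃_le : dist u₂ u₃ ≤ 15
  dist₃₄_le : dist u₃ u₄ ≤ 9 / 2
  le_dist_b : 29994 ≤ dist u₄ b
  dist_b_le : dist u₄ b ≤ 29994 + 1 / 2
  dist_c_sq : dist u₁ c ^ 2 = 900000009
  le_norm_b : 40000 ≤ ‖b‖
  norm_c_sq : ‖c‖ ^ 2 = 1600000001
  disjoint₁₂₃₄ : Disjoint (segment ℝ u₁ u₂) (segment ℝ u₃ u₄)
  disjoint₁₂_b : Disjoint (segment ℝ u₁ u₂) (segment ℝ u₄ b)
  avoids_b : AvoidsPath u₁ u₂ u₃ u₄ b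
  avoids_c : AvoidsPath u₁ u₂ u₃ u₄ c

namespace IsTrapGeometry

lemma convexHull_subset_closedBall₄ (H : IsTrapGeometry u₁ u₂ u₃ u₄ b c)
    (hx : x ∈ segment ℝ u₁ u₂) :
    convexHull ℝ (Set.range ![x, u₂, u₃]) ⊆ Metric.closedBall u₄ 41 := by
  have h12 := H.dist₁₂_le
  have h23 := H.dist₂₃_le
  have h34 := H.dist₃₄_le
  have h24 := dist_triangle u₂ u₃ u₄
  have h14 := dist_triangle u₁ u₂ u₄
  have hx4 : x ∈ Metric.closedBall u₄ 41 := (convex_closedBall u₄ 41).segment_subset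
    (Metric.mem_closedBall.2 (by linarith)) (Metric.mem_closedBall.2 (by linarith)) hx
  refine convexHull_min (Set.range_subset_iff.2 ?_) (convex_closedBall u₄ 41)
  simp only [Fin.forall_fin_succ]
  exact ⟨hx4, Metric.mem_closedBall.2 (by change dist u₂ u₄ ≤ 41; linarith),
    Metric.mem_closedBall.2 (by change dist u₃ u₄ ≤ 41; linarith), fun i => i.elim0⟩

lemma convexHull_subset_closedBall₁ (H : IsTrapGeometry u₁ u₂ u₃ u₄ b c)
    (hx : x ∈ segment ℝ u₁ u₂) :
    convexHull ℝ (Set.range ![x, u₂, u₃]) ⊆ Metric.closedBall u₁ 36 := by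
  have h12 := H.dist₁₂_le
  have h23 := H.dist₂₃_le
  have h13 := dist_triangle u₁ u₂ u₃
  have h2 : u₂ ∈ Metric.closedBall u₁ 36 := Metric.mem_closedBall'.2 (by linarith)
  refine convexHull_min (Set.range_subset_iff.2 ?_) (convex_closedBall u₁ 36)
  simp only [Fin.forall_fin_succ]
  exact ⟨(convex_closedBall u₁ 36).segment_subset (Metric.mem_closedBall_self (by norm_num)) h2 hx,
    h2, Metric.mem_closedBall'.2 (by change dist u₁ u₃ ≤ 36; linarith), fun i => i.elim0⟩

lemma le_norm₄ (H : IsTrapGeometry u₁ u₂ u₃ u₄ b c) : 10005 + 1 / 2 ≤ ‖u₄‖ := by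
  have := norm_le_norm_add_norm_sub u₄ b
  rw [← dist_eq_norm] at this
  linarith [H.le_norm_b, H.dist_b_le]

lemma le_norm_of_mem_segment (H : IsTrapGeometry u₁ u₂ u₃ u₄ b c) (hy : y ∈ segment ℝ u₃ u₄) :
    10001 ≤ ‖y‖ := by
  have hball : dist y u₄ ≤ 9 / 2 := (convex_closedBall u₄ (9 / 2)).segment_subset
    (Metric.mem_closedBall.2 H.dist₃₄_le) (Metric.mem_closedBall_self (by norm_num)) hy
  have := norm_le_norm_add_norm_sub' u₄ y
  rw [← dist_eq_norm, dist_comm] at this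
  linarith [H.le_norm₄]

lemma exists_smul_eq (H : IsTrapGeometry u₁ u₂ u₃ u₄ b c) (hx : x ∈ segment ℝ u₁ u₂)
    (hy : y ∈ segment ℝ u₃ u₄) (hxy : y ∈ segment ℝ 0 x) : ∃ l ∈ Set.Ioo (0 : ℝ) 1, l • x = y := by
  obtain ⟨l, ⟨hl0, hl1⟩, rfl⟩ := mem_segment_zero_left.1 hxy
  refine ⟨l, ⟨hl0.lt_of_ne' ?_, hl1.lt_of_ne ?_⟩, rfl⟩
  · rintro rfl
    have := H.le_norm_of_mem_segment hy
    rw [zero_smul, norm_zero] at this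
    linarith
  · rintro rfl
    exact Set.disjoint_left.1 H.disjoint₁₂₃₄ hx (one_smul ℝ x ▸ hy)

lemma zero_notMem_convexHull (H : IsTrapGeometry u₁ u₂ u₃ u₄ b c) (hx : x ∈ segment ℝ u₁ u₂) :
    0 ∉ convexHull ℝ (Set.range ![x, u₂, u₃]) := fun h => by
  have := Metric.mem_closedBall.1 (H.convexHull_subset_closedBall₄ hx h)
  rw [dist_zero_left] at this
  linarith [H.le_norm₄]

lemma b_notMem_convexHull (H : IsTrapGeometry u₁ u₂ u₃ u₄ b c) (hx : x ∈ segment ℝ u₁ u₂) :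
    b ∉ convexHull ℝ (Set.range ![x, u₂, u₃]) := fun h => by
  have := Metric.mem_closedBall'.1 (H.convexHull_subset_closedBall₄ hx h)
  linarith [H.le_dist_b]

lemma c_notMem_convexHull (H : IsTrapGeometry u₁ u₂ u₃ u₄ b c) (hx : x ∈ segment ℝ u₁ u₂) :
    c ∉ convexHull ℝ (Set.range ![x, u₂, u₃]) := fun h => by
  have : dist u₁ c ≤ 36 := Metric.mem_closedBall'.1 (H.convexHull_subset_closedBall₁ hx h)
  have : dist u₁ c ^ 2 ≤ 36 ^ 2 := by gcongr
  linarith [H.dist_c_sq]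

/- If `u₁` were on the ray through a point of `[u₃, u₄]`, it would be far from the origin, whereas
the segment `[0, c]`, passing close to `u₁`, keeps it near the origin. -/
lemma clasp_ne_left (H : IsTrapGeometry u₁ u₂ u₃ u₄ b c) (hl : l ∈ Set.Ioo (0 : ℝ) 1)
    (hy : l • x ∈ segment ℝ u₃ u₄) {τ : ℝ} (hx : x ∈ segment ℝ u₁ u₂) (hτ : τ < 1)
    (hc : τ • c ∈ convexHull ℝ (Set.range ![x, u₂, u₃])) : x ≠ u₁ := by
  rintro rfl
  have hnorm := norm_sq_le_of_norm_sub_smul_le (u := x) (c := c) (m := 29999.9) (R := 36) hτ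
    (by rw [← dist_eq_norm]; exact Metric.mem_closedBall'.1 (H.convexHull_subset_closedBall₁ hx hc))
    (by rw [← dist_eq_norm, H.dist_c_sq]; norm_num)
  rw [← dist_eq_norm, H.dist_c_sq, H.norm_c_sq] at hnorm
  have hnc : 40000 ≤ ‖c‖ := le_of_sq_le_sq (by rw [H.norm_c_sq]; norm_num) (norm_nonneg c)
  have hy := H.le_norm_of_mem_segment hy
  rw [norm_smul, Real.norm_of_nonneg hl.1.le] at hy
  have hx : 10001 ≤ ‖x‖ := hy.trans (mul_le_of_le_one_left (norm_nonneg x) hl.2.le)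
  have : (10001 : ℝ) ^ 2 ≤ ‖x‖ ^ 2 := by gcongr
  linarith

lemma exists_clasp (H : IsTrapGeometry u₁ u₂ u₃ u₄ b c) (hx : x ∈ segment ℝ u₁ u₂)
    (hxy : (segment ℝ u₃ u₄ ∩ segment ℝ 0 x).Nonempty)
    (hb : (segment ℝ 0 b ∩ convexHull ℝ (Set.range ![x, u₂, u₃])).Nonempty)
    (hc : (segment ℝ 0 c ∩ convexHull ℝ (Set.range ![x, u₂, u₃])).Nonempty)
    (hD : 0 ≤ det3 x u₂ u₃) :
    0 < det3 x u₂ u₃ ∧ ∃ α ∈ Set.Ioo (0 : ℝ) 1, ∃ β ∈ Set.Ioc (0 : ℝ) 1, ∃ l ∈ Set.Ioo (0 : ℝ) 1,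
      (1 - α) • u₁ + α • u₂ = x ∧ (1 - β) • u₃ + β • u₄ = l • x ∧
      Pierces x u₂ u₃ b ∧ Pierces x u₂ u₃ c ∧
      ∃ p : Fin 3 → ℝ, (∀ i, 0 < p i) ∧ ∃ τ ∈ Set.Ioo (0 : ℝ) 1,
        ∑ i, p i • ![x, u₂, u₃] i = τ • b := by
  obtain ⟨y, hy, hyx⟩ := hxy
  obtain ⟨l, hl, rfl⟩ := H.exists_smul_eq hx hy hyx
  have hl' := Set.Ioo_subset_Ioc_self hl
  have h0 := H.zero_notMem_convexHull hx
  obtain ⟨p, hp, hpsum, τ, hτ, hpb⟩ :=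
    H.avoids_b.exists_combination hx hl' hy h0 (H.b_notMem_convexHull hx) hb
  obtain ⟨q, hq, hqsum, τ', hτ', hqc⟩ :=
    H.avoids_c.exists_combination hx hl' hy h0 (H.c_notMem_convexHull hx) hc
  have hDpos : 0 < det3 x u₂ u₃ := hD.lt_of_ne'
    (det3_ne_zero_of_linearIndependent (H.avoids_b.linearIndependent hx hl' hy h0 hb))
  have hx1 : x ≠ u₁ := H.clasp_ne_left hl hy hx hτ'.2
    (mem_convexHull_range.2 ⟨q, fun i => (hq i).le, hqsum, hqc⟩)
  obtain ⟨α, ⟨hα0, hα1⟩, hαx : (1 - α) • u₁ + α • u₂ = x⟩ :=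
    (segment_eq_image ℝ u₁ u₂).subset hx
  obtain ⟨β, ⟨hβ0, hβ1⟩, hβy : (1 - β) • u₃ + β • u₄ = l • x⟩ :=
    (segment_eq_image ℝ u₃ u₄).subset hy
  refine ⟨hDpos, α, ⟨hα0.lt_of_ne' ?_, hα1.lt_of_ne ?_⟩, β, ⟨hβ0.lt_of_ne' ?_, hβ1⟩, l, hl, hαx,
    hβy, pierces_of_combination hDpos hp hpsum (Set.Ioo_subset_Ico_self hτ) hpb,
    pierces_of_combination hDpos hq hqsum (Set.Ioo_subset_Ico_self hτ') hqc, p, hp, τ, hτ, hpb⟩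
  · rintro rfl
    exact hx1 (by rw [← hαx, sub_zero, one_smul, zero_smul, add_zero])
  · rintro rfl
    refine hDpos.ne' ?_
    rw [← hαx]
    simp only [det3_apply, PiLp.add_apply, PiLp.smul_apply, smul_eq_mul]
    ring
  · rintro rfl
    refine hDpos.ne' ?_
    have := congrArg (det3 x u₂) hβy
    simp only [det3_apply, PiLp.add_apply, PiLp.smul_apply, smul_eq_mul] at this ⊢
    linear_combination this

end IsTrapGeometry

lemma clasp_ne_right {g ρ σ : ℝ} (h123 : 0 < det3 u₁ u₂ u₃) (h12b : 0 < det3 u₁ u₂ b)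
    (hl : l ∈ Set.Ioo (0 : ℝ) 1) (hx : (1 - α) • u₁ + α • u₂ = x)
    (hy : (1 - β) • u₃ + β • u₄ = l • x) (hρ : ρ ≤ 1)
    (hZ : (1 - g) • u₁ + g • u₂ = ρ • u₄ + σ • b) : β ≠ 1 := by
  rintro rfl
  rw [sub_self, zero_smul, zero_add, one_smul, ← hx] at hy
  subst hy
  have hσ0 : σ = 0 := by
    have h := congrArg (det3 u₁ u₂) hZ
    simp only [det3_apply, PiLp.add_apply, PiLp.smul_apply, smul_eq_mul] at h
    have : σ * det3 u₁ u₂ b = 0 := by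
      simp only [det3_apply]
      linear_combination -h
    exact (mul_eq_zero.1 this).resolve_right h12b.ne'
  have h23 := congrArg (det3 · u₂ u₃) hZ
  have h13 := congrArg (det3 u₁ · u₃) hZ
  simp only [hσ0, zero_smul, add_zero, det3_apply, PiLp.add_apply, PiLp.smul_apply, smul_eq_mul]
    at h23 h13
  have : (1 - ρ * l) * det3 u₁ u₂ u₃ = 0 := by
    simp only [det3_apply]
    linear_combination h23 + h13
  refine (mul_pos ?_ h123).ne' this
  nlinarith [hl.1, hl.2]

lemma crosses_clasp (h123 : 0 < det3 u₁ u₂ u₃) (hα : α ∈ Set.Ioo (0 : ℝ) 1)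
    (hβ : β ∈ Set.Ioo (0 : ℝ) 1) (hl : l ∈ Set.Ioo (0 : ℝ) 1) (hx : (1 - α) • u₁ + α • u₂ = x)
    (hy : (1 - β) • u₃ + β • u₄ = l • x) : Crosses u₄ u₃ u₁ u₂ := by
  obtain ⟨⟨hα0, hα1⟩, ⟨hβ0, hβ1⟩, hl0, hl1⟩ := And.intro hα <| And.intro hβ hl
  have h312 : det3 u₃ u₁ u₂ = det3 u₁ u₂ u₃ := by simp only [det3_apply]; ring
  refine crosses_of_combination (h312 ▸ h123) (t := 1 - β) (ρ := l * (1 - α)) (σ := l * α)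
    ⟨by linarith, by linarith⟩ (mul_pos hl0 (sub_pos.2 hα1)) (mul_pos hl0 hα0)
    (by linarith) ?_
  rw [mul_smul, mul_smul, ← smul_add, hx, ← hy, sub_sub_cancel, add_comm]

lemma det3_far_signs (hD : 0 < det3 x u₂ u₃) (hα : α ∈ Set.Ioo (0 : ℝ) 1)
    (hβ : β ∈ Set.Ioo (0 : ℝ) 1) (hl : 0 < l) (hx : (1 - α) • u₁ + α • u₂ = x)
    (hy : (1 - β) • u₃ + β • u₄ = l • x) {p : Fin 3 → ℝ} (hp : ∀ i, 0 < p i) {τ : ℝ} (hτ : 0 < τ)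
    (hpb : ∑ i, p i • ![x, u₂, u₃] i = τ • b) :
    det3 u₁ u₂ u₄ < 0 ∧ det3 u₂ u₄ b < 0 ∧ 0 < det3 u₁ u₄ b := by
  obtain ⟨⟨hα0, hα1⟩, hβ0, hβ1⟩ := And.intro hα hβ
  simp only [Fin.sum_univ_three, Matrix.cons_val_zero, Matrix.cons_val_one, Matrix.cons_val] at hpb
  have hβτ : 0 < β * τ := mul_pos hβ0 hτ
  have h4 : β • u₄ = l • x - (1 - β) • u₃ := eq_sub_of_add_eq' hy
  have h4b : ∀ w, β * τ * det3 w u₄ b = det3 w (β • u₄) (τ • b) := by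
    intro w
    simp only [det3_apply, PiLp.smul_apply, smul_eq_mul]
    ring
  have h24b : β * τ * det3 u₂ u₄ b = -((l * p 2 + (1 - β) * p 0) * det3 x u₂ u₃) := by
    rw [h4b, h4, ← hpb]
    simp only [det3_apply, PiLp.add_apply, PiLp.sub_apply, PiLp.smul_apply, smul_eq_mul]
    ring
  have hx4b : β * τ * det3 x u₄ b = (1 - β) * p 1 * det3 x u₂ u₃ := by
    rw [h4b, h4, ← hpb]
    simp only [det3_apply, PiLp.add_apply, PiLp.sub_apply, PiLp.smul_apply, smul_eq_mul]
    ring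
  have h124 : β * (1 - α) * det3 u₁ u₂ u₄ = -((1 - β) * det3 x u₂ u₃) := by
    have h := congrArg (det3 u₁ u₂) h4
    subst hx
    simp only [det3_apply, PiLp.add_apply, PiLp.sub_apply, PiLp.smul_apply, smul_eq_mul] at h ⊢
    linear_combination (1 - α) * h
  have h14b : (1 - α) * det3 u₁ u₄ b = det3 x u₄ b - α * det3 u₂ u₄ b := by
    subst hx
    simp only [det3_apply, PiLp.add_apply, PiLp.smul_apply, smul_eq_mul]
    ring
  have hβ1' := sub_pos.2 hβ1
  have hα1' := sub_pos.2 hα1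
  have h24b_neg : det3 u₂ u₄ b < 0 := by
    refine neg_of_mul_neg_right (h24b ▸ neg_neg_iff_pos.2 (mul_pos ?_ hD)) hβτ.le
    exact add_pos (mul_pos hl (hp 2)) (mul_pos hβ1' (hp 0))
  have hx4b_pos : 0 < det3 x u₄ b :=
    pos_of_mul_pos_right (hx4b ▸ mul_pos (mul_pos hβ1' (hp 1)) hD) hβτ.le
  refine ⟨neg_of_mul_neg_right (h124 ▸ neg_neg_iff_pos.2 (mul_pos hβ1' hD))
    (mul_pos hβ0 hα1').le, h24b_neg, pos_of_mul_pos_right (h14b ▸ ?_) hα1'.le⟩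
  linarith [mul_neg_of_pos_of_neg hα0 h24b_neg]

lemma IsCaught.isStrictlyCaught (h : IsCaught u₁ u₂ u₃ u₄ b c)
    (H : IsTrapGeometry u₁ u₂ u₃ u₄ b c) : IsStrictlyCaught u₁ u₂ u₃ u₄ b c := by
  obtain ⟨⟨z, hz, hz4b⟩, x, hx, hxy, hb, hc, hD⟩ := h
  obtain ⟨hD, α, hα, β, ⟨hβ0, hβ1⟩, l, hl, hαx, hβy, pierces_b, pierces_c, p, hp, τ, hτ, hpb⟩ :=
    H.exists_clasp hx hxy hb hc hD
  have clasp_b := (piercesClasp_iff hα.2 hβ0 hl.1 hαx hβy).2 pierces_b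
  have clasp_c := (piercesClasp_iff hα.2 hβ0 hl.1 hαx hβy).2 pierces_c
  have h123 : 0 < det3 u₁ u₂ u₃ := by
    refine pos_of_mul_pos_right (a := 1 - α) ?_ (sub_pos.2 hα.2).le
    rwa [← det3_clasp, hαx]
  obtain ⟨g, -, hgz⟩ := (segment_eq_image ℝ u₁ u₂).subset hz
  obtain ⟨q, hq, hqsum, hqz⟩ := mem_convexHull_range.1 hz4b
  simp only [Fin.sum_univ_three, Matrix.cons_val_zero, Matrix.cons_val_one, Matrix.cons_val,
    smul_zero, zero_add] at hqsum hqz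
  have hgq : (1 - g) • u₁ + g • u₂ = q 1 • u₄ + q 2 • b := hgz.trans hqz.symm
  have hβ1 : β < 1 := hβ1.lt_of_ne <|
    clasp_ne_right h123 clasp_b.2.2.1 hl hαx hβy (by linarith [hq 0, hq 2]) hgq
  have hq0 : 0 < q 0 := (hq 0).lt_of_ne' fun h0 => by
    refine Set.disjoint_left.1 H.disjoint₁₂_b hz ⟨q 1, q 2, hq 1, hq 2, ?_, hqz⟩
    rw [← hqsum, h0, zero_add]
  obtain ⟨h124, h24b, h14b⟩ := det3_far_signs hD hα ⟨hβ0, hβ1⟩ hl.1 hαx hβy hp hτ.1 hpb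
  have h214 : det3 u₂ u₁ u₄ = -det3 u₁ u₂ u₄ := by simp only [det3_apply]; ring
  have h21b : det3 u₂ u₁ b = -det3 u₁ u₂ b := by simp only [det3_apply]; ring
  refine ⟨crosses_of_det3 h24b h14b (h21b ▸ neg_neg_iff_pos.2 clasp_b.2.2.1)
    (h214 ▸ neg_pos.2 h124) (t := 1 - g) (by linarith : q 1 + q 2 < 1) ?_,
    crosses_clasp h123 hα ⟨hβ0, hβ1⟩ hl hαx hβy, clasp_b, clasp_c⟩
  rw [← hgq, sub_sub_cancel, add_comm]

end Trap

section Motion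

/-- The point of `ℝ³` with the given coordinates. -/
def pt (x y z : ℝ) : E3 := !₂[x, y, z]

@[simp] lemma pt_apply_zero (x y z : ℝ) : pt x y z 0 = x := rfl

@[simp] lemma pt_apply_one (x y z : ℝ) : pt x y z 1 = y := rfl

@[simp] lemma pt_apply_two (x y z : ℝ) : pt x y z 2 = z := rfl

/-- The vertices of the locked heptagon. -/
def trapChain : ℕ → E3
  | 0 => pt 10000 1 3
  | 1 => pt 10020 (-1) (-1)
  | 2 => pt 10006 1 (-1)
  | 3 => pt 10006 (-1) 3
  | 4 => pt 40000 (-1) 0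
  | 5 => 0
  | _ => pt 40000 1 0

/-- `IsCaught` for a heptagon, with the vertex of index `5` as the origin. -/
def IsCaughtChain (w : ℕ → E3) : Prop :=
  IsCaught (w 0 - w 5) (w 1 - w 5) (w 2 - w 5) (w 3 - w 5) (w 4 - w 5) (w 6 - w 5)

/-- `IsStrictlyCaught` for a heptagon, with the vertex of index `5` as the origin. -/
def IsStrictlyCaughtChain (w : ℕ → E3) : Prop :=
  IsStrictlyCaught (w 0 - w 5) (w 1 - w 5) (w 2 - w 5) (w 3 - w 5) (w 4 - w 5) (w 6 - w 5)

lemma isStrictlyCaughtChain_trapChain : IsStrictlyCaughtChain trapChain := by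
  simp only [IsStrictlyCaughtChain, IsStrictlyCaught, Crosses, PiercesClasp, det3_apply, trapChain,
    PiLp.sub_apply]
  norm_num

lemma disjoint_segment_sub {E : Type*} [AddCommGroup E] [Module ℝ E] {p q r s : E} (o : E)
    (h : segment ℝ p q ∩ segment ℝ r s = ∅) :
    Disjoint (segment ℝ (p - o) (q - o)) (segment ℝ (r - o) (s - o)) := by
  simp only [sub_eq_neg_add, ← segment_translate_image]
  exact (Set.disjoint_image_iff (add_right_injective (-o))).2 (Set.disjoint_iff_inter_eq_empty.2 h)

lemma dist_sq_of_lengths {w : ℕ → E3}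
    (hl : ∀ i < 7, ‖w ((i + 1) % 7) - w i‖ = ‖trapChain ((i + 1) % 7) - trapChain i‖) :
    dist (w 0) (w 1) ^ 2 = 420 ∧ dist (w 1) (w 2) ^ 2 = 200 ∧ dist (w 2) (w 3) ^ 2 = 20 ∧
      dist (w 3) (w 4) ^ 2 = 899640045 ∧ dist (w 4) (w 5) ^ 2 = 1600000001 ∧
      dist (w 6) (w 5) ^ 2 = 1600000001 ∧ dist (w 0) (w 6) ^ 2 = 900000009 := by
  have edge_sq : ∀ i < 7, dist (w i) (w ((i + 1) % 7)) ^ 2 =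
      ∑ k, (trapChain ((i + 1) % 7) k - trapChain i k) ^ 2 := fun i hi => by
    rw [dist_comm, dist_eq_norm, hl i hi, EuclideanSpace.real_norm_sq_eq]
    rfl
  rw [dist_comm (w 6), dist_comm (w 0) (w 6)]
  refine ⟨(edge_sq 0 (by norm_num)).trans ?_, (edge_sq 1 (by norm_num)).trans ?_,
    (edge_sq 2 (by norm_num)).trans ?_, (edge_sq 3 (by norm_num)).trans ?_,
    (edge_sq 4 (by norm_num)).trans ?_, (edge_sq 5 (by norm_num)).trans ?_,
    (edge_sq 6 (by norm_num)).trans ?_⟩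
  all_goals norm_num [Fin.sum_univ_three, trapChain]

lemma isTrapGeometry_of_lengths {w : ℕ → E3} (hw : IsSimpleClosedChain 7 w)
    (hl : ∀ i < 7, ‖w ((i + 1) % 7) - w i‖ = ‖trapChain ((i + 1) % 7) - trapChain i‖) :
    IsTrapGeometry (w 0 - w 5) (w 1 - w 5) (w 2 - w 5) (w 3 - w 5) (w 4 - w 5) (w 6 - w 5) := by
  obtain ⟨h01, h12, h23, h34, h45, h65, h06⟩ := dist_sq_of_lengths hl
  have disjoint : ∀ i j, i < j → j < 7 → i + 1 ≠ j → ¬ (i = 0 ∧ j = 6) →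
      Disjoint (segment ℝ (w i - w 5) (w ((i + 1) % 7) - w 5))
        (segment ℝ (w j - w 5) (w ((j + 1) % 7) - w 5)) := fun i j hij hj h1 h2 =>
    disjoint_segment_sub (w 5) ((hw.2.2 i j hij hj).trans (by rw [if_neg h1, if_neg h2]))
  have avoids_b : AvoidsPath (w 0 - w 5) (w 1 - w 5) (w 2 - w 5) (w 3 - w 5) (w 4 - w 5) := by
    rw [AvoidsPath, segment_symm ℝ 0, ← sub_self (w 5)]
    exact ⟨disjoint 0 4 (by simp) (by simp) (by simp) (by simp),
      disjoint 1 4 (by simp) (by simp) (by simp) (by simp),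
      disjoint 2 4 (by simp) (by simp) (by simp) (by simp)⟩
  have avoids_c : AvoidsPath (w 0 - w 5) (w 1 - w 5) (w 2 - w 5) (w 3 - w 5) (w 6 - w 5) := by
    rw [AvoidsPath, ← sub_self (w 5)]
    exact ⟨disjoint 0 5 (by simp) (by simp) (by simp) (by simp),
      disjoint 1 5 (by simp) (by simp) (by simp) (by simp),
      disjoint 2 5 (by simp) (by simp) (by simp) (by simp)⟩
  constructor
  case disjoint₁₂₃₄ => exact disjoint 0 2 (by simp) (by simp) (by simp) (by simp)
  case disjoint₁₂_b => exact disjoint 0 3 (by simp) (by simp) (by simp) (by simp)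
  case avoids_b => exact avoids_b
  case avoids_c => exact avoids_c
  all_goals simp only [dist_sub_right, ← dist_eq_norm]
  case dist_c_sq => exact h06
  case norm_c_sq => exact h65
  case le_dist_b => exact le_of_sq_le_sq (by rw [h34]; norm_num) dist_nonneg
  case le_norm_b => exact le_of_sq_le_sq (by rw [h45]; norm_num) dist_nonneg
  all_goals refine le_of_sq_le_sq ?_ (by norm_num)
  case dist₁₂_le => rw [h01]; norm_num
  case dist₂₃_le => rw [h12]; norm_num
  case dist₃₄_le => rw [h23]; norm_num
  case dist_b_le => rw [h34]; norm_num

lemma not_isConvexConfiguration_of_isCaughtChain {w : ℕ → E3} (h : IsCaughtChain w) :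
    ¬ IsConvexConfiguration 7 w := by
  rintro ⟨-, -, supporting⟩
  obtain ⟨f, hf23 : f (w 2) = f (w 3), hf⟩ := supporting 2 (by norm_num)
  have hf_lt : ∀ j < 7, j ≠ 2 → j ≠ 3 → w j - w 5 ∈ {z | f z < f (w 2) - f (w 5)} :=
    fun j hj h2 h3 => by simpa using hf j hj h2 h3
  obtain ⟨-, x, hx, ⟨y, hy, hyx⟩, -⟩ := h
  have half_space := convex_halfSpace_lt f.isLinear (f (w 2) - f (w 5))
  have fx_lt := half_space.segment_subset (hf_lt 0 (by simp) (by simp) (by simp))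
    (hf_lt 1 (by simp) (by simp) (by simp)) hx
  have fy_lt : f y < f (w 2) - f (w 5) := half_space.segment_subset
    (sub_self (w 5) ▸ hf_lt 5 (by simp) (by simp) (by simp)) fx_lt hyx
  have fy_eq : f y = f (w 2) - f (w 5) :=
    (convex_hyperplane f.isLinear (f (w 2) - f (w 5))).segment_subset (map_sub f _ _)
      (by simp [hf23]) hy
  exact fy_lt.ne fy_eq

section Continuity

variable {X : Type*} [TopologicalSpace X] {u₁ u₂ u₃ u₄ a b c d : X → E3}

lemma isClosed_setOf_isCaught (h₁ : Continuous u₁) (h₂ : Continuous u₂) (h₃ : Continuous u₃)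
    (h₄ : Continuous u₄) (hb : Continuous b) (hc : Continuous c) :
    IsClosed {t | IsCaught (u₁ t) (u₂ t) (u₃ t) (u₄ t) (b t) (c t)} := by
  have continuous_pair : ∀ {Y : Type _} [TopologicalSpace Y] {p q : Y → E3}, Continuous p →
      Continuous q → ∀ i, Continuous fun t => ![p t, q t] i := by
    intro Y _ p q hp hq i
    fin_cases i <;> assumption
  have continuous_triple : ∀ {Y : Type _} [TopologicalSpace Y] {p q r : Y → E3}, Continuous p →
      Continuous q → Continuous r → ∀ i, Continuous fun t => ![p t, q t, r t] i := by
    intro Y _ p q r hp hq hr i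
    fin_cases i <;> assumption
  simp only [IsCaught, ← convexHull_pair, ← Matrix.range_cons_cons_empty _ _ ![]]
  refine .inter (isClosed_setOf_convexHull_inter_nonempty (continuous_pair h₁ h₂)
    (continuous_triple continuous_const h₄ hb)) ?_
  refine isClosed_setOf_exists_mem_convexHull (continuous_pair h₁ h₂) (P := {p : X × E3 |
    (convexHull ℝ (Set.range ![u₃ p.1, u₄ p.1]) ∩ convexHull ℝ (Set.range ![0, p.2])).Nonempty ∧
    (convexHull ℝ (Set.range ![0, b p.1]) ∩
      convexHull ℝ (Set.range ![p.2, u₂ p.1, u₃ p.1])).Nonempty ∧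
    (convexHull ℝ (Set.range ![0, c p.1]) ∩
      convexHull ℝ (Set.range ![p.2, u₂ p.1, u₃ p.1])).Nonempty ∧
    0 ≤ det3 p.2 (u₂ p.1) (u₃ p.1)}) ?_
  have far_closed : ∀ {d : X → E3}, Continuous d → IsClosed {p : X × E3 |
      (convexHull ℝ (Set.range ![0, d p.1]) ∩
        convexHull ℝ (Set.range ![p.2, u₂ p.1, u₃ p.1])).Nonempty} := fun hd =>
    isClosed_setOf_convexHull_inter_nonempty
      (continuous_pair continuous_const (hd.comp continuous_fst))
      (continuous_triple continuous_snd (h₂.comp continuous_fst) (h₃.comp continuous_fst))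
  exact (isClosed_setOf_convexHull_inter_nonempty
      (continuous_pair (h₃.comp continuous_fst) (h₄.comp continuous_fst))
      (continuous_pair continuous_const continuous_snd)).inter <|
    (far_closed hb).inter <| (far_closed hc).inter <| isClosed_le continuous_const
      (continuous_det3 continuous_snd (h₂.comp continuous_fst) (h₃.comp continuous_fst))

lemma isOpen_setOf_crosses (ha : Continuous a) (hb : Continuous b) (hc : Continuous c)
    (hd : Continuous d) : IsOpen {t | Crosses (a t) (b t) (c t) (d t)} := by
  have hacd := continuous_det3 ha hc hd
  have hbcd := continuous_det3 hb hc hd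
  have habd := continuous_det3 ha hb hd
  have habc := continuous_det3 ha hb hc
  exact (isOpen_lt hacd continuous_const).inter <| (isOpen_lt continuous_const hbcd).inter <|
    (isOpen_lt habd continuous_const).inter <| (isOpen_lt continuous_const habc).inter <|
    isOpen_lt (habc.sub habd) (hbcd.sub hacd)

lemma isOpen_setOf_piercesClasp (h₁ : Continuous u₁) (h₂ : Continuous u₂) (h₃ : Continuous u₃)
    (h₄ : Continuous u₄) (hb : Continuous b) :
    IsOpen {t | PiercesClasp (u₁ t) (u₂ t) (u₃ t) (u₄ t) (b t)} := by
  have h23b := continuous_det3 h₂ h₃ hb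
  have h13b := continuous_det3 h₁ h₃ hb
  have h12b := continuous_det3 h₁ h₂ hb
  exact (isOpen_lt continuous_const h23b).inter <|
    (isOpen_lt continuous_const (continuous_det3 h₃ h₄ hb)).inter <|
    (isOpen_lt continuous_const h12b).inter <|
    isOpen_lt (continuous_det3 h₁ h₂ h₃) ((h23b.sub h13b).add h12b)

lemma isOpen_setOf_isStrictlyCaught (h₁ : Continuous u₁) (h₂ : Continuous u₂)
    (h₃ : Continuous u₃) (h₄ : Continuous u₄) (hb : Continuous b) (hc : Continuous c) :
    IsOpen {t | IsStrictlyCaught (u₁ t) (u₂ t) (u₃ t) (u₄ t) (b t) (c t)} :=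
  (isOpen_setOf_crosses h₂ h₁ h₄ hb).inter <| (isOpen_setOf_crosses h₄ h₃ h₁ h₂).inter <|
    (isOpen_setOf_piercesClasp h₁ h₂ h₃ h₄ hb).inter (isOpen_setOf_piercesClasp h₁ h₂ h₃ h₄ hc)

end Continuity

lemma not_canBeConvexified_trapChain : ¬ CanBeConvexified 7 trapChain := by
  rintro ⟨γ, ⟨hcont, h0, hsimple, hlen⟩, hconv⟩
  have hsub : ∀ i < 7, Continuous fun t : unitInterval => γ t i - γ t 5 := fun i hi =>
    (continuousOn_iff_continuous_domRestrict.1 (hcont i hi)).sub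
      (continuousOn_iff_continuous_domRestrict.1 (hcont 5 (by norm_num)))
  obtain ⟨h₁, h₂, h₃, h₄, hb, hc⟩ := And.intro (hsub 0 (by simp)) <|
    And.intro (hsub 1 (by simp)) <| And.intro (hsub 2 (by simp)) <| And.intro (hsub 3 (by simp)) <|
    And.intro (hsub 4 (by simp)) (hsub 6 (by simp))
  have caught_iff : ∀ t : unitInterval, IsCaughtChain (γ t) ↔ IsStrictlyCaughtChain (γ t) :=
    fun t => ⟨fun h => h.isStrictlyCaught (isTrapGeometry_of_lengths (hsimple t t.2) (hlen t t.2)),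
      IsStrictlyCaught.isCaught⟩
  have hclopen : IsClopen {t : unitInterval | IsStrictlyCaughtChain (γ t)} := by
    refine ⟨?_, isOpen_setOf_isStrictlyCaught h₁ h₂ h₃ h₄ hb hc⟩
    simp only [← caught_iff]
    exact isClosed_setOf_isCaught h₁ h₂ h₃ h₄ hb hc
  have caught_start : IsStrictlyCaughtChain (γ (0 : unitInterval)) := by
    have start : ∀ i < 7, γ (0 : unitInterval) i = trapChain i := h0
    simpa only [IsStrictlyCaughtChain, start _, Nat.reduceLT] using isStrictlyCaughtChain_trapChain
  have caught_end : IsStrictlyCaughtChain (γ (1 : unitInterval)) :=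
    Set.eq_univ_iff_forall.1 (hclopen.eq_univ ⟨0, caught_start⟩) 1
  exact not_isConvexConfiguration_of_isCaughtChain ((caught_iff 1).2 caught_end) hconv

end Motion

section Simple

variable {E : Type*} [AddCommGroup E] [Module ℝ E] {p q r s : E}

lemma segment_inter_segment_eq_empty (f : E →ₗ[ℝ] ℝ) (h : max (f p) (f q) < min (f r) (f s)) :
    segment ℝ p q ∩ segment ℝ r s = ∅ := by
  refine Set.eq_empty_iff_forall_notMem.2 fun x ⟨hpq, hrs⟩ => ?_
  have le_max : f x ≤ max (f p) (f q) := (convex_halfSpace_le f.isLinear _).segment_subset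
    (le_max_left (f p) (f q)) (le_max_right (f p) (f q)) hpq
  have min_le : min (f r) (f s) ≤ f x := (convex_halfSpace_ge f.isLinear _).segment_subset
    (min_le_left (f r) (f s)) (min_le_right (f r) (f s)) hrs
  exact (le_max.trans_lt h).not_ge min_le

lemma eq_of_mem_segment_of_le (f : E →ₗ[ℝ] ℝ) {x : E} (hpq : f p < f q)
    (hx : x ∈ segment ℝ p q) (h : f q ≤ f x) : x = q := by
  obtain ⟨a, b, ha, -, hab, rfl⟩ := hx
  obtain rfl : b = 1 - a := by linarith
  simp only [map_add, map_smul, smul_eq_mul] at h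
  obtain rfl : a = 0 := by nlinarith
  module

lemma segment_inter_segment_eq_singleton (f : E →ₗ[ℝ] ℝ) (h : f q ∈ Set.Ioo (f p) (f r)) :
    segment ℝ p q ∩ segment ℝ q r = {q} := by
  refine Set.Subset.antisymm (fun x ⟨hpq, hqr⟩ => ?_) (Set.singleton_subset_iff.2
    ⟨right_mem_segment ℝ p q, left_mem_segment ℝ q r⟩)
  refine eq_of_mem_segment_of_le f h.1 hpq ?_
  exact (convex_halfSpace_ge f.isLinear _).segment_subset (le_refl (f q)) h.2.le hqr

/-- The linear functional on `ℝ³` with the given coefficients. -/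
def lin (a b c : ℝ) : E3 →L[ℝ] ℝ :=
  a • EuclideanSpace.proj 0 + b • EuclideanSpace.proj 1 + c • EuclideanSpace.proj 2

@[simp] lemma lin_apply (a b c : ℝ) (x : E3) : lin a b c x = a * x 0 + b * x 1 + c * x 2 := rfl

lemma trapChain_ne {i j : ℕ} (hij : i < j) (hj : j < 7) : trapChain i ≠ trapChain j := by
  intro h
  have h' : trapChain i 0 = trapChain j 0 ∧ trapChain i 1 = trapChain j 1 ∧
      trapChain i 2 = trapChain j 2 := by simp [h]
  interval_cases j <;> interval_cases i <;> norm_num [trapChain] at h'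

lemma isSimpleClosedChain_trapChain : IsSimpleClosedChain 7 trapChain := by
  refine ⟨by norm_num, fun i j hi hj hij => ?_, fun i j hij hj => ?_⟩
  · rcases lt_or_gt_of_ne hij with h | h
    · exact trapChain_ne h hj
    · exact (trapChain_ne h hi).symm
  interval_cases j <;> interval_cases i
  · exact segment_inter_segment_eq_singleton (lin 0 1 (-1)) (by norm_num [trapChain])
  · exact segment_inter_segment_eq_empty (lin (-1) (-4) (-2)) (by norm_num [trapChain])
  · exact segment_inter_segment_eq_singleton (lin 0 1 1) (by norm_num [trapChain])
  · exact segment_inter_segment_eq_empty (lin 0 (-2) 1) (by norm_num [trapChain])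
  · exact segment_inter_segment_eq_empty (lin 0 0 1) (by norm_num [trapChain])
  · exact segment_inter_segment_eq_singleton (lin 0 (-3) (-1)) (by norm_num [trapChain])
  · exact segment_inter_segment_eq_empty (lin 1 20044 (-10022)) (by norm_num [trapChain])
  · exact segment_inter_segment_eq_empty (lin 0 0 1) (by norm_num [trapChain])
  · exact segment_inter_segment_eq_empty (lin 0 (-2) (-1)) (by norm_num [trapChain])
  · exact segment_inter_segment_eq_singleton (lin 0 1 (-1)) (by norm_num [trapChain])
  · exact segment_inter_segment_eq_empty (lin 0 2 (-1)) (by norm_num [trapChain])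
  · exact segment_inter_segment_eq_empty (lin 0 0 1) (by norm_num [trapChain])
  · exact segment_inter_segment_eq_empty (lin 1 (-20016) (-10008)) (by norm_num [trapChain])
  · exact segment_inter_segment_eq_empty (lin 0 1 0) (by norm_num [trapChain])
  · exact segment_inter_segment_eq_singleton (lin 0 1 0) (by norm_num [trapChain])
  · rw [Set.inter_comm]
    exact segment_inter_segment_eq_singleton (lin 0 (-3) 1) (by norm_num [trapChain])
  · exact segment_inter_segment_eq_empty (lin 0 0 1) (by norm_num [trapChain])
  · exact segment_inter_segment_eq_empty (lin 0 2 1) (by norm_num [trapChain])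
  · exact segment_inter_segment_eq_empty (lin 0 1 0) (by norm_num [trapChain])
  · exact segment_inter_segment_eq_empty (lin 0 1 0) (by norm_num [trapChain])
  · exact segment_inter_segment_eq_singleton (lin 0 1 1) (by norm_num [trapChain])

end Simple

section DiskBoundary

/-- `S` is the boundary curve of an embedded closed disk. -/
def IsDiskBoundary {E : Type*} [TopologicalSpace E] (S : Set E) : Prop :=
  ∃ φ : EuclideanSpace ℝ (Fin 2) → E,
    ContinuousOn φ (Metric.closedBall 0 1) ∧ Set.InjOn φ (Metric.closedBall 0 1) ∧
      φ '' Metric.sphere 0 1 = S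

lemma IsDiskBoundary.image {E F : Type*} [TopologicalSpace E] [TopologicalSpace F] {S : Set E}
    (hS : IsDiskBoundary S) {h : E → F} (hc : Continuous h) (hi : Function.Injective h) :
    IsDiskBoundary (h '' S) := by
  obtain ⟨φ, hφc, hφi, rfl⟩ := hS
  exact ⟨h ∘ φ, hc.comp_continuousOn hφc, hi.comp_injOn hφi, Set.image_comp h φ _⟩

lemma isDiskBoundary_frontier {K : Set (EuclideanSpace ℝ (Fin 2))} (hK : Convex ℝ K)
    (hne : (interior K).Nonempty) (hb : Bornology.IsBounded K) : IsDiskBoundary (frontier K) := by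
  obtain ⟨e, -, -, he⟩ := exists_homeomorph_image_interior_closure_frontier_eq_unitBall hK hne hb
  refine ⟨e.symm, e.symm.continuous.continuousOn, e.symm.injective.injOn, ?_⟩
  rw [← he, ← Set.image_comp, e.symm_comp_self, Set.image_id]

lemma frontier_convexHull_affineBasis {ι V : Type*} [Finite ι] [NormedAddCommGroup V]
    [NormedSpace ℝ V] (β : AffineBasis ι ℝ V) :
    frontier (convexHull ℝ (Set.range β)) =
      {x | (∀ i, 0 ≤ β.coord i x) ∧ ∃ i, β.coord i x = 0} := by
  have := Fintype.ofFinite ι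
  have := β.finiteDimensional
  have hclosed : IsClosed (convexHull ℝ (Set.range β)) :=
    ((Set.finite_range β).isCompact_convexHull (𝕜 := ℝ)).isClosed
  rw [hclosed.frontier_eq, β.interior_convexHull, β.convexHull_eq_nonneg_coord]
  ext x
  refine and_congr_right fun h => ?_
  simp only [Set.mem_ofPred_eq, not_forall, not_lt]
  exact exists_congr fun i => (h i).ge_iff_eq'

lemma preimage_add_left_mem_nhds_zero {E : Type*} [AddMonoid E] [TopologicalSpace E]
    [ContinuousAdd E] {K : Set E} {m : E} (ho : IsOpen K) (hm : m ∈ K) :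
    (m + ·) ⁻¹' K ∈ nhds 0 :=
  (ho.preimage (continuous_const_add m)).mem_nhds (by simpa using hm)

variable {E : Type*} [AddCommGroup E] [Module ℝ E] {p q r m x : E} {K R : Set E}

lemma segment_eq_union_midpoint (p r : E) :
    segment ℝ p r = segment ℝ (midpoint ℝ p r) p ∪ segment ℝ (midpoint ℝ p r) r := by
  have hmem : midpoint ℝ p r ∈ segment ℝ p r := midpoint_mem_segment p r
  refine Set.Subset.antisymm ?_ (Set.union_subset
    ((convex_segment p r).segment_subset hmem (left_mem_segment ℝ p r))
    ((convex_segment p r).segment_subset hmem (right_mem_segment ℝ p r)))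
  have hm : midpoint ℝ p r = (1 / 2 : ℝ) • p + (1 / 2 : ℝ) • r := by
    rw [midpoint_eq_smul_add, smul_add, one_div, invOf_eq_inv]
  rintro _ ⟨a, b, ha, hb, hab, rfl⟩
  obtain rfl : a = 1 - b := by linarith
  rcases le_total b (1 / 2) with h | h
  · refine Or.inl ⟨2 * b, 1 - 2 * b, by linarith, by linarith, by ring, ?_⟩
    rw [hm]
    module
  · refine Or.inr ⟨2 - 2 * b, 2 * b - 1, by linarith, by linarith, by ring, ?_⟩
    rw [hm]
    module

/-- The gauge of `K` with respect to the centre `m`. -/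
def centeredGauge (K : Set E) (m x : E) : ℝ := gauge ((m + ·) ⁻¹' K) (x - m)

/-- The map which pulls `m` to `q`, moving the points of `K` parallel to `q - m` and fixing all
other points; it is affine on each segment from `m` to the boundary of `K`. -/
def pull (K : Set E) (m q x : E) : E := x + max 0 (1 - centeredGauge K m x) • (q - m)

lemma centeredGauge_lineMap (K : Set E) (m x : E) {t : ℝ} (ht : 0 ≤ t) :
    centeredGauge K m (AffineMap.lineMap m x t) = t * centeredGauge K m x := by
  rw [centeredGauge, AffineMap.lineMap_apply, vsub_eq_sub, vadd_eq_add, add_sub_cancel_right,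
    gauge_smul_of_nonneg ht, smul_eq_mul, centeredGauge]

variable [TopologicalSpace E] [IsTopologicalAddGroup E] [ContinuousSMul ℝ E]

lemma isDiskBoundary_faces {v : Fin 3 → E} (hv : AffineIndependent ℝ v) :
    IsDiskBoundary {x | ∃ w ∈ stdSimplex ℝ (Fin 3), (∃ i, w i = 0) ∧ ∑ i, w i • v i = x} := by
  obtain ⟨β⟩ := AffineBasis.exists_affineBasis_of_finiteDimensional (ι := Fin 3) (k := ℝ)
    (P := EuclideanSpace ℝ (Fin 2)) (by simp)
  have hfrontier : IsDiskBoundary (frontier (convexHull ℝ (Set.range β))) :=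
    isDiskBoundary_frontier (convex_convexHull ℝ _) ⟨_, β.centroid_mem_interior_convexHull⟩
      ((Set.finite_range β).isCompact_convexHull (𝕜 := ℝ)).isBounded
  have hcont : Continuous fun x => ∑ i, β.coord i x • v i :=
    continuous_finsetSum _ fun i _ => (continuous_barycentric_coord β i).smul continuous_const
  have hinj : Function.Injective fun x => ∑ i, β.coord i x • v i := fun x y hxy => by
    refine β.ext_elem fun i => sub_eq_zero.1 ?_
    refine hv.eq_zero_of_sum_eq_zero (s := Finset.univ)
      (w := fun i => β.coord i x - β.coord i y) ?_ ?_ i (Finset.mem_univ i)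
    · simp
    · simpa [sub_smul, sub_eq_zero] using hxy
  convert hfrontier.image hcont hinj
  ext z
  rw [frontier_convexHull_affineBasis]
  constructor
  · rintro ⟨w, ⟨hw0, hw1⟩, ⟨i, hi⟩, rfl⟩
    have hcoord : ∀ j, β.coord j (Finset.univ.affineCombination ℝ β w) = w j := fun j =>
      β.coord_apply_combination_of_mem (Finset.mem_univ j) hw1
    exact ⟨Finset.univ.affineCombination ℝ β w, ⟨fun j => (hcoord j).symm ▸ hw0 j, i,
      (hcoord i).trans hi⟩, by simp only [hcoord]⟩
  · rintro ⟨x, ⟨hx, hx0⟩, rfl⟩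
    exact ⟨fun i => β.coord i x, ⟨hx, β.sum_coord_apply_eq_one x⟩, hx0, rfl⟩

lemma isDiskBoundary_triangle (h : AffineIndependent ℝ ![p, q, r]) :
    IsDiskBoundary (segment ℝ p q ∪ (segment ℝ q r ∪ segment ℝ r p)) := by
  convert isDiskBoundary_faces h
  ext x
  constructor
  · rintro (⟨a, b, ha, hb, hab, rfl⟩ | ⟨a, b, ha, hb, hab, rfl⟩ | ⟨a, b, ha, hb, hab, rfl⟩)
    · exact ⟨![a, b, 0], by simp [stdSimplex, Fin.forall_fin_succ, Fin.sum_univ_three, *],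
        ⟨2, rfl⟩, by simp [Fin.sum_univ_three]⟩
    · exact ⟨![0, a, b], by simp [stdSimplex, Fin.forall_fin_succ, Fin.sum_univ_three, *],
        ⟨0, rfl⟩, by simp [Fin.sum_univ_three]⟩
    · exact ⟨![b, 0, a], by simp [stdSimplex, Fin.forall_fin_succ, Fin.sum_univ_three, add_comm, *],
        ⟨1, rfl⟩, by simp [Fin.sum_univ_three, add_comm]⟩
  · rintro ⟨w, ⟨hw, hw1⟩, ⟨i, hi⟩, rfl⟩
    rw [Fin.sum_univ_three] at hw1 ⊢
    obtain rfl | rfl | rfl : i = 0 ∨ i = 1 ∨ i = 2 := by fin_cases i <;> simp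
    · exact Or.inr (Or.inl ⟨w 1, w 2, hw 1, hw 2, by simpa [hi] using hw1, by simp [hi]⟩)
    · exact Or.inr (Or.inr ⟨w 2, w 0, hw 2, hw 0, by simpa [hi, add_comm] using hw1,
        by simp [hi, add_comm]⟩)
    · exact Or.inl ⟨w 0, w 1, hw 0, hw 1, by simpa [hi] using hw1, by simp [hi]⟩

lemma continuous_centeredGauge (hK : Convex ℝ K) (ho : IsOpen K) (hm : m ∈ K) :
    Continuous (centeredGauge K m) :=
  (continuous_gauge (hK.translate_preimage_right m)
    (preimage_add_left_mem_nhds_zero ho hm)).comp (continuous_id.sub continuous_const)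

lemma centeredGauge_lt_one_iff (hK : Convex ℝ K) (ho : IsOpen K) (hm : m ∈ K) :
    centeredGauge K m x < 1 ↔ x ∈ K := by
  rw [centeredGauge, gauge_lt_one_iff_mem_interior (hK.translate_preimage_right m)
    (preimage_add_left_mem_nhds_zero ho hm),
    (ho.preimage (continuous_const_add m)).interior_eq, Set.mem_preimage, add_sub_cancel]

lemma centeredGauge_eq_one_iff (hK : Convex ℝ K) (ho : IsOpen K) (hm : m ∈ K) :
    centeredGauge K m x = 1 ↔ x ∈ frontier K := by
  rw [centeredGauge, gauge_eq_one_iff_mem_frontier (hK.translate_preimage_right m)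
    (preimage_add_left_mem_nhds_zero ho hm), ← Homeomorph.coe_addLeft,
    ← Homeomorph.preimage_frontier, Set.mem_preimage, Homeomorph.coe_addLeft]
  exact (congrArg (· ∈ frontier K) (add_sub_cancel m x)).to_iff

lemma centeredGauge_add_smul_le (hK : Convex ℝ K) (ho : IsOpen K) (hm : m ∈ K)
    (x q : E) {s : ℝ} (hs : 0 ≤ s) :
    centeredGauge K m (x + s • (q - m)) ≤ centeredGauge K m x + s * centeredGauge K m q := by
  simp only [centeredGauge]
  rw [← smul_eq_mul, ← gauge_smul_of_nonneg hs, add_sub_right_comm]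
  exact gauge_add_le (hK.translate_preimage_right m)
    (absorbent_nhds_zero (preimage_add_left_mem_nhds_zero ho hm)) _ _

lemma continuous_pull (hK : Convex ℝ K) (ho : IsOpen K) (hm : m ∈ K) (q : E) :
    Continuous (pull K m q) :=
  continuous_id.add ((continuous_const.max
    (continuous_const.sub (continuous_centeredGauge hK ho hm))).smul continuous_const)

lemma injective_pull (hK : Convex ℝ K) (ho : IsOpen K) (hm : m ∈ K) (hq : q ∈ K) :
    Function.Injective (pull K m q) := by
  intro x y hxy
  wlog hle : max 0 (1 - centeredGauge K m x) ≤ max 0 (1 - centeredGauge K m y) generalizing x y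
  · exact (this hxy.symm (le_of_not_ge hle)).symm
  rcases hle.eq_or_lt with heq | hlt
  · exact add_right_cancel (heq ▸ hxy : pull K m q x = _)
  simp only [pull] at hxy
  set a := max 0 (1 - centeredGauge K m x)
  set b := max 0 (1 - centeredGauge K m y)
  have hb : b = 1 - centeredGauge K m y :=
    max_eq_right (lt_max_iff.1 ((le_max_left _ _).trans_lt hlt) |>.resolve_left (lt_irrefl 0)).le
  have hx : x = y + (b - a) • (q - m) := by
    rw [eq_sub_of_add_eq hxy]
    module
  have hsub := centeredGauge_add_smul_le hK ho hm y q (sub_pos.2 hlt).le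
  rw [← hx] at hsub
  have ha : 1 - centeredGauge K m x ≤ a := le_max_right _ _
  nlinarith [(centeredGauge_lt_one_iff hK ho hm).2 hq]

lemma pull_eq_self (hK : Convex ℝ K) (ho : IsOpen K) (hm : m ∈ K) (q : E)
    (hx : x ∉ K) : pull K m q x = x := by
  have : 1 ≤ centeredGauge K m x := not_lt.1 fun h => hx ((centeredGauge_lt_one_iff hK ho hm).1 h)
  rw [pull, max_eq_left (by linarith), zero_smul, add_zero]

lemma image_pull_segment (hK : Convex ℝ K) (ho : IsOpen K) (hm : m ∈ K) (q : E)
    (hp : p ∈ frontier K) :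
    pull K m q '' segment ℝ m p = segment ℝ q p := by
  rw [segment_eq_image_lineMap, segment_eq_image_lineMap, Set.image_image]
  refine Set.image_congr fun t ht => ?_
  rw [pull, centeredGauge_lineMap K m p ht.1, (centeredGauge_eq_one_iff hK ho hm).2 hp, mul_one,
    max_eq_right (sub_nonneg.2 ht.2), AffineMap.lineMap_apply_module,
    AffineMap.lineMap_apply_module]
  module

lemma IsDiskBoundary.subdivide_edge (h : IsDiskBoundary (R ∪ segment ℝ p r)) (hK : Convex ℝ K)
    (ho : IsOpen K) (hpr : openSegment ℝ p r ⊆ K) (hp : p ∉ K) (hr : r ∉ K) (hq : q ∈ K)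
    (hR : Disjoint R K) : IsDiskBoundary (R ∪ (segment ℝ p q ∪ segment ℝ q r)) := by
  have hm : midpoint ℝ p r ∈ K := hpr (midpoint_mem_openSegment p r)
  have mem_frontier : ∀ x ∈ segment ℝ p r, x ∉ K → x ∈ frontier K := fun x hx hxK => by
    rw [ho.frontier_eq]
    exact ⟨closure_mono hpr (segment_subset_closure_openSegment hx), hxK⟩
  have himage := h.image (continuous_pull hK ho hm q) (injective_pull hK ho hm hq)
  rw [segment_eq_union_midpoint, Set.image_union, Set.image_union,
    image_pull_segment hK ho hm q (mem_frontier p (left_mem_segment ℝ p r) hp),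
    image_pull_segment hK ho hm q (mem_frontier r (right_mem_segment ℝ p r) hr),
    Set.image_congr fun x hx => pull_eq_self hK ho hm q (hR.notMem_of_mem_left hx),
    Set.image_id', segment_symm ℝ q p] at himage
  exact himage

end DiskBoundary

section Polyline

variable {E : Type*} [AddCommGroup E] [Module ℝ E]

/-- The union of the segments joining consecutive points of a list. -/
def polyline : List E → Set E
  | p :: q :: l => segment ℝ p q ∪ polyline (q :: l)
  | _ => ∅

lemma polyline_append_cons (p : E) (l₂ : List E) :
    ∀ l₁ : List E, polyline (l₁ ++ p :: l₂) = polyline (l₁ ++ [p]) ∪ polyline (p :: l₂)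
  | [] => by simp [polyline]
  | [a] => by simp [polyline]
  | a :: b :: l => by
    simp only [List.cons_append, polyline, Set.union_assoc]
    rw [← List.cons_append, polyline_append_cons p l₂ (b :: l), List.cons_append]

lemma disjoint_polyline {K : Set E} :
    ∀ {l : List E}, l.IsChain (fun x y => Disjoint (segment ℝ x y) K) → Disjoint (polyline l) K
  | [], _ => by simp [polyline]
  | [_], _ => by simp [polyline]
  | _ :: _ :: _, h => by
    rw [List.isChain_cons_cons] at h
    exact h.1.union_left (disjoint_polyline h.2)

variable [TopologicalSpace E] {p q r : E} {l₁ l₂ : List E}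

lemma IsDiskBoundary.insert_vertex [IsTopologicalAddGroup E] [ContinuousSMul ℝ E] {K : Set E}
    (h : IsDiskBoundary (polyline (l₁ ++ p :: r :: l₂))) (hK : Convex ℝ K) (ho : IsOpen K)
    (hpr : openSegment ℝ p r ⊆ K) (hp : p ∉ K) (hr : r ∉ K) (hq : q ∈ K)
    (h₁ : Disjoint (polyline (l₁ ++ [p])) K) (h₂ : Disjoint (polyline (r :: l₂)) K) :
    IsDiskBoundary (polyline (l₁ ++ p :: q :: r :: l₂)) := by
  rw [polyline_append_cons, polyline, Set.union_comm (segment ℝ p r), ← Set.union_assoc] at h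
  convert h.subdivide_edge hK ho hpr hp hr hq (h₁.union_left h₂) using 1
  rw [polyline_append_cons, polyline, polyline]
  ac_rfl

/-- The intersection of the open half-spaces `f i < k i`. -/
def openPolyhedron {ι : Type*} (f : ι → E →L[ℝ] ℝ) (k : ι → ℝ) : Set E := {x | ∀ i, f i x < k i}

variable {ι : Type*} {f : ι → E →L[ℝ] ℝ} {k : ι → ℝ}

lemma isOpen_openPolyhedron [Finite ι] : IsOpen (openPolyhedron f k) := by
  simp only [openPolyhedron, Set.ofPred_forall]
  exact isOpen_iInter_of_finite fun i => isOpen_lt (f i).continuous continuous_const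

lemma convex_openPolyhedron : Convex ℝ (openPolyhedron f k) := by
  simp only [openPolyhedron, Set.ofPred_forall]
  exact convex_iInter fun i => convex_halfSpace_lt (f i).toLinearMap.isLinear _

lemma openSegment_subset_openPolyhedron
    (h : ∀ i, f i p ≤ k i ∧ f i r ≤ k i ∧ f i p + f i r < 2 * k i) :
    openSegment ℝ p r ⊆ openPolyhedron f k := by
  rintro _ ⟨a, b, ha, hb, hab, rfl⟩ i
  obtain ⟨hp, hr, hpr⟩ := h i
  obtain rfl : b = 1 - a := by linarith
  simp only [map_add, map_smul, smul_eq_mul]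
  rcases hp.lt_or_eq with hp | hp <;> nlinarith

lemma notMem_openPolyhedron (h : ∃ i, k i ≤ f i p) : p ∉ openPolyhedron f k :=
  fun hp => h.elim fun i hi => hi.not_gt (hp i)

lemma disjoint_segment_openPolyhedron (h : ∃ i, k i ≤ f i p ∧ k i ≤ f i q) :
    Disjoint (segment ℝ p q) (openPolyhedron f k) := by
  obtain ⟨i, hp, hq⟩ := h
  refine Set.disjoint_left.2 fun x hx => notMem_openPolyhedron ⟨i, ?_⟩
  exact (convex_halfSpace_ge (f i).toLinearMap.isLinear (k i)).segment_subset hp hq hx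

lemma IsDiskBoundary.insert_vertex_of_polyhedron [IsTopologicalAddGroup E] [ContinuousSMul ℝ E]
    [Finite ι] (h : IsDiskBoundary (polyline (l₁ ++ p :: r :: l₂))) (q : E)
    (f : ι → E →L[ℝ] ℝ) (k : ι → ℝ)
    (hpr : ∀ i, f i p ≤ k i ∧ f i r ≤ k i ∧ f i p + f i r < 2 * k i)
    (hp : ∃ i, k i ≤ f i p) (hr : ∃ i, k i ≤ f i r) (hq : ∀ i, f i q < k i)
    (h₁ : (l₁ ++ [p]).IsChain fun x y => ∃ i, k i ≤ f i x ∧ k i ≤ f i y)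
    (h₂ : (r :: l₂).IsChain fun x y => ∃ i, k i ≤ f i x ∧ k i ≤ f i y) :
    IsDiskBoundary (polyline (l₁ ++ p :: q :: r :: l₂)) :=
  h.insert_vertex convex_openPolyhedron isOpen_openPolyhedron
    (openSegment_subset_openPolyhedron hpr) (notMem_openPolyhedron hp) (notMem_openPolyhedron hr)
    hq (disjoint_polyline (h₁.imp fun _ _ => disjoint_segment_openPolyhedron))
    (disjoint_polyline (h₂.imp fun _ _ => disjoint_segment_openPolyhedron))

end Polyline

section TrapUnknotted

lemma affineIndependent_trapChain :
    AffineIndependent ℝ ![trapChain 1, trapChain 2, trapChain 4] := by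
  refine (affineIndependent_iff_of_fintype ℝ _).2 fun (w : Fin 3 → ℝ) hw h => ?_
  replace h : w 0 • trapChain 1 + w 1 • trapChain 2 + w 2 • trapChain 4 = 0 := by
    rwa [Finset.weightedVSub_eq_linear_combination (hw := hw), Fin.sum_univ_three] at h
  rw [Fin.sum_univ_three] at hw
  have h₁ := congrArg (fun x : E3 => x 1) h
  have h₂ := congrArg (fun x : E3 => x 2) h
  norm_num [trapChain] at h₁ h₂
  intro i
  fin_cases i <;> dsimp <;> linarith

lemma isUnknotted_trapChain : IsUnknotted 7 trapChain := by
  have triangle :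
      IsDiskBoundary (polyline [trapChain 1, trapChain 2, trapChain 4, trapChain 1]) := by
    simpa only [polyline, Set.union_empty] using isDiskBoundary_triangle affineIndependent_trapChain
  have quadrilateral := triangle.insert_vertex_of_polyhedron (l₁ := [trapChain 1]) (trapChain 3)
    ![lin 0 (-1) (-3), lin 0 (-1) (-1)] ![2, 1]
    (by norm_num [Fin.forall_fin_succ, trapChain]) (by norm_num [Fin.exists_fin_succ, trapChain])
    (by norm_num [Fin.exists_fin_succ, trapChain]) (by norm_num [Fin.forall_fin_succ, trapChain])
    (by norm_num [Fin.exists_fin_succ, trapChain]) (by norm_num [Fin.exists_fin_succ, trapChain])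
  have pentagon := quadrilateral.insert_vertex_of_polyhedron
    (l₁ := [trapChain 1, trapChain 2, trapChain 3]) (trapChain 6)
    ![lin 0 1 (-3), lin (-1) 0 0, lin 0 (-1) 1] ![2, -10006, 1]
    (by norm_num [Fin.forall_fin_succ, trapChain]) (by norm_num [Fin.exists_fin_succ, trapChain])
    (by norm_num [Fin.exists_fin_succ, trapChain]) (by norm_num [Fin.forall_fin_succ, trapChain])
    (by norm_num [Fin.exists_fin_succ, trapChain]) (by norm_num [Fin.exists_fin_succ, trapChain])
  have hexagon := pentagon.insert_vertex_of_polyhedron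
    (l₁ := [trapChain 1, trapChain 2, trapChain 3, trapChain 4]) (trapChain 0)
    ![lin 0 1 (-3), lin (-1) (-4) (-2), lin 0 (-2) 1, lin 1 (-1) 0] ![2, -10008, 2, 39999]
    (by norm_num [Fin.forall_fin_succ, trapChain]) (by norm_num [Fin.exists_fin_succ, trapChain])
    (by norm_num [Fin.exists_fin_succ, trapChain]) (by norm_num [Fin.forall_fin_succ, trapChain])
    (by norm_num [Fin.exists_fin_succ, trapChain]) (by norm_num [Fin.exists_fin_succ, trapChain])
  have heptagon := hexagon.insert_vertex_of_polyhedron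
    (l₁ := [trapChain 1, trapChain 2, trapChain 3]) (trapChain 5)
    ![lin (-1) (-20044) 10022, lin 0 0 (-1), lin (-1) 20016 10008, lin 0 (-1) 1, lin 0 1 1]
    ![2, 1, 2, 1, 1]
    (by norm_num [Fin.forall_fin_succ, trapChain]) (by norm_num [Fin.exists_fin_succ, trapChain])
    (by norm_num [Fin.exists_fin_succ, trapChain]) (by norm_num [Fin.forall_fin_succ, trapChain])
    (by norm_num [Fin.exists_fin_succ, trapChain]) (by norm_num [Fin.exists_fin_succ, trapChain])
  change IsDiskBoundary _
  convert heptagon using 1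
  ext x
  simp only [Set.mem_ofPred_eq, Nat.exists_lt_succ_right, polyline, List.cons_append,
    List.nil_append, Set.mem_union]
  simp only [not_lt_zero, false_and, exists_const, false_or, zero_add, Nat.one_mod, Nat.reduceAdd,
    Nat.reduceMod, Nat.mod_succ, Nat.mod_self, Set.mem_empty_iff_false, or_false]
  tauto

end TrapUnknotted

/-- There exists a simple closed polygonal chain in ℝ³ that is
unknotted (its image bounds an embedded topological disk) yet locked (it cannot
be convexified by any motion). -/
theorem exists_unknotted_locked_closed_chain :
    ∃ (n : ℕ) (v : ℕ → E3),
      IsSimpleClosedChain n v ∧ IsUnknotted n v ∧ ¬ CanBeConvexified n v :=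
  ⟨7, trapChain, isSimpleClosedChain_trapChain, isUnknotted_trapChain,
    not_canBeConvexified_trapChain⟩
end
end

section
/- Every simple closed polygonal chain lying in a plane of ℝ³ (a planar simple polygon) can be convexified, i.e., there is a motion in ℝ³ — a continuous, simplicity-preserving, edge-length-preserving deformation — whose final configuration is a planar convex polygon. -/
noncomputable section

open Set Filter Topology
open scoped RealInnerProductSpace

/-!
Reflecting an arc of a plane polygon that is cut off by a supporting line in that line (a flip) is
realised in space by turning the arc about the line. No distance between two points decreases
during this turn, so the chain stays simple. Among the polygons that can be reached and in which no
distance is smaller than in the original one, a compact set, take one with the largest sum of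
distances between vertices. None of its flips moves anything, so each supporting line meets it in a
single straight arc, and it is weakly convex. Finally each edge is rotated by a small angle that
increases along the polygon, and the polygon is closed up again at three proper corners; this bends
every straight arc to the left, and the result is strictly convex.
-/

/-! ### Closed chains -/

lemma forall_of_periodic {P : ℕ → Prop} {n : ℕ} (hP : Function.Periodic P n) (hn : 0 < n)
    (h : ∀ i < n, P i) (i : ℕ) : P i :=
  hP.map_mod_nat i ▸ h _ (Nat.mod_lt i hn)

lemma eventually_forall_ne {X Y Z : Type*} [TopologicalSpace X] [TopologicalSpace Y]
    [TopologicalSpace Z] [T2Space Z] {K : Set Y} (hK : IsCompact K) {f g : X × Y → Z}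
    (hf : Continuous f) (hg : Continuous g) {x : X} (h : ∀ y ∈ K, f (x, y) ≠ g (x, y)) :
    ∀ᶠ x' in 𝓝 x, ∀ y ∈ K, f (x', y) ≠ g (x', y) :=
  hK.eventually_forall_of_forall_eventually fun y hy => (isOpen_ne_fun hf hg).mem_nhds (h y hy)

/-- The edge vector from `v i` to `v (i + 1)`. -/
def edge {V : Type*} [AddCommGroup V] (v : ℕ → V) (i : ℕ) : V := v (i + 1) - v i

lemma periodic_edge {V : Type*} [AddCommGroup V] {n : ℕ} {v : ℕ → V}
    (hv : Function.Periodic v n) : Function.Periodic (edge v) n := fun i => by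
  simp only [edge, add_right_comm i n 1, hv _]

section Chain

variable {V W : Type*} [NormedAddCommGroup V] [NormedSpace ℝ V]
  [NormedAddCommGroup W] [NormedSpace ℝ W] {n : ℕ} {v : ℕ → V} {w : ℕ → W}

/-- The point with parameter `s` on the edge from `v i` to `v (i + 1)`. -/
def edgePoint (v : ℕ → V) (i : ℕ) (s : ℝ) : V := AffineMap.lineMap (v i) (v (i + 1)) s

/-- Simple closed chains of `n` edges, encoded as `n`-periodic sequences of vertices. Equality of
two points with the same parameter `s` on consecutive edges says that these edges are
antiparallel, so both separation conditions are expressed by distances between points of the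
chain. -/
structure IsSeparatedChain (n : ℕ) (v : ℕ → V) : Prop where
  three_le : 3 ≤ n
  periodic : Function.Periodic v n
  ne_succ : ∀ i, ∀ s ∈ Icc (0 : ℝ) 1, edgePoint v i s ≠ edgePoint v (i + 1) s
  ne_add : ∀ i m, 2 ≤ m → m + 2 ≤ n → ∀ s ∈ Icc (0 : ℝ) 1, ∀ t ∈ Icc (0 : ℝ) 1,
    edgePoint v i s ≠ edgePoint v (i + m) t

/-- The configuration space of simple closed chains of `n` edges with edge lengths `ℓ`. -/
def chainSpace (V : Type*) [NormedAddCommGroup V] [NormedSpace ℝ V] (n : ℕ) (ℓ : ℕ → ℝ) :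
    Set (ℕ → V) :=
  {v | IsSeparatedChain n v ∧ ∀ i, dist (v i) (v (i + 1)) = ℓ i}

/-- No distance between two points of the chain is smaller in `w` than in `v`. -/
def Expands (v : ℕ → V) (w : ℕ → W) : Prop :=
  ∀ i j, ∀ s ∈ Icc (0 : ℝ) 1, ∀ t ∈ Icc (0 : ℝ) 1,
    dist (edgePoint v i s) (edgePoint v j t) ≤ dist (edgePoint w i s) (edgePoint w j t)

@[simp] lemma edgePoint_zero (v : ℕ → V) (i : ℕ) : edgePoint v i 0 = v i :=
  AffineMap.lineMap_apply_zero _ _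

@[simp] lemma edgePoint_one (v : ℕ → V) (i : ℕ) : edgePoint v i 1 = v (i + 1) :=
  AffineMap.lineMap_apply_one _ _

lemma edgePoint_eq (v : ℕ → V) (i : ℕ) (s : ℝ) : edgePoint v i s = v i + s • edge v i := by
  rw [edgePoint, AffineMap.lineMap_apply_module', edge, add_comm]

lemma mem_segment_iff_edgePoint (v : ℕ → V) (i : ℕ) (x : V) :
    x ∈ segment ℝ (v i) (v (i + 1)) ↔ ∃ s ∈ Icc (0 : ℝ) 1, edgePoint v i s = x := by
  rw [segment_eq_image_lineMap]; rfl

lemma continuous_edgePoint {X : Type*} [TopologicalSpace X] {u : X → ℕ → V} {s : X → ℝ}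
    (hu : Continuous u) (hs : Continuous s) (i : ℕ) :
    Continuous fun x => edgePoint (u x) i (s x) := by
  simp only [edgePoint_eq, edge]
  fun_prop

lemma periodic_edgePoint (hv : Function.Periodic v n) : Function.Periodic (edgePoint v) n :=
  fun i => by ext s; simp only [edgePoint, add_right_comm i n 1, hv _]

namespace IsSeparatedChain

lemma pos (hv : IsSeparatedChain n v) : 0 < n := by
  have := hv.three_le
  omega

lemma edge_ne_zero (hv : IsSeparatedChain n v) (i : ℕ) : edge v i ≠ 0 := fun h =>
  hv.ne_succ i 0 (by simp) (by simpa using (sub_eq_zero.1 h).symm)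

lemma smul_edge_add_smul_edge_ne_zero (hv : IsSeparatedChain n v) (i : ℕ) {a b : ℝ} (ha : 0 ≤ a)
    (hb : 0 ≤ b) (hab : 0 < a + b) : a • edge v i + b • edge v (i + 1) ≠ 0 := by
  intro h
  refine hv.ne_succ i (b / (a + b)) ⟨by positivity, by rw [div_le_one hab]; linarith⟩ ?_
  have hdiff : edgePoint v (i + 1) (b / (a + b)) - edgePoint v i (b / (a + b)) =
      (a + b)⁻¹ • (a • edge v i + b • edge v (i + 1)) := by
    have hi : v (i + 1) = v i + edge v i := by simp [edge]
    rw [edgePoint_eq, edgePoint_eq, hi]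
    match_scalars <;> field_simp <;> ring
  rw [eq_comm, ← sub_eq_zero, hdiff, h, smul_zero]

lemma of_expands (hv : IsSeparatedChain n v) (hw : Function.Periodic w n) (h : Expands v w) :
    IsSeparatedChain n w where
  three_le := hv.three_le
  periodic := hw
  ne_succ i s hs := dist_pos.1 <|
    (dist_pos.2 (hv.ne_succ i s hs)).trans_le (h i (i + 1) s hs s hs)
  ne_add i m h₂ hm s hs t ht := dist_pos.1 <|
    (dist_pos.2 (hv.ne_add i m h₂ hm s hs t ht)).trans_le (h i (i + m) s hs t ht)

end IsSeparatedChain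

lemma Expands.mem_chainSpace {ℓ : ℕ → ℝ} (h : Expands v w) (hv : v ∈ chainSpace V n ℓ)
    (hw : Function.Periodic w n) (hdist : ∀ i, dist (w i) (w (i + 1)) = dist (v i) (v (i + 1))) :
    w ∈ chainSpace W n ℓ :=
  ⟨hv.1.of_expands hw h, fun i => (hdist i).trans (hv.2 i)⟩

section AffineIsometry

variable (f : V →ᵃⁱ[ℝ] W) (v : ℕ → V)

lemma edgePoint_comp (i : ℕ) (s : ℝ) : edgePoint (f ∘ v) i s = f (edgePoint v i s) :=
  (f.toAffineMap.apply_lineMap _ _ _).symm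

lemma comp_mem_chainSpace {ℓ : ℕ → ℝ} : f ∘ v ∈ chainSpace W n ℓ ↔ v ∈ chainSpace V n ℓ := by
  refine ⟨fun h => Expands.mem_chainSpace (v := f ∘ v) (fun i j s _ t _ => ?_) h
      (fun i => f.injective (h.1.periodic i)) fun i => ?_,
    fun h => Expands.mem_chainSpace (v := v) (fun i j s _ t _ => ?_) h
      (h.1.periodic.comp f) fun i => ?_⟩ <;>
  simp [edgePoint_comp]

lemma joinedIn_comp {ℓ : ℕ → ℝ} {v u : ℕ → V} (h : JoinedIn (chainSpace V n ℓ) v u) :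
    JoinedIn (chainSpace W n ℓ) (f ∘ v) (f ∘ u) :=
  (h.map (f := (f ∘ ·)) (continuous_pi fun i => f.continuous.comp (continuous_apply i))).mono <| by
    rintro _ ⟨x, hx, rfl⟩
    exact (comp_mem_chainSpace f x).2 hx

end AffineIsometry

lemma IsSeparatedChain.eventually (hv : IsSeparatedChain n v) :
    ∀ᶠ u in 𝓝 v, Function.Periodic u n → IsSeparatedChain n u := by
  have h₁ : ∀ᶠ u in 𝓝 v, ∀ i < n, ∀ s ∈ Icc (0 : ℝ) 1,
      edgePoint u i s ≠ edgePoint u (i + 1) s :=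
    (eventually_all_finite (finite_lt_nat n)).2 fun i _ =>
      eventually_forall_ne isCompact_Icc (continuous_edgePoint continuous_fst continuous_snd i)
        (continuous_edgePoint continuous_fst continuous_snd (i + 1)) (hv.ne_succ i)
  have h₂ : ∀ᶠ u in 𝓝 v, ∀ i < n, ∀ m < n, 2 ≤ m → m + 2 ≤ n →
      ∀ p ∈ Icc (0 : ℝ) 1 ×ˢ Icc (0 : ℝ) 1, edgePoint u i p.1 ≠ edgePoint u (i + m) p.2 := by
    refine (eventually_all_finite (finite_lt_nat n)).2 fun i _ =>
      (eventually_all_finite (finite_lt_nat n)).2 fun m _ => ?_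
    simp only [eventually_imp_distrib_left]
    exact fun h hm => eventually_forall_ne (isCompact_Icc.prod isCompact_Icc)
      (continuous_edgePoint continuous_fst continuous_snd.fst i)
      (continuous_edgePoint continuous_fst continuous_snd.snd (i + m))
      fun p hp => hv.ne_add i m h hm p.1 hp.1 p.2 hp.2
  filter_upwards [h₁, h₂] with u hu₁ hu₂ hp
  have hper (i m : ℕ) : edgePoint u (i + n + m) = edgePoint u (i + m) := by
    rw [add_right_comm, periodic_edgePoint hp]
  exact {
    three_le := hv.three_le
    periodic := hp
    ne_succ := forall_of_periodic (fun i => by simp only [hper, periodic_edgePoint hp i]) hv.pos hu₁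
    ne_add := forall_of_periodic (fun i => by simp only [hper, periodic_edgePoint hp i]) hv.pos
      fun i hi m h hm s hs t ht => hu₂ i hi m (by omega) h hm (s, t) ⟨hs, ht⟩ }

end Chain

namespace IsSeparatedChain

variable {V : Type*} [NormedAddCommGroup V] [NormedSpace ℝ V] {n : ℕ} {v : ℕ → V}

lemma segment_inter_succ (hv : IsSeparatedChain n v) (i : ℕ) :
    segment ℝ (v i) (v (i + 1)) ∩ segment ℝ (v (i + 1)) (v (i + 2)) = {v (i + 1)} := by
  refine Subset.antisymm ?_ (singleton_subset_iff.2
    ⟨right_mem_segment ℝ _ _, left_mem_segment ℝ _ _⟩)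
  rintro x ⟨h₁, h₂⟩
  obtain ⟨s, hs, rfl⟩ := (mem_segment_iff_edgePoint v i x).1 h₁
  obtain ⟨t, ht, h⟩ := (mem_segment_iff_edgePoint v (i + 1) _).1 h₂
  by_contra hne
  have hs₁ : s < 1 := hs.2.lt_of_ne fun h => hne (by simp [h])
  refine hv.smul_edge_add_smul_edge_ne_zero i (sub_pos.2 hs₁).le ht.1 (by linarith [ht.1]) ?_
  rw [← sub_eq_zero.2 h, edgePoint_eq, edgePoint_eq]
  simp only [edge]
  module

lemma disjoint_segment (hv : IsSeparatedChain n v) {i m : ℕ} (h₂ : 2 ≤ m) (hm : m + 2 ≤ n) :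
    Disjoint (segment ℝ (v i) (v (i + 1))) (segment ℝ (v (i + m)) (v (i + m + 1))) := by
  refine disjoint_left.2 fun x hx hx' => ?_
  obtain ⟨s, hs, rfl⟩ := (mem_segment_iff_edgePoint v i x).1 hx
  obtain ⟨t, ht, h⟩ := (mem_segment_iff_edgePoint v (i + m) _).1 hx'
  exact hv.ne_add i m h₂ hm s hs t ht h.symm

lemma ne_of_lt (hv : IsSeparatedChain n v) {i j : ℕ} (hij : i < j) (hj : j < i + n) :
    v i ≠ v j := by
  obtain ⟨m, rfl⟩ := Nat.exists_eq_add_of_lt hij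
  rcases Nat.eq_zero_or_pos m with rfl | hm
  · exact (sub_ne_zero.1 (hv.edge_ne_zero i)).symm
  rcases (show m + 2 ≤ n by omega).eq_or_lt with rfl | hmn
  · have := sub_ne_zero.1 (hv.edge_ne_zero (i + m + 1))
    rwa [show i + m + 1 + 1 = i + (m + 2) by ring, hv.periodic] at this
  · simpa [add_assoc] using hv.ne_add i (m + 1) (by omega) (by omega) 0 (by simp) 0 (by simp)

end IsSeparatedChain

section Simple

variable {n : ℕ} {v : ℕ → E3}

lemma IsSeparatedChain.isSimpleClosedChain (hv : IsSeparatedChain n v) :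
    IsSimpleClosedChain n v := by
  have h₃ := hv.three_le
  refine ⟨h₃, fun i j hi hj hij => ?_, fun i j hij hj => ?_⟩
  · rcases lt_or_gt_of_ne hij with h | h
    · exact hv.ne_of_lt h (by omega)
    · exact (hv.ne_of_lt h (by omega)).symm
  rw [hv.periodic.map_mod_nat, hv.periodic.map_mod_nat]
  split_ifs with h₁ h₂
  · exact h₁ ▸ hv.segment_inter_succ i
  · obtain ⟨rfl, rfl⟩ := h₂
    have := hv.segment_inter_succ (n - 1)
    have hlast : v (n - 1 + 1) = v 0 := by rw [← hv.periodic 0]; congr 1; omega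
    rw [show n - 1 + 2 = 1 + n by omega, hlast, hv.periodic, inter_comm] at this
    rw [hlast]
    exact this
  · obtain ⟨m, rfl⟩ := Nat.exists_eq_add_of_lt hij
    exact (hv.disjoint_segment (i := i) (m := m + 1) (by omega) (by omega)).inter_eq

namespace IsSimpleClosedChain

lemma edge_ne_zero (hv : IsSimpleClosedChain n v) (hp : Function.Periodic v n) :
    ∀ i, edge v i ≠ 0 := by
  obtain ⟨hn, hinj, -⟩ := hv
  refine forall_of_periodic (n := n) (fun i => by rw [periodic_edge hp]) (by omega) fun i hi => ?_
  rw [edge, sub_ne_zero, ← hp.map_mod_nat (i + 1)]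
  refine hinj _ _ (Nat.mod_lt _ (by omega)) hi ?_
  rcases (show i + 1 ≤ n from hi).eq_or_lt with h | h
  · rw [h, Nat.mod_self]; omega
  · rw [Nat.mod_eq_of_lt h]; omega

lemma segment_inter_succ (hv : IsSimpleClosedChain n v) (hp : Function.Periodic v n) :
    ∀ i, segment ℝ (v i) (v (i + 1)) ∩ segment ℝ (v (i + 1)) (v (i + 2)) = {v (i + 1)} := by
  obtain ⟨hn, -, hseg⟩ := hv
  simp only [hp.map_mod_nat] at hseg
  refine forall_of_periodic (n := n) (fun i => by simp only [add_right_comm i n, hp _]) (by omega)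
    fun i hi => ?_
  rcases (show i + 1 ≤ n from hi).eq_or_lt with rfl | h
  · have := hseg 0 i (by omega) (by omega)
    have hlast : v (i + 1) = v 0 := by rw [← hp 0, zero_add]
    rw [if_neg (by omega), if_pos ⟨rfl, rfl⟩, inter_comm, hlast] at this
    rw [show i + 2 = 1 + (i + 1) by ring, hp, hlast]
    exact this
  · simpa using hseg i (i + 1) (by omega) h

lemma disjoint_segment (hv : IsSimpleClosedChain n v) (hp : Function.Periodic v n) {m : ℕ}
    (h₂ : 2 ≤ m) (hm : m + 2 ≤ n) :
    ∀ i, Disjoint (segment ℝ (v i) (v (i + 1))) (segment ℝ (v (i + m)) (v (i + m + 1))) := by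
  obtain ⟨hn, -, hseg⟩ := hv
  simp only [hp.map_mod_nat] at hseg
  refine forall_of_periodic (n := n) (fun i => by simp only [add_right_comm _ n, hp _]) (by omega)
    fun i hi => ?_
  rw [disjoint_iff_inter_eq_empty]
  rcases lt_or_ge (i + m) n with h | h
  · rw [hseg i (i + m) (by omega) h, if_neg (by omega), if_neg (by omega)]
  · obtain ⟨k, hk⟩ := Nat.exists_eq_add_of_le' h
    rw [hk, add_right_comm k n 1, hp, hp, inter_comm, hseg k i (by omega) hi, if_neg (by omega),
      if_neg (by omega)]

lemma isSeparatedChain (hv : IsSimpleClosedChain n v) (hp : Function.Periodic v n) :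
    IsSeparatedChain n v where
  three_le := hv.1
  periodic := hp
  ne_succ i s hs h := by
    have hmem : edgePoint v i s = v (i + 1) := by
      have : edgePoint v i s ∈ segment ℝ (v i) (v (i + 1)) ∩
          segment ℝ (v (i + 1)) (v (i + 2)) :=
        ⟨(mem_segment_iff_edgePoint v i _).2 ⟨s, hs, rfl⟩,
          (mem_segment_iff_edgePoint v (i + 1) _).2 ⟨s, hs, h.symm⟩⟩
      rwa [hv.segment_inter_succ hp i] at this
    have hs₀ : s = 0 := by
      rw [h, edgePoint_eq, add_eq_left, smul_eq_zero] at hmem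
      exact hmem.resolve_right (hv.edge_ne_zero hp (i + 1))
    rw [hs₀, edgePoint_zero] at hmem
    exact hv.edge_ne_zero hp i (sub_eq_zero.2 hmem.symm)
  ne_add i m h₂ hm s hs t ht h := disjoint_left.1 (hv.disjoint_segment hp h₂ hm i)
    ((mem_segment_iff_edgePoint v i _).2 ⟨s, hs, rfl⟩)
    ((mem_segment_iff_edgePoint v (i + m) _).2 ⟨t, ht, h.symm⟩)

end IsSimpleClosedChain

end Simple

/-! ### Turning a plane figure about a line -/

attribute [local instance] Complex.finrank_real_complex_fact

local notation "ω" => Complex.orientation.areaForm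

local notation "J" => Complex.orientation.rightAngleRotation

/-- Euclidean space, as the product of a horizontal plane `ℂ` and a vertical axis. -/
abbrev Space := WithLp 2 (ℂ × ℝ)

lemma norm_toLp_sq (z : ℂ) (h : ℝ) : ‖(WithLp.toLp 2 (z, h) : Space)‖ ^ 2 = ‖z‖ ^ 2 + h ^ 2 := by
  rw [WithLp.prod_norm_sq_eq_of_L2, WithLp.toLp_fst, WithLp.toLp_snd, Real.norm_eq_abs, sq_abs]

lemma norm_sub_smul_normal_sq (d : Circle) (z : ℂ) (r : ℝ) :
    ‖z - r • J d‖ ^ 2 = ‖z‖ ^ 2 - 2 * r * ω d z + r ^ 2 := by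
  rw [norm_sub_sq_real, real_inner_smul_right, real_inner_comm,
    Complex.orientation.inner_rightAngleRotation_left, norm_smul, LinearIsometryEquiv.norm_map,
    Circle.norm_coe, Real.norm_eq_abs, mul_one, sq_abs]
  ring

/-- The rotation of the horizontal plane in space by the angle `θ` about the axis through the
origin with direction `d`. -/
def turnLinear (d : Circle) (θ : ℝ) : ℂ →ₗᵢ[ℝ] Space where
  toFun x := WithLp.toLp 2 (x - ((1 - Real.cos θ) * ω d x) • J d, Real.sin θ * ω d x)
  map_add' x y := by
    rw [← WithLp.toLp_add, Prod.mk_add_mk]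
    refine congrArg (WithLp.toLp 2) (Prod.ext ?_ ?_) <;> simp only [map_add]
    · module
    · ring
  map_smul' c x := by
    rw [RingHom.id_apply, ← WithLp.toLp_smul, Prod.smul_mk]
    refine congrArg (WithLp.toLp 2) (Prod.ext ?_ ?_) <;> simp only [map_smul, smul_eq_mul]
    · module
    · ring
  norm_map' x := by
    rw [LinearMap.coe_mk, AddHom.coe_mk, ← sq_eq_sq₀ (norm_nonneg _) (norm_nonneg _),
      norm_toLp_sq, norm_sub_smul_normal_sq]
    linear_combination (ω d x) ^ 2 * Real.sin_sq_add_cos_sq θ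

/-- The horizontal plane in space. -/
def inPlane : ℂ →ᵃⁱ[ℝ] Space := (turnLinear 1 0).toAffineIsometry

/-- The rotation of the horizontal plane in space by the angle `θ` about the line through `o` with
direction `d`. -/
def turn (o : ℂ) (d : Circle) (θ : ℝ) : ℂ →ᵃⁱ[ℝ] Space where
  toFun z := inPlane o + turnLinear d θ (z - o)
  linear := (turnLinear d θ).toLinearMap
  map_vadd' z x := by
    simp only [vadd_eq_add, add_sub_assoc, map_add, LinearIsometry.coe_toLinearMap]
    abel
  norm_map := (turnLinear d θ).norm_map

/-- The reflection of the plane in the line through `o` with direction `d`. -/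
def reflectLine (o : ℂ) (d : Circle) (z : ℂ) : ℂ := z - (2 * ω d (z - o)) • J d

section Turn

variable (o : ℂ) (d : Circle) (θ : ℝ) (z z' : ℂ)

lemma inPlane_apply : inPlane z = WithLp.toLp 2 (z, 0) := by
  simp [inPlane, turnLinear]

lemma turn_apply : turn o d θ z =
    WithLp.toLp 2 (z - ((1 - Real.cos θ) * ω d (z - o)) • J d, Real.sin θ * ω d (z - o)) := by
  change inPlane o + WithLp.toLp 2 (_, _) = _
  rw [inPlane_apply, ← WithLp.toLp_add, Prod.mk_add_mk, zero_add]
  congr 2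
  abel

lemma turn_zero : turn o d 0 z = inPlane z := by
  simp [turn_apply, inPlane_apply]

lemma turn_pi : turn o d Real.pi z = inPlane (reflectLine o d z) := by
  norm_num [turn_apply, inPlane_apply, reflectLine]

variable {o d z} in
lemma turn_of_areaForm_eq_zero (h : ω d (z - o) = 0) : turn o d θ z = inPlane z := by
  simp [turn_apply, inPlane_apply, h]

lemma continuous_turn : Continuous fun θ => turn o d θ z := by
  simp only [turn_apply]
  fun_prop

lemma dist_turn_inPlane_sq : dist (turn o d θ z) (inPlane z') ^ 2 =
    dist z z' ^ 2 + 2 * (1 - Real.cos θ) * (ω d (z - o) * ω d (z' - o)) := by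
  have h : z - ((1 - Real.cos θ) * ω d (z - o)) • J d - z' =
      (z - z') - ((1 - Real.cos θ) * ω d (z - o)) • J d := by abel
  have hω : ω d (z' - o) = ω d (z - o) - ω d (z - z') := by rw [← map_sub]; congr 1; abel
  rw [turn_apply, inPlane_apply, dist_eq_norm, ← WithLp.toLp_sub, Prod.mk_sub_mk, sub_zero,
    norm_toLp_sq, h, norm_sub_smul_normal_sq, hω, dist_eq_norm]
  linear_combination (ω d (z - o)) ^ 2 * Real.sin_sq_add_cos_sq θ

variable {o d z z'} in
lemma dist_le_dist_turn_inPlane (hz : 0 ≤ ω d (z - o)) (hz' : 0 ≤ ω d (z' - o)) :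
    dist z z' ≤ dist (turn o d θ z) (inPlane z') := by
  rw [← sq_le_sq₀ dist_nonneg dist_nonneg, dist_turn_inPlane_sq, le_add_iff_nonneg_right]
  have := sub_nonneg.2 (Real.cos_le_one θ)
  positivity

variable {o d z z'} in
lemma dist_lt_dist_reflectLine (hz : 0 < ω d (z - o)) (hz' : 0 < ω d (z' - o)) :
    dist z z' < dist (reflectLine o d z) z' := by
  rw [← inPlane.dist_map (reflectLine o d z), ← turn_pi, ← sq_lt_sq₀ dist_nonneg dist_nonneg,
    dist_turn_inPlane_sq, Real.cos_pi]
  have := mul_pos hz hz'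
  linarith

end Turn

/-! ### Flips -/

/-- The line through `w i` with direction `d` passes through `w j` and supports the polygon `w` of
`n` vertices, so that the arc from `w i` to `w j` can be turned about it. -/
structure IsFlipAxis (n i j : ℕ) (d : Circle) (w : ℕ → ℂ) : Prop where
  lt : i < j
  lt_period : j < n
  areaForm_eq_zero : ω d (w j - w i) = 0
  areaForm_nonneg : ∀ k, 0 ≤ ω d (w k - w i)

/-- The polygon of `n` vertices `w` after turning the arc from `w i` to `w j` by the angle `θ`
about the line through `w i` with direction `d`. -/
def turnChain (n i j : ℕ) (d : Circle) (w : ℕ → ℂ) (θ : ℝ) : ℕ → Space := fun k =>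
  if i ≤ k % n ∧ k % n ≤ j then turn (w i) d θ (w k) else inPlane (w k)

/-- The polygon of `n` vertices `w` after reflecting the arc from `w i` to `w j` in the line
through `w i` with direction `d`. -/
def flipChain (n i j : ℕ) (d : Circle) (w : ℕ → ℂ) : ℕ → ℂ := fun k =>
  if i ≤ k % n ∧ k % n ≤ j then reflectLine (w i) d (w k) else w k

section Flip

variable {n i j : ℕ} {d : Circle} {w : ℕ → ℂ} {ℓ : ℕ → ℝ}

lemma turnChain_zero : turnChain n i j d w 0 = inPlane ∘ w := by
  ext1 k
  simp only [turnChain, turn_zero, ite_self, Function.comp_apply]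

lemma turnChain_pi : turnChain n i j d w Real.pi = inPlane ∘ flipChain n i j d w := by
  ext1 k
  simp only [turnChain, flipChain, turn_pi, Function.comp_apply, apply_ite inPlane]

lemma continuous_turnChain : Continuous (turnChain n i j d w) := by
  refine continuous_pi fun k => ?_
  unfold turnChain
  split_ifs
  exacts [continuous_turn _ _ _, continuous_const]

lemma periodic_turnChain (hw : Function.Periodic w n) (θ : ℝ) :
    Function.Periodic (turnChain n i j d w θ) n := fun k => by
  simp only [turnChain, Nat.add_mod_right, hw k]

lemma periodic_flipChain (hw : Function.Periodic w n) :
    Function.Periodic (flipChain n i j d w) n := fun k => by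
  simp only [flipChain, Nat.add_mod_right, hw k]

lemma succ_mod_eq_ite {n : ℕ} (hn : 0 < n) (k : ℕ) :
    (k + 1) % n = if k % n + 1 = n then 0 else k % n + 1 := by
  have := Nat.mod_lt k hn
  rw [← Nat.mod_add_mod]
  split_ifs with h
  · rw [h, Nat.mod_self]
  · exact Nat.mod_eq_of_lt (by omega)

namespace IsFlipAxis

lemma turn_endpoint (h : IsFlipAxis n i j d w) (hw : Function.Periodic w n) (θ : ℝ) {k : ℕ}
    (hk : k % n = i ∨ k % n = j) : turn (w i) d θ (w k) = inPlane (w k) := by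
  rw [← hw.map_mod_nat k]
  rcases hk with hk | hk <;> rw [hk]
  · exact turn_of_areaForm_eq_zero θ (by simp)
  · exact turn_of_areaForm_eq_zero θ h.areaForm_eq_zero

lemma edgePoint_turnChain (h : IsFlipAxis n i j d w) (hw : Function.Periodic w n) (θ : ℝ)
    (k : ℕ) (s : ℝ) : edgePoint (turnChain n i j d w θ) k s =
      if i ≤ k % n ∧ k % n < j then turn (w i) d θ (edgePoint w k s)
      else inPlane (edgePoint w k s) := by
  have hij := h.lt
  have hj := h.lt_period
  have hk : k % n < n := Nat.mod_lt _ (by omega)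
  have hsucc := succ_mod_eq_ite (show 0 < n by omega) k
  have hopen (l : ℕ) : turnChain n i j d w θ l =
      if i < l % n ∧ l % n < j then turn (w i) d θ (w l) else inPlane (w l) := by
    unfold turnChain
    split_ifs
    · rfl
    · exact h.turn_endpoint hw θ (by omega)
    · omega
    · rfl
  split_ifs with hmem
  · rw [← edgePoint_comp]
    simp only [edgePoint, turnChain]
    rw [if_pos (by omega), if_pos (by split_ifs at hsucc <;> omega)]
    rfl
  · rw [← edgePoint_comp]
    simp only [edgePoint, hopen]
    rw [if_neg (by omega), if_neg (by split_ifs at hsucc <;> omega)]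
    rfl

lemma areaForm_edgePoint_nonneg (h : IsFlipAxis n i j d w) (k : ℕ) {s : ℝ}
    (hs : s ∈ Icc (0 : ℝ) 1) : 0 ≤ ω d (edgePoint w k s - w i) := by
  have hcombo : edgePoint w k s - w i = (1 - s) • (w k - w i) + s • (w (k + 1) - w i) := by
    rw [edgePoint_eq, edge]; module
  rw [hcombo, map_add, map_smul, map_smul]
  exact add_nonneg (mul_nonneg (sub_nonneg.2 hs.2) (h.areaForm_nonneg _))
    (mul_nonneg hs.1 (h.areaForm_nonneg _))

lemma expands_turnChain (h : IsFlipAxis n i j d w) (hw : Function.Periodic w n) (θ : ℝ) :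
    Expands w (turnChain n i j d w θ) := by
  intro k l s hs t ht
  have hs := h.areaForm_edgePoint_nonneg k hs
  have ht := h.areaForm_edgePoint_nonneg l ht
  rw [h.edgePoint_turnChain hw, h.edgePoint_turnChain hw]
  split_ifs
  · rw [AffineIsometry.dist_map]
  · exact dist_le_dist_turn_inPlane θ hs ht
  · rw [dist_comm, dist_comm (inPlane _)]
    exact dist_le_dist_turn_inPlane θ ht hs
  · rw [AffineIsometry.dist_map]

lemma turnChain_mem_chainSpace (h : IsFlipAxis n i j d w) (hw : w ∈ chainSpace ℂ n ℓ) (θ : ℝ) :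
    turnChain n i j d w θ ∈ chainSpace Space n ℓ := by
  have hp := hw.1.periodic
  refine (h.expands_turnChain hp θ).mem_chainSpace hw (periodic_turnChain hp θ) fun k => ?_
  have hstart := h.edgePoint_turnChain hp θ k 0
  have hend := h.edgePoint_turnChain hp θ k 1
  rw [edgePoint_zero, edgePoint_zero] at hstart
  rw [edgePoint_one, edgePoint_one] at hend
  rw [hstart, hend]
  split_ifs <;> exact AffineIsometry.dist_map _ _ _

lemma joinedIn_flipChain (h : IsFlipAxis n i j d w) (hw : w ∈ chainSpace ℂ n ℓ) :
    JoinedIn (chainSpace Space n ℓ) (inPlane ∘ w) (inPlane ∘ flipChain n i j d w) := by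
  refine JoinedIn.ofLine (f := fun t => turnChain n i j d w (t * Real.pi))
    (continuous_turnChain.comp (continuous_mul_const Real.pi)).continuousOn
    (by simp only [zero_mul, turnChain_zero]) (by simp only [one_mul, turnChain_pi]) ?_
  rintro _ ⟨t, -, rfl⟩
  exact h.turnChain_mem_chainSpace hw _

lemma expands_flipChain (h : IsFlipAxis n i j d w) (hw : Function.Periodic w n) :
    Expands w (flipChain n i j d w) := by
  intro k l s hs t ht
  have := h.expands_turnChain hw Real.pi k l s hs t ht
  rwa [turnChain_pi, edgePoint_comp, edgePoint_comp, AffineIsometry.dist_map] at this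

lemma dist_lt_dist_flipChain (h : IsFlipAxis n i j d w) {k l : ℕ} (hik : i < k) (hkj : k < j)
    (hl : l < n) (hl' : l < i ∨ j < l) (hk₀ : 0 < ω d (w k - w i)) (hl₀ : 0 < ω d (w l - w i)) :
    dist (w k) (w l) < dist (flipChain n i j d w k) (flipChain n i j d w l) := by
  have hj := h.lt_period
  simp only [flipChain]
  rw [Nat.mod_eq_of_lt (hkj.trans hj), Nat.mod_eq_of_lt hl, if_pos (by omega), if_neg (by omega)]
  exact dist_lt_dist_reflectLine hk₀ hl₀

end IsFlipAxis

end Flip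

/-! ### Closing up a perturbed polygon -/

/-- The inner product of the first two side vectors of a closed triangle whose side lengths are
those of `A`, `B`, `C`. -/
def sideInner (A B C : ℂ) : ℝ := (‖C‖ ^ 2 - ‖A‖ ^ 2 - ‖B‖ ^ 2) / 2

/-- The second side vector of a closed triangle whose first side vector is `A`, whose other side
lengths are those of `B` and `C`, and whose orientation is the sign `σ`. -/
def closingSide (σ : ℝ) (A B C : ℂ) : ℂ :=
  (sideInner A B C + (σ * √(‖A‖ ^ 2 * ‖B‖ ^ 2 - sideInner A B C ^ 2) : ℝ) * Complex.I) /
    (starRingEnd ℂ) A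

/-- There is a nondegenerate triangle whose sides have the lengths of `A`, `B`, `C`. -/
def IsTriangle (A B C : ℂ) : Prop := sideInner A B C ^ 2 < ‖A‖ ^ 2 * ‖B‖ ^ 2

section ClosingSide

variable {σ : ℝ} {A B C : ℂ}

lemma sideInner_of_add_eq_zero (h : A + B + C = 0) : sideInner A B C = ⟪A, B⟫ := by
  rw [sideInner, ← norm_neg C, ← eq_neg_of_add_eq_zero_left h, norm_add_sq_real]
  ring

lemma norm_sq_mul_sub_sideInner_sq (h : A + B + C = 0) :
    ‖A‖ ^ 2 * ‖B‖ ^ 2 - sideInner A B C ^ 2 = ω A B ^ 2 := by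
  rw [sideInner_of_add_eq_zero h, ← Complex.orientation.inner_sq_add_areaForm_sq]
  ring

lemma isTriangle_of_add_eq_zero (h : A + B + C = 0) (hA : ω A B ≠ 0) : IsTriangle A B C := by
  rw [IsTriangle, ← sub_pos, norm_sq_mul_sub_sideInner_sq h]
  positivity

lemma isOpen_setOf_isTriangle : IsOpen {q : ℂ × ℂ × ℂ | IsTriangle q.1 q.2.1 q.2.2} := by
  unfold IsTriangle sideInner
  exact isOpen_lt (by fun_prop) (by fun_prop)

lemma closingSide_of_add_eq_zero (h : A + B + C = 0) (hσ : σ ^ 2 = 1) (hpos : 0 < σ * ω A B) :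
    closingSide σ A B C = B := by
  have hA : A ≠ 0 := by rintro rfl; simp at hpos
  have hsqrt : √(‖A‖ ^ 2 * ‖B‖ ^ 2 - sideInner A B C ^ 2) = σ * ω A B := by
    rw [norm_sq_mul_sub_sideInner_sq h, ← Real.sqrt_sq hpos.le, mul_pow, hσ, one_mul]
  rw [closingSide, hsqrt, ← mul_assoc, ← sq, hσ, one_mul, sideInner_of_add_eq_zero h,
    div_eq_iff ((map_ne_zero _).2 hA), Complex.inner, Complex.areaForm, mul_comm B,
    Complex.re_add_im]

lemma continuousAt_closingSide (hA : A ≠ 0) :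
    ContinuousAt (fun q : ℂ × ℂ × ℂ => closingSide σ q.1 q.2.1 q.2.2) (A, B, C) := by
  unfold closingSide sideInner
  exact ContinuousAt.div (by fun_prop) (by fun_prop) (star_ne_zero.2 hA)

namespace IsTriangle

lemma left_ne_zero (h : IsTriangle A B C) : A ≠ 0 := by
  rintro rfl
  exact (sq_nonneg _).not_gt (by simpa [IsTriangle] using h)

lemma middle_ne_zero (h : IsTriangle A B C) : B ≠ 0 := by
  rintro rfl
  exact (sq_nonneg _).not_gt (by simpa [IsTriangle] using h)

lemma right_ne_zero (h : IsTriangle A B C) : C ≠ 0 := by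
  rintro rfl
  have : (sideInner A B 0) ^ 2 - ‖A‖ ^ 2 * ‖B‖ ^ 2 = ((‖A‖ ^ 2 - ‖B‖ ^ 2) / 2) ^ 2 := by
    rw [sideInner, norm_zero]
    ring
  linarith [sq_nonneg ((‖A‖ ^ 2 - ‖B‖ ^ 2) / 2), show _ < _ from h]

lemma conj_mul_closingSide (h : IsTriangle A B C) : (starRingEnd ℂ) A * closingSide σ A B C =
    sideInner A B C + (σ * √(‖A‖ ^ 2 * ‖B‖ ^ 2 - sideInner A B C ^ 2) : ℝ) * Complex.I :=
  mul_div_cancel₀ _ (star_ne_zero.2 h.left_ne_zero)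

lemma inner_closingSide (h : IsTriangle A B C) :
    ⟪A, closingSide σ A B C⟫ = sideInner A B C := by
  rw [Complex.inner, mul_comm, h.conj_mul_closingSide]
  simp

lemma areaForm_closingSide (h : IsTriangle A B C) :
    ω A (closingSide σ A B C) = σ * √(‖A‖ ^ 2 * ‖B‖ ^ 2 - sideInner A B C ^ 2) := by
  rw [Complex.areaForm, h.conj_mul_closingSide]
  simp

lemma norm_closingSide (h : IsTriangle A B C) (hσ : σ ^ 2 = 1) : ‖closingSide σ A B C‖ = ‖B‖ := by
  have hprod := Complex.orientation.inner_sq_add_areaForm_sq A (closingSide σ A B C)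
  rw [h.inner_closingSide, h.areaForm_closingSide, mul_pow, hσ, one_mul,
    Real.sq_sqrt (sub_nonneg.2 (le_of_lt h)), add_sub_cancel, eq_comm] at hprod
  rw [← sq_eq_sq₀ (norm_nonneg _) (norm_nonneg _)]
  exact mul_left_cancel₀ (pow_ne_zero 2 (norm_ne_zero_iff.2 h.left_ne_zero)) hprod

lemma norm_add_closingSide (h : IsTriangle A B C) (hσ : σ ^ 2 = 1) :
    ‖A + closingSide σ A B C‖ = ‖C‖ := by
  rw [← sq_eq_sq₀ (norm_nonneg _) (norm_nonneg _), norm_add_sq_real, h.inner_closingSide,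
    h.norm_closingSide hσ, sideInner]
  ring

end IsTriangle

end ClosingSide

/-- The `l`-th edge of the chain `w`, rotated by the angle `θ l`. -/
def rotEdge (w : ℕ → ℂ) (θ : ℕ → ℝ) (l : ℕ) : ℂ := edge w l * Complex.exp (θ l * Complex.I)

/-- The sum of the rotated edges with index in `[x, y)`. -/
def rotSum (w : ℕ → ℂ) (x y : ℕ) (θ : ℕ → ℝ) : ℂ := ∑ l ∈ Finset.Ico x y, rotEdge w θ l

/-- After the edges of `w` have been rotated by the angles `θ`, the three arcs with vertices in
`[0, b]`, `[b, c]`, `[c, n]` can be rotated rigidly so that they close up to a nondegenerate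
triangle. -/
def IsClosable (n b c : ℕ) (w : ℕ → ℂ) (θ : ℕ → ℝ) : Prop :=
  IsTriangle (rotSum w 0 b θ) (rotSum w b c θ) (rotSum w c n θ)

/-- The rotations of the three arcs with vertices in `[0, b]`, `[b, c]`, `[c, n]` that make them
close up again after the edges have been rotated by the angles `θ`; the first arc is kept. -/
def closingFactor (n b c : ℕ) (σ : ℝ) (w : ℕ → ℂ) (θ : ℕ → ℝ) (l : ℕ) : ℂ :=
  if l < b then 1
  else if l < c then
    closingSide σ (rotSum w 0 b θ) (rotSum w b c θ) (rotSum w c n θ) / rotSum w b c θ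
  else -(rotSum w 0 b θ + closingSide σ (rotSum w 0 b θ) (rotSum w b c θ) (rotSum w c n θ)) /
    rotSum w c n θ

/-- The closed chain obtained by rotating the edges of `w` by the angles `θ` and then rotating the
three arcs with vertices in `[0, b]`, `[b, c]`, `[c, n]` so as to close the chain. -/
def perturb (n b c : ℕ) (σ : ℝ) (w : ℕ → ℂ) (θ : ℕ → ℝ) : ℕ → ℂ := fun k =>
  w 0 + ∑ l ∈ Finset.range (k % n), closingFactor n b c σ w θ l * rotEdge w θ l

section Perturb

variable {n b c : ℕ} {σ : ℝ} {w u : ℕ → ℂ} {θ : ℕ → ℝ} {ℓ : ℕ → ℝ}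

lemma norm_rotEdge (w : ℕ → ℂ) (θ : ℕ → ℝ) (l : ℕ) : ‖rotEdge w θ l‖ = ‖edge w l‖ := by
  rw [rotEdge, norm_mul, Complex.norm_exp_ofReal_mul_I, mul_one]

@[simp] lemma rotEdge_zero (w : ℕ → ℂ) : rotEdge w 0 = edge w := by
  ext1 l
  simp [rotEdge]

lemma continuous_rotEdge (w : ℕ → ℂ) (l : ℕ) : Continuous fun θ => rotEdge w θ l := by
  unfold rotEdge
  fun_prop

lemma continuous_rotSum (w : ℕ → ℂ) (x y : ℕ) : Continuous (rotSum w x y) :=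
  continuous_finsetSum _ fun l _ => continuous_rotEdge w l

lemma sum_edge_Ico (w : ℕ → ℂ) {x y : ℕ} (h : x ≤ y) :
    ∑ l ∈ Finset.Ico x y, edge w l = w y - w x :=
  Finset.sum_Ico_sub w h

lemma rotSum_of_rotEdge_eq (hrot : rotEdge w θ = edge u) {x y : ℕ} (h : x ≤ y) :
    rotSum w x y θ = u y - u x := by
  rw [rotSum, hrot, sum_edge_Ico u h]

lemma norm_closingFactor (h : IsClosable n b c w θ) (hσ : σ ^ 2 = 1) (l : ℕ) :
    ‖closingFactor n b c σ w θ l‖ = 1 := by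
  unfold closingFactor
  split_ifs
  · simp
  · rw [norm_div, h.norm_closingSide hσ, div_self (norm_ne_zero_iff.2 h.middle_ne_zero)]
  · rw [norm_div, norm_neg, h.norm_add_closingSide hσ,
      div_self (norm_ne_zero_iff.2 h.right_ne_zero)]

lemma sum_Ico_mul_rotEdge {x y : ℕ} {f : ℕ → ℂ} {a : ℂ} (hf : ∀ l, x ≤ l → l < y → f l = a) :
    ∑ l ∈ Finset.Ico x y, f l * rotEdge w θ l = a * rotSum w x y θ := by
  rw [rotSum, Finset.mul_sum]
  refine Finset.sum_congr rfl fun l hl => ?_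
  rw [hf l (Finset.mem_Ico.1 hl).1 (Finset.mem_Ico.1 hl).2]

lemma sum_closingFactor_mul_rotEdge (hbc : b ≤ c) (hcn : c ≤ n) (h : IsClosable n b c w θ) :
    ∑ l ∈ Finset.range n, closingFactor n b c σ w θ l * rotEdge w θ l = 0 := by
  rw [Finset.range_eq_Ico, ← Finset.sum_Ico_consecutive _ (Nat.zero_le c) hcn,
    ← Finset.sum_Ico_consecutive _ (Nat.zero_le b) hbc,
    sum_Ico_mul_rotEdge (f := closingFactor n b c σ w θ) fun l _ hl => if_pos hl,
    sum_Ico_mul_rotEdge (f := closingFactor n b c σ w θ) fun l hl hl' =>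
      (if_neg hl.not_gt).trans (if_pos hl'),
    sum_Ico_mul_rotEdge (f := closingFactor n b c σ w θ) fun l hl _ =>
      (if_neg (hbc.trans hl).not_gt).trans (if_neg hl.not_gt),
    div_mul_cancel₀ _ h.middle_ne_zero, div_mul_cancel₀ _ h.right_ne_zero]
  ring

lemma periodic_perturb : Function.Periodic (perturb n b c σ w θ) n := fun k => by
  rw [perturb, perturb, Nat.add_mod_right]

lemma perturb_of_le (hbc : b ≤ c) (hcn : c ≤ n) (h : IsClosable n b c w θ) {k : ℕ} (hk : k ≤ n) :
    perturb n b c σ w θ k =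
      w 0 + ∑ l ∈ Finset.range k, closingFactor n b c σ w θ l * rotEdge w θ l := by
  rcases hk.lt_or_eq with hk | rfl
  · rw [perturb, Nat.mod_eq_of_lt hk]
  · rw [perturb, Nat.mod_self, sum_closingFactor_mul_rotEdge hbc hcn h, Finset.sum_range_zero]

lemma edge_perturb (hbc : b ≤ c) (hcn : c ≤ n) (h : IsClosable n b c w θ) {k : ℕ} (hk : k < n) :
    edge (perturb n b c σ w θ) k = closingFactor n b c σ w θ k * rotEdge w θ k := by
  rw [edge, perturb_of_le hbc hcn h hk, perturb_of_le hbc hcn h hk.le, Finset.sum_range_succ]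
  ring

lemma norm_edge_perturb (hw : Function.Periodic w n) (hn : 0 < n) (hσ : σ ^ 2 = 1) (hbc : b ≤ c)
    (hcn : c ≤ n) (h : IsClosable n b c w θ) (k : ℕ) :
    ‖edge (perturb n b c σ w θ) k‖ = ‖edge w k‖ := by
  have hper : Function.Periodic (fun k => ‖edge (perturb n b c σ w θ) k‖ = ‖edge w k‖) n :=
    fun k => by simp only [periodic_edge periodic_perturb k, periodic_edge hw k]
  refine forall_of_periodic hper hn (fun k hk => ?_) k
  rw [edge_perturb hbc hcn h hk, norm_mul, norm_closingFactor h hσ, one_mul, norm_rotEdge]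

lemma continuousAt_perturb (h : IsClosable n b c w θ) : ContinuousAt (perturb n b c σ w) θ := by
  have hsum (x y : ℕ) : ContinuousAt (rotSum w x y) θ := (continuous_rotSum w x y).continuousAt
  have hside : ContinuousAt
      (fun θ => closingSide σ (rotSum w 0 b θ) (rotSum w b c θ) (rotSum w c n θ)) θ :=
    ContinuousAt.comp (f := fun θ => (rotSum w 0 b θ, rotSum w b c θ, rotSum w c n θ))
      (continuousAt_closingSide h.left_ne_zero)
      ((hsum 0 b).prodMk ((hsum b c).prodMk (hsum c n)))
  refine continuousAt_pi.2 fun k => continuousAt_const.add <| tendsto_finsetSum _ fun l _ =>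
    ContinuousAt.mul ?_ (continuous_rotEdge w l).continuousAt
  unfold closingFactor
  split_ifs
  · exact continuousAt_const
  · exact hside.div (hsum b c) h.middle_ne_zero
  · exact ((hsum 0 b).add hside).neg.div (hsum c n) h.right_ne_zero

lemma eventually_isClosable (h : IsClosable n b c w θ) : ∀ᶠ θ' in 𝓝 θ, IsClosable n b c w θ' :=
  ((continuous_rotSum w 0 b).prodMk ((continuous_rotSum w b c).prodMk (continuous_rotSum w c n)))
    |>.continuousAt.eventually_mem (isOpen_setOf_isTriangle.mem_nhds h)

lemma rotSum_add_rotSum_add_rotSum (hu : Function.Periodic u n) (hrot : rotEdge w θ = edge u)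
    (hbc : b ≤ c) (hcn : c ≤ n) :
    rotSum w 0 b θ + rotSum w b c θ + rotSum w c n θ = 0 := by
  rw [rotSum_of_rotEdge_eq hrot (Nat.zero_le b), rotSum_of_rotEdge_eq hrot hbc,
    rotSum_of_rotEdge_eq hrot hcn, hu.eq]
  ring

lemma isClosable_zero (hw : Function.Periodic w n) (hbc : b ≤ c) (hcn : c ≤ n)
    (hne : ω (w b - w 0) (w c - w b) ≠ 0) : IsClosable n b c w 0 := by
  refine isTriangle_of_add_eq_zero
    (rotSum_add_rotSum_add_rotSum hw (rotEdge_zero w) hbc hcn) ?_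
  rwa [rotSum_of_rotEdge_eq (rotEdge_zero w) (Nat.zero_le b),
    rotSum_of_rotEdge_eq (rotEdge_zero w) hbc]

lemma perturb_of_rotEdge_eq (hu : Function.Periodic u n) (h₀ : u 0 = w 0) (hbc : b ≤ c)
    (hcn : c ≤ n) (hrot : rotEdge w θ = edge u) (hσ : σ ^ 2 = 1)
    (hpos : 0 < σ * ω (u b - u 0) (u c - u b)) : perturb n b c σ w θ = u := by
  have hsum := rotSum_add_rotSum_add_rotSum hu hrot hbc hcn
  rw [← rotSum_of_rotEdge_eq hrot (Nat.zero_le b), ← rotSum_of_rotEdge_eq hrot hbc] at hpos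
  have htri := isTriangle_of_add_eq_zero hsum (right_ne_zero_of_mul hpos.ne')
  have hfactor (l : ℕ) : closingFactor n b c σ w θ l = 1 := by
    rw [closingFactor, closingSide_of_add_eq_zero hsum hσ hpos, ← eq_neg_of_add_eq_zero_right hsum,
      div_self htri.middle_ne_zero, div_self htri.right_ne_zero, ite_self, ite_self]
  ext1 k
  simp only [perturb, hfactor, one_mul, hrot, Finset.range_eq_Ico]
  rw [sum_edge_Ico u (Nat.zero_le _), hu.map_mod_nat, h₀, add_sub_cancel]

lemma perturb_zero (hw : Function.Periodic w n) (hbc : b ≤ c) (hcn : c ≤ n) (hσ : σ ^ 2 = 1)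
    (hpos : 0 < σ * ω (w b - w 0) (w c - w b)) : perturb n b c σ w 0 = w :=
  perturb_of_rotEdge_eq hw rfl hbc hcn (rotEdge_zero w) hσ hpos

lemma tendsto_perturb (hw : Function.Periodic w n) (hbc : b ≤ c) (hcn : c ≤ n) (hσ : σ ^ 2 = 1)
    (hpos : 0 < σ * ω (w b - w 0) (w c - w b)) :
    Tendsto (perturb n b c σ w) (𝓝 0) (𝓝 w) := by
  have h := continuousAt_perturb (σ := σ)
    (isClosable_zero hw hbc hcn (right_ne_zero_of_mul hpos.ne'))
  rwa [ContinuousAt, perturb_zero hw hbc hcn hσ hpos] at h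

end Perturb

section Local

variable {n b c : ℕ} {σ : ℝ} {w : ℕ → ℂ} {ℓ : ℕ → ℝ}

lemma dist_eq_norm_edge (w : ℕ → ℂ) (k : ℕ) : dist (w k) (w (k + 1)) = ‖edge w k‖ := by
  rw [dist_comm, dist_eq_norm, edge]

lemma perturb_mem_chainSpace {θ : ℕ → ℝ} (hw : w ∈ chainSpace ℂ n ℓ) (hbc : b ≤ c) (hcn : c ≤ n)
    (hσ : σ ^ 2 = 1) (hθ : IsClosable n b c w θ)
    (hsep : IsSeparatedChain n (perturb n b c σ w θ)) :
    perturb n b c σ w θ ∈ chainSpace ℂ n ℓ :=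
  ⟨hsep, fun k => by
    rw [dist_eq_norm_edge, norm_edge_perturb hw.1.periodic hw.1.pos hσ hbc hcn hθ,
      ← dist_eq_norm_edge, hw.2]⟩

lemma eventually_joinedIn_perturb (hw : w ∈ chainSpace ℂ n ℓ) (hbc : b ≤ c) (hcn : c ≤ n)
    (hσ : σ ^ 2 = 1) (hpos : 0 < σ * ω (w b - w 0) (w c - w b)) :
    ∀ᶠ θ in 𝓝 (0 : ℕ → ℝ), JoinedIn (chainSpace ℂ n ℓ) w (perturb n b c σ w θ) := by
  have hgood : ∀ᶠ θ in 𝓝 (0 : ℕ → ℝ),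
      IsClosable n b c w θ ∧ IsSeparatedChain n (perturb n b c σ w θ) :=
    (eventually_isClosable
      (isClosable_zero hw.1.periodic hbc hcn (right_ne_zero_of_mul hpos.ne'))).and
    (((tendsto_perturb hw.1.periodic hbc hcn hσ hpos).eventually hw.1.eventually).mono
      fun _ h => h periodic_perturb)
  have hsegment : ∀ᶠ θ in 𝓝 (0 : ℕ → ℝ), ∀ t ∈ Icc (0 : ℝ) 1,
      IsClosable n b c w (t • θ) ∧ IsSeparatedChain n (perturb n b c σ w (t • θ)) := by
    refine isCompact_Icc.eventually_forall_of_forall_eventually fun t _ => ?_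
    have hlim : Tendsto (fun q : (ℕ → ℝ) × ℝ => q.2 • q.1) (𝓝 (0, t)) (𝓝 0) :=
      Continuous.tendsto' (by fun_prop) _ _ (smul_zero t)
    exact hlim.eventually hgood
  filter_upwards [hsegment] with θ hθ
  refine JoinedIn.ofLine (f := fun t : ℝ => perturb n b c σ w (t • θ)) (fun t ht => ?_) ?_ ?_ ?_
  · exact (ContinuousAt.comp (f := fun t : ℝ => t • θ) (continuousAt_perturb (hθ t ht).1)
      (by fun_prop)).continuousWithinAt
  · simp only [zero_smul, perturb_zero hw.1.periodic hbc hcn hσ hpos]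
  · simp only [one_smul]
  · rintro _ ⟨t, ht, rfl⟩
    exact perturb_mem_chainSpace hw hbc hcn hσ (hθ t ht).1 (hθ t ht).2

/-- The angles by which the edges of `w` are rotated to point in the directions of the edges of
`u`. -/
def edgeAngles (w u : ℕ → ℂ) (l : ℕ) : ℝ := Complex.arg (edge u l / edge w l)

lemma rotEdge_edgeAngles {u : ℕ → ℂ} (hw : w ∈ chainSpace ℂ n ℓ)
    (hu : ∀ i, dist (u i) (u (i + 1)) = ℓ i) : rotEdge w (edgeAngles w u) = edge u := by
  ext1 l
  have hnorm : ‖edge u l / edge w l‖ = 1 := by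
    rw [norm_div, ← dist_eq_norm_edge, ← dist_eq_norm_edge, hu, ← hw.2 l,
      div_self (by rw [dist_eq_norm_edge]; exact norm_ne_zero_iff.2 (hw.1.edge_ne_zero l))]
  have hexp := Complex.norm_mul_exp_arg_mul_I (edge u l / edge w l)
  rw [hnorm, Complex.ofReal_one, one_mul] at hexp
  rw [rotEdge, edgeAngles, hexp, mul_div_cancel₀ _ (hw.1.edge_ne_zero l)]

lemma tendsto_edgeAngles (hw : IsSeparatedChain n w) : Tendsto (edgeAngles w) (𝓝 w) (𝓝 0) := by
  refine tendsto_pi_nhds.2 fun l => ?_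
  have hdiv : Tendsto (fun u : ℕ → ℂ => edge u l / edge w l) (𝓝 w) (𝓝 1) :=
    Continuous.tendsto' (by unfold edge; fun_prop) _ _ (div_self (hw.edge_ne_zero l))
  have harg := (Complex.continuousAt_arg Complex.one_mem_slitPlane).tendsto.comp hdiv
  rw [Complex.arg_one] at harg
  exact harg

lemma exists_sign_mul_pos {a : ℝ} (ha : a ≠ 0) : ∃ σ : ℝ, σ ^ 2 = 1 ∧ 0 < σ * a := by
  rcases ha.lt_or_gt with ha | ha
  · exact ⟨-1, by norm_num, by linarith⟩
  · exact ⟨1, by norm_num, by linarith⟩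

lemma eventually_joinedIn (hw : w ∈ chainSpace ℂ n ℓ) (hbc : b ≤ c) (hcn : c ≤ n)
    (hne : ω (w b - w 0) (w c - w b) ≠ 0) :
    ∀ᶠ u in 𝓝 w, Function.Periodic u n → u 0 = w 0 → (∀ i, dist (u i) (u (i + 1)) = ℓ i) →
      JoinedIn (chainSpace ℂ n ℓ) w u := by
  obtain ⟨σ, hσ, hpos⟩ := exists_sign_mul_pos hne
  have hturn : ∀ᶠ u in 𝓝 w, 0 < σ * ω (u b - u 0) (u c - u b) := by
    have hcont : Continuous fun u : ℕ → ℂ => σ * ω (u b - u 0) (u c - u b) := by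
      simp only [Complex.areaForm]
      fun_prop
    exact hcont.continuousAt.eventually_const_lt hpos
  filter_upwards [hturn, (tendsto_edgeAngles hw.1).eventually
    (eventually_joinedIn_perturb hw hbc hcn hσ hpos)] with u hu hjoin hper h₀ hdist
  rwa [perturb_of_rotEdge_eq hper h₀ hbc hcn (rotEdge_edgeAngles hw hdist) hσ hu] at hjoin

end Local

/-! ### Straight arcs -/

section StraightArc

variable {n : ℕ} {w : ℕ → ℂ}

lemma areaForm_eq_zero_of_areaForm_eq_zero {d x y : ℂ} (hd : d ≠ 0) (hx : ω d x = 0)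
    (hy : ω d y = 0) : ω x y = 0 := by
  have h := Complex.orientation.inner_mul_areaForm_sub d x y
  rw [hx, hy, mul_zero, zero_mul, sub_zero, eq_comm, mul_eq_zero] at h
  exact h.resolve_left (pow_ne_zero 2 (norm_ne_zero_iff.2 hd))

lemma exists_smul_eq_of_areaForm_eq_zero {x y : ℂ} (hx : x ≠ 0) (h : ω x y = 0) :
    ∃ r : ℝ, r • x = y := by
  rcases le_total 0 ⟪x, y⟫ with hnonneg | hnonpos
  · obtain ⟨r, -, hr⟩ := ((Complex.orientation.nonneg_inner_and_areaForm_eq_zero_iff_sameRay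
      x y).1 ⟨hnonneg, h⟩).exists_nonneg_left hx
    exact ⟨r, hr⟩
  · obtain ⟨r, -, hr⟩ := ((Complex.orientation.nonneg_inner_and_areaForm_eq_zero_iff_sameRay
      x (-y)).1 ⟨by rwa [inner_neg_right, neg_nonneg],
        by rw [map_neg, h, neg_zero]⟩).exists_nonneg_left hx
    exact ⟨-r, by rw [neg_smul, hr, neg_neg]⟩

lemma areaForm_edge_eq_zero {d p : ℂ} {k : ℕ} (hk : ω d (w k - p) = 0)
    (hk' : ω d (w (k + 1) - p) = 0) : ω d (edge w k) = 0 := by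
  rw [edge, ← sub_sub_sub_cancel_right _ _ p, map_sub, hk, hk', sub_zero]

/-- The vertices `w a, …, w b` lie on a line. -/
def IsStraight (a b : ℕ) (w : ℕ → ℂ) : Prop :=
  ∀ k, a ≤ k → k + 1 < b → ω (edge w k) (edge w (k + 1)) = 0

lemma isStraight_of_areaForm_eq_zero {a b : ℕ} {d p : ℂ} (hd : d ≠ 0)
    (h : ∀ k ∈ Icc a b, ω d (w k - p) = 0) : IsStraight a b w := fun k ha hb =>
  areaForm_eq_zero_of_areaForm_eq_zero hd
    (areaForm_edge_eq_zero (h k ⟨ha, by omega⟩) (h (k + 1) ⟨by omega, by omega⟩))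
    (areaForm_edge_eq_zero (h (k + 1) ⟨by omega, by omega⟩) (h (k + 2) ⟨by omega, by omega⟩))

namespace IsSeparatedChain

lemma sameRay_edge_succ (hw : IsSeparatedChain n w) {k : ℕ}
    (h : ω (edge w k) (edge w (k + 1)) = 0) : SameRay ℝ (edge w k) (edge w (k + 1)) := by
  refine (Complex.orientation.nonneg_inner_and_areaForm_eq_zero_iff_sameRay _ _).1 ⟨?_, h⟩
  obtain ⟨r, hr⟩ := exists_smul_eq_of_areaForm_eq_zero (hw.edge_ne_zero k) h
  rw [← hr, real_inner_smul_right]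
  refine mul_nonneg (le_of_not_gt fun hneg => ?_) real_inner_self_nonneg
  refine hw.smul_edge_add_smul_edge_ne_zero k (a := -r) (b := 1) (by linarith) zero_le_one
    (by linarith) ?_
  rw [← hr]
  module

lemma sameRay_edge (hw : IsSeparatedChain n w) {a b k l : ℕ} (h : IsStraight a b w) (hak : a ≤ k)
    (hkl : k ≤ l) (hlb : l < b) : SameRay ℝ (edge w k) (edge w l) := by
  induction l, hkl using Nat.le_induction with
  | base => exact SameRay.refl _
  | succ l hkl ih =>
    exact (ih (by omega)).trans (hw.sameRay_edge_succ (h l (hak.trans hkl) hlb))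
      fun h₀ => absurd h₀ (hw.edge_ne_zero l)

lemma exists_pos_smul_edge_eq_sub (hw : IsSeparatedChain n w) {a b k l j : ℕ}
    (h : IsStraight a b w) (hak : a ≤ k) (hkl : k < l) (hlb : l ≤ b) (haj : a ≤ j) (hjb : j < b) :
    ∃ r : ℝ, 0 < r ∧ r • edge w j = w l - w k := by
  have hray (m : ℕ) (ham : a ≤ m) (hmb : m < b) : ∃ r : ℝ, 0 < r ∧ r • edge w j = edge w m := by
    have hsame : SameRay ℝ (edge w j) (edge w m) := by
      rcases le_total j m with hjm | hmj
      exacts [hw.sameRay_edge h haj hjm hmb, (hw.sameRay_edge h ham hmj hjb).symm]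
    exact hsame.exists_pos_left (hw.edge_ne_zero j) (hw.edge_ne_zero m)
  induction l, hkl using Nat.le_induction with
  | base => exact hray k hak hlb
  | succ l hkl ih =>
    obtain ⟨r, hr, hrl⟩ := ih (by omega)
    obtain ⟨s, hs, hsl⟩ := hray l (by omega) hlb
    exact ⟨r + s, add_pos hr hs, by rw [add_smul, hrl, hsl, edge]; abel⟩

lemma exists_areaForm_ne_zero (hw : IsSeparatedChain n w) {d : ℂ} (hd : d ≠ 0) (p : ℂ) :
    ∃ k, ω d (w k - p) ≠ 0 := by
  by_contra! hline
  obtain ⟨r, hr, hclosed⟩ := hw.exists_pos_smul_edge_eq_sub (a := 0) (b := n) (j := 0)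
    (isStraight_of_areaForm_eq_zero hd fun k _ => hline k) le_rfl hw.pos le_rfl le_rfl hw.pos
  rw [hw.periodic.eq, sub_self] at hclosed
  exact smul_ne_zero hr.ne' (hw.edge_ne_zero 0) hclosed

lemma exists_areaForm_edge_zero_ne_zero (hw : IsSeparatedChain n w) :
    ∃ c, 1 ≤ c ∧ c ≤ n ∧ ω (w 1 - w 0) (w c - w 1) ≠ 0 := by
  obtain ⟨k, hk⟩ := hw.exists_areaForm_ne_zero (hw.edge_ne_zero 0) (w 1)
  rw [← hw.periodic.map_mod_nat k] at hk
  refine ⟨k % n, Nat.one_le_iff_ne_zero.2 fun h₀ => hk ?_, (Nat.mod_lt k hw.pos).le, hk⟩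
  rw [h₀, ← neg_sub, map_neg, edge, zero_add, Complex.orientation.areaForm_apply_self, neg_zero]

end IsSeparatedChain

end StraightArc

/-! ### Chains that no flip expands -/

/-- A polygon in which every supporting line meets a single straight arc of the boundary: whenever
the line passes through the vertices `w i` and `w j`, it contains one of the two arcs between
them. -/
def IsFlipRigid (n : ℕ) (w : ℕ → ℂ) : Prop :=
  ∀ i j, i ≤ j → j ≤ i + n → ∀ d ≠ 0, ω d (w j - w i) = 0 → (∀ k, 0 ≤ ω d (w k - w i)) →
    (∀ k ∈ Icc i j, ω d (w k - w i) = 0) ∨ ∀ k ∈ Icc j (i + n), ω d (w k - w i) = 0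

/-- The polygons with edge lengths `ℓ` and the same initial vertex as `v` that are expanded with
respect to `v` and can be reached from it by a motion in space. -/
def expandedChains (n : ℕ) (ℓ : ℕ → ℝ) (v : ℕ → ℂ) : Set (ℕ → ℂ) :=
  {w | Function.Periodic w n ∧ w 0 = v 0 ∧ (∀ i, dist (w i) (w (i + 1)) = ℓ i) ∧ Expands v w ∧
    JoinedIn (chainSpace Space n ℓ) (inPlane ∘ v) (inPlane ∘ w)}

section Maximizer

variable {n : ℕ} {v w : ℕ → ℂ} {ℓ : ℕ → ℝ}

lemma expandedChains_subset_chainSpace (hv : IsSeparatedChain n v) :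
    expandedChains n ℓ v ⊆ chainSpace ℂ n ℓ :=
  fun _ hw => ⟨hv.of_expands hw.1 hw.2.2.2.1, hw.2.2.1⟩

lemma self_mem_expandedChains (hv : v ∈ chainSpace ℂ n ℓ) : v ∈ expandedChains n ℓ v :=
  ⟨hv.1.periodic, rfl, hv.2, fun _ _ _ _ _ _ => le_rfl,
    JoinedIn.refl ((comp_mem_chainSpace inPlane v).2 hv)⟩

lemma isClosed_setOf_expands (v : ℕ → ℂ) : IsClosed {w : ℕ → ℂ | Expands v w} := by
  simp only [Expands, ofPred_forall]
  refine isClosed_iInter fun i => isClosed_iInter fun j => isClosed_iInter fun s =>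
    isClosed_iInter fun _ => isClosed_iInter fun t => isClosed_iInter fun _ => ?_
  exact isClosed_le continuous_const ((continuous_edgePoint continuous_id continuous_const i).dist
    (continuous_edgePoint continuous_id continuous_const j))

lemma isClosed_setOf_periodic (n : ℕ) : IsClosed {w : ℕ → ℂ | Function.Periodic w n} := by
  simp only [Function.Periodic, ofPred_forall]
  exact isClosed_iInter fun k => isClosed_eq (by fun_prop) (by fun_prop)

lemma isClosed_setOf_dist_eq (ℓ : ℕ → ℝ) :
    IsClosed {w : ℕ → ℂ | ∀ i, dist (w i) (w (i + 1)) = ℓ i} := by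
  simp only [ofPred_forall]
  exact isClosed_iInter fun i => isClosed_eq (by fun_prop) (by fun_prop)

lemma isClosed_expandedChains (hv : IsSeparatedChain n v) : IsClosed (expandedChains n ℓ v) := by
  refine isClosed_of_closure_subset fun w hw => ?_
  have hclosure {C : Set (ℕ → ℂ)} (hC : IsClosed C) (h : expandedChains n ℓ v ⊆ C) : w ∈ C :=
    closure_minimal h hC hw
  have hper := hclosure (isClosed_setOf_periodic n) fun _ hu => hu.1
  have h₀ : w 0 = v 0 :=
    hclosure (isClosed_singleton.preimage (continuous_apply 0)) fun _ hu => hu.2.1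
  have hdist := hclosure (isClosed_setOf_dist_eq ℓ) fun _ hu => hu.2.2.1
  have hexp := hclosure (isClosed_setOf_expands v) fun _ hu => hu.2.2.2.1
  have hsep := hv.of_expands hper hexp
  obtain ⟨c, hc, hcn, hne⟩ := hsep.exists_areaForm_edge_zero_ne_zero
  obtain ⟨u, hu, hwu⟩ := ((mem_closure_iff_frequently.1 hw).and_eventually
    (eventually_joinedIn ⟨hsep, hdist⟩ hc hcn hne)).exists
  exact ⟨hper, h₀, hdist, hexp, hu.2.2.2.2.trans
    (joinedIn_comp inPlane (hwu hu.1 (hu.2.1.trans h₀.symm) hu.2.2.1)).symm⟩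

lemma isCompact_expandedChains (hv : IsSeparatedChain n v) :
    IsCompact (expandedChains n ℓ v) := by
  refine (isCompact_univ_pi fun k => isCompact_closedBall (v 0)
    (∑ l ∈ Finset.range k, ℓ l)).of_isClosed_subset (isClosed_expandedChains hv) fun w hw k _ => ?_
  rw [Metric.mem_closedBall', ← hw.2.1]
  exact (dist_le_range_sum_dist w k).trans_eq (Finset.sum_congr rfl fun l _ => hw.2.2.1 l)

lemma flipChain_mem_expandedChains {i j : ℕ} {d : Circle} (hv : IsSeparatedChain n v)
    (hw : w ∈ expandedChains n ℓ v) (h : IsFlipAxis n i j d w) :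
    flipChain n i j d w ∈ expandedChains n ℓ v := by
  have hjoin := h.joinedIn_flipChain (expandedChains_subset_chainSpace hv hw)
  refine ⟨periodic_flipChain hw.1, ?_, ((comp_mem_chainSpace inPlane _).1 hjoin.target_mem).2,
    fun a b s hs t ht => (hw.2.2.2.1 a b s hs t ht).trans
      (h.expands_flipChain hw.1 a b s hs t ht), hw.2.2.2.2.trans hjoin⟩
  rw [flipChain, Nat.zero_mod, ← hw.2.1]
  split_ifs with h₀
  · rw [Nat.le_zero.1 h₀.1]
    simp [reflectLine]
  · rfl

/-- The sum of the distances between the vertices of a chain. Flips increase it. -/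
def totalDist (n : ℕ) (w : ℕ → ℂ) : ℝ :=
  ∑ i ∈ Finset.range n, ∑ j ∈ Finset.range n, dist (w i) (w j)

lemma IsFlipAxis.totalDist_lt {i j k l : ℕ} {d : Circle} (hw : Function.Periodic w n)
    (h : IsFlipAxis n i j d w) (hik : i < k) (hkj : k < j) (hln : l < n) (hl : l < i ∨ j < l)
    (hk₀ : ω d (w k - w i) ≠ 0) (hl₀ : ω d (w l - w i) ≠ 0) :
    totalDist n w < totalDist n (flipChain n i j d w) := by
  have hle (p q : ℕ) :
      dist (w p) (w q) ≤ dist (flipChain n i j d w p) (flipChain n i j d w q) := by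
    simpa using h.expands_flipChain hw p q 0 (by simp) 0 (by simp)
  have hlt := h.dist_lt_dist_flipChain hik hkj hln hl
    ((h.areaForm_nonneg k).lt_of_ne' hk₀) ((h.areaForm_nonneg l).lt_of_ne' hl₀)
  exact Finset.sum_lt_sum (fun p _ => Finset.sum_le_sum fun q _ => hle p q)
    ⟨k, Finset.mem_range.2 (hkj.trans h.lt_period),
      Finset.sum_lt_sum (fun q _ => hle k q) ⟨l, Finset.mem_range.2 hln, hlt⟩⟩

lemma forall_mem_Icc_or_forall_mem_Icc {P : ℕ → Prop} (hP : Function.Periodic P n) (hn : 0 < n)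
    (h : ∀ i j k l, i < k → k < j → j < n → l < n → (l < i ∨ j < l) → P i → P j → P k ∨ P l)
    {i j : ℕ} (hij : i ≤ j) (hji : j ≤ i + n) (hi : P i) (hj : P j) :
    (∀ k ∈ Icc i j, P k) ∨ ∀ k ∈ Icc j (i + n), P k := by
  wlog hin : i < n generalizing i j
  · have hP' : Function.Periodic P (n * (i / n)) := by
      simpa only [mul_comm n, nsmul_eq_mul, Nat.cast_id] using hP.nsmul (i / n)
    have hi' := Nat.mod_add_div i n
    obtain ⟨j, rfl⟩ : ∃ l, l + n * (i / n) = j := ⟨j - n * (i / n), by omega⟩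
    rw [← hi', hP'] at hi
    rw [hP'] at hj
    refine (this (by omega) (by omega) hi hj (Nat.mod_lt _ hn)).imp ?_ ?_ <;>
    · rintro hall k ⟨hk, hk'⟩
      rw [← Nat.sub_add_cancel (show n * (i / n) ≤ k by omega), hP']
      exact hall _ ⟨by omega, by omega⟩
  by_contra! hcon
  obtain ⟨⟨k, ⟨hik, hkj⟩, hk⟩, l, ⟨hjl, hli⟩, hl⟩ := hcon
  have hsub (m : ℕ) (hm : n ≤ m) : P m ↔ P (m - n) := by
    conv_lhs => rw [← Nat.sub_add_cancel hm, hP]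
  have hne {a b : ℕ} (ha : P a) (hb : ¬ P b) : a ≠ b := fun hab => hb (hab ▸ ha)
  have hik := hik.lt_of_ne (hne hi hk)
  have hkj := hkj.lt_of_ne (hne hj hk).symm
  have hjl := hjl.lt_of_ne (hne hj hl)
  have hli := hli.lt_of_ne (hne (by rwa [hP]) hl).symm
  rcases lt_or_ge j n with hjn | hjn
  · rcases lt_or_ge l n with hln | hln
    · exact (h i j k l hik hkj hjn hln (.inr hjl) hi hj).elim hk hl
    · rw [hsub l hln] at hl
      exact (h i j k (l - n) hik hkj hjn (by omega) (.inl (by omega)) hi hj).elim hk hl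
  · rw [hsub j hjn] at hj
    rw [hsub l (by omega)] at hl
    rcases lt_or_ge k n with hkn | hkn
    · exact (h (j - n) i (l - n) k (by omega) (by omega) hin hkn (.inr hik) hj hi).elim hl hk
    · rw [hsub k hkn] at hk
      exact (h (j - n) i (l - n) (k - n) (by omega) (by omega) hin (by omega) (.inl (by omega))
        hj hi).elim hl hk

lemma isFlipRigid_of_isMaxOn (hv : IsSeparatedChain n v) (hw : w ∈ expandedChains n ℓ v)
    (hmax : IsMaxOn (totalDist n) (expandedChains n ℓ v) w) : IsFlipRigid n w := by
  intro i j hij hji d hd hj hside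
  have hd₀ : 0 < ‖d‖ := norm_pos_iff.2 hd
  obtain ⟨u, hu⟩ : ∃ u : Circle, ‖d‖ • (u : ℂ) = d :=
    ⟨Circle.exp d.arg, Complex.norm_mul_exp_arg_mul_I d⟩
  have hscale (x : ℂ) : ω d x = ‖d‖ * ω u x := by
    conv_lhs => rw [← hu, map_smul, LinearMap.smul_apply, smul_eq_mul]
  simp only [hscale, mul_nonneg_iff_of_pos_left hd₀, mul_eq_zero, hd₀.ne', false_or]
    at hj hside ⊢
  refine forall_mem_Icc_or_forall_mem_Icc (n := n) (P := fun k => ω u (w k - w i) = 0)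
    (fun k => by simp only [hw.1 k]) hv.pos ?_ hij hji (by simp) hj
  intro a b k l hak hkb hbn hln hl ha hb
  by_contra! hkl
  have hbase (x : ℂ) : ω u (x - w a) = ω u (x - w i) := by
    rw [← sub_sub_sub_cancel_right x (w a) (w i), map_sub, ha, sub_zero]
  have haxis : IsFlipAxis n a b u w :=
    ⟨hak.trans hkb, hbn, (hbase _).trans hb, fun m => (hbase _).symm ▸ hside m⟩
  exact (haxis.totalDist_lt hw.1 hak hkb hln hl (hbase _ ▸ hkl.1) (hbase _ ▸ hkl.2)).not_ge
    (hmax (flipChain_mem_expandedChains hv hw haxis))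

lemma continuous_totalDist : Continuous (totalDist n) := by
  unfold totalDist
  fun_prop

lemma exists_isFlipRigid (hv : v ∈ chainSpace ℂ n ℓ) :
    ∃ w ∈ chainSpace ℂ n ℓ, IsFlipRigid n w ∧
      JoinedIn (chainSpace Space n ℓ) (inPlane ∘ v) (inPlane ∘ w) := by
  obtain ⟨w, hw, hmax⟩ := (isCompact_expandedChains hv.1).exists_isMaxOn
    ⟨v, self_mem_expandedChains hv⟩ continuous_totalDist.continuousOn
  exact ⟨w, expandedChains_subset_chainSpace hv.1 hw, isFlipRigid_of_isMaxOn hv.1 hw hmax,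
    hw.2.2.2.2⟩

end Maximizer

/-! ### Weak convexity -/

section SupportingRay

lemma range_eq_image_Ico_of_periodic {α : Type*} {n : ℕ} {w : ℕ → α} (hw : Function.Periodic w n)
    (hn : 0 < n) (i : ℕ) : range w = w '' Ico i (i + n) := by
  refine (image_subset_range w _).antisymm' (range_subset_iff.2 fun k => ?_)
  have hi : i ≤ n * i := Nat.le_mul_of_pos_left i hn
  refine ⟨i + (k + n * i - i) % n, ⟨by omega, by have := Nat.mod_lt (k + n * i - i) hn; omega⟩, ?_⟩
  have hshift : Function.Periodic (fun m => w (i + m)) n := fun m => by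
    simp only [← add_assoc, hw _]
  rw [hshift.map_mod_nat, Nat.add_sub_cancel' (by omega), mul_comm]
  simpa only [nsmul_eq_mul, Nat.cast_id] using hw.nsmul i k

/-- Rotate the ray at `p` with direction `d` until it first meets a point of `s`. -/
lemma exists_supporting_ray {s : Set ℂ} (hs : s.Finite) {p d : ℂ}
    (hside : ∀ z ∈ s, 0 ≤ ω d (z - p)) (hline : ∀ z ∈ s, ω d (z - p) = 0 → ⟪d, z - p⟫ ≤ 0)
    (hex : ∃ z ∈ s, ω d (z - p) ≠ 0) :
    ∃ q ∈ s, 0 < ω d (q - p) ∧ ∀ z ∈ s, 0 ≤ ω (q - p) (z - p) := by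
  obtain ⟨q, ⟨hqs, hq⟩, hmax⟩ := Set.exists_max_image {z ∈ s | 0 < ω d (z - p)}
    (fun z => ⟪d, z - p⟫ / ω d (z - p)) (hs.sep _)
    (hex.imp fun z hz => ⟨hz.1, (hside z hz.1).lt_of_ne' hz.2⟩)
  refine ⟨q, hqs, hq, fun z hz => ?_⟩
  have hd : 0 < ‖d‖ ^ 2 := by
    refine pow_pos (norm_pos_iff.2 ?_) 2
    rintro rfl
    rw [map_zero, LinearMap.zero_apply] at hq
    exact hq.false
  refine nonneg_of_mul_nonneg_right ?_ hd
  rw [← Complex.orientation.inner_mul_areaForm_sub, sub_nonneg]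
  rcases (hside z hz).eq_or_lt with hzero | hpos
  · rw [← hzero, mul_zero]
    exact mul_nonpos_of_nonneg_of_nonpos hq.le (hline z hz hzero.symm)
  · have hle := (div_le_div_iff₀ hpos hq).1 (hmax z ⟨hz, hpos⟩)
    rwa [mul_comm]

lemma IsSeparatedChain.exists_supporting_vertex {n : ℕ} {w : ℕ → ℂ} (hw : IsSeparatedChain n w)
    {i : ℕ} {d : ℂ} (hd : d ≠ 0) (hside : ∀ k, 0 ≤ ω d (w k - w i))
    (hline : ∀ k, ω d (w k - w i) = 0 → ⟪d, w k - w i⟫ ≤ 0) :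
    ∃ j, i < j ∧ j < i + n ∧ 0 < ω d (w j - w i) ∧ ∀ k, 0 ≤ ω (w j - w i) (w k - w i) := by
  have hrange := range_eq_image_Ico_of_periodic hw.periodic hw.pos i
  obtain ⟨_, hj, hpos, hray⟩ := exists_supporting_ray
    (hrange ▸ (finite_Ico i (i + n)).image w) (forall_mem_range.2 hside)
    (forall_mem_range.2 hline) (exists_range_iff.2 (hw.exists_areaForm_ne_zero hd (w i)))
  rw [hrange] at hj
  obtain ⟨j, ⟨hij, hji⟩, rfl⟩ := hj
  refine ⟨j, hij.lt_of_ne ?_, hji, hpos, fun k => hray _ (mem_range_self k)⟩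
  rintro rfl
  rw [sub_self, map_zero] at hpos
  exact hpos.false

end SupportingRay

section WeaklyConvex

open ComplexConjugate

variable {n i : ℕ} {w : ℕ → ℂ}

/-- All vertices lie on the line through the edge from `w i` to `w (i + 1)` or to its left. -/
def SupportsEdge (w : ℕ → ℂ) (i : ℕ) : Prop := ∀ k, 0 ≤ ω (edge w i) (w k - w i)

lemma areaForm_conj (x y : ℂ) : ω (conj x) (conj y) = -ω x y := by
  rw [Complex.areaForm, Complex.areaForm, ← map_mul, Complex.conj_im]

lemma supportsEdge_or_of_areaForm {d p : ℂ} (hd : d ≠ 0) (hside : ∀ k, 0 ≤ ω d (w k - p))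
    (hi : ω d (w i - p) = 0) (hi' : ω d (w (i + 1) - p) = 0) :
    SupportsEdge w i ∨ SupportsEdge (conj ∘ w) i := by
  obtain ⟨r, hr⟩ := exists_smul_eq_of_areaForm_eq_zero hd (areaForm_edge_eq_zero hi hi')
  have hside' (k : ℕ) : 0 ≤ ω d (w k - w i) := by
    rw [← sub_sub_sub_cancel_right _ _ p, map_sub, hi, sub_zero]
    exact hside k
  have hω (k : ℕ) : ω (edge w i) (w k - w i) = r * ω d (w k - w i) := by
    rw [← hr, map_smul, LinearMap.smul_apply, smul_eq_mul]
  refine (le_total 0 r).imp (fun hnonneg k => ?_) fun hnonpos k => ?_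
  · rw [hω]
    exact mul_nonneg hnonneg (hside' k)
  · simp only [edge, Function.comp_apply, ← map_sub, areaForm_conj]
    rw [← edge, hω, ← neg_mul]
    exact mul_nonneg (neg_nonneg.2 hnonpos) (hside' k)

lemma exists_supportsEdge_or (hw : IsSeparatedChain n w) (hrigid : IsFlipRigid n w) :
    ∃ i, SupportsEdge w i ∨ SupportsEdge (conj ∘ w) i := by
  obtain ⟨_, ⟨i, rfl⟩, hmin⟩ := Set.exists_min_image (range w) (fun z => toLex (z.im, -z.re))
    (range_eq_image_Ico_of_periodic hw.periodic hw.pos 0 ▸ (finite_Ico 0 (0 + n)).image w)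
    (range_nonempty w)
  have hlow (k : ℕ) : (w i).im < (w k).im ∨ (w i).im = (w k).im ∧ (w k).re ≤ (w i).re := by
    simpa [Prod.Lex.toLex_le_toLex] using hmin (w k) (mem_range_self k)
  obtain ⟨j, hij, hji, hpos, hside⟩ := hw.exists_supporting_vertex (i := i) one_ne_zero
    (fun k => by
      rw [Complex.areaForm, map_one, one_mul, Complex.sub_im]
      rcases hlow k with h | h <;> linarith)
    fun k hk => by
      rw [Complex.areaForm, map_one, one_mul, Complex.sub_im] at hk
      rw [Complex.inner, map_one, mul_one, Complex.sub_re]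
      rcases hlow k with h | h <;> linarith
  have hne : w j - w i ≠ 0 := fun h => by rw [h, map_zero] at hpos; exact hpos.false
  have hself : ω (w j - w i) (w i - w i) = 0 := by rw [sub_self, map_zero]
  rcases hrigid i j hij.le hji.le _ hne (Complex.orientation.areaForm_apply_self _) hside
    with harc | harc
  · exact ⟨i, supportsEdge_or_of_areaForm hne hside hself (harc (i + 1) ⟨by omega, by omega⟩)⟩
  · refine ⟨i + n - 1, supportsEdge_or_of_areaForm hne hside (harc _ ⟨by omega, by omega⟩) ?_⟩
    rwa [Nat.sub_add_cancel (by omega), hw.periodic]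

lemma SupportsEdge.areaForm_nonneg (h : SupportsEdge w i) (k : ℕ) :
    0 ≤ ω (edge w i) (w k - w (i + 1)) := by
  rw [← sub_sub_sub_cancel_right _ _ (w i), map_sub, ← edge,
    Complex.orientation.areaForm_apply_self, sub_zero]
  exact h k

lemma SupportsEdge.inner_nonpos (h : SupportsEdge w i) (hw : IsSeparatedChain n w)
    (hrigid : IsFlipRigid n w) (hturn : ω (edge w i) (edge w (i + 1)) ≠ 0) (k : ℕ)
    (hk : ω (edge w i) (w k - w (i + 1)) = 0) : ⟪edge w i, w k - w (i + 1)⟫ ≤ 0 := by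
  obtain ⟨j, ⟨hij, hji⟩, hj⟩ :=
    range_eq_image_Ico_of_periodic hw.periodic hw.pos (i + 1) ▸ mem_range_self (f := w) k
  rw [← hj] at hk ⊢
  rcases hij.eq_or_lt with rfl | hij'
  · rw [sub_self, inner_zero_right]
  rcases hrigid (i + 1) j hij hji.le _ (hw.edge_ne_zero i) hk h.areaForm_nonneg with harc | harc
  · exact absurd (harc (i + 2) ⟨by omega, hij'⟩) hturn
  · obtain ⟨r, hr, hrj⟩ := hw.exists_pos_smul_edge_eq_sub (l := i + 1 + n) (j := i + n)
      (isStraight_of_areaForm_eq_zero (hw.edge_ne_zero i) harc) le_rfl hji le_rfl (by omega)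
      (by omega)
    rw [periodic_edge hw.periodic, hw.periodic] at hrj
    rw [← neg_sub, ← hrj, inner_neg_right, real_inner_smul_right, neg_nonpos]
    exact mul_nonneg hr.le real_inner_self_nonneg

lemma SupportsEdge.succ (h : SupportsEdge w i) (hw : IsSeparatedChain n w)
    (hrigid : IsFlipRigid n w) : SupportsEdge w (i + 1) := by
  have hofSMul {d : ℂ} (hd : ∀ k, 0 ≤ ω d (w k - w (i + 1)))
      (hr : ∃ r : ℝ, 0 ≤ r ∧ r • d = edge w (i + 1)) : SupportsEdge w (i + 1) := fun k => by
    obtain ⟨r, hr₀, hr⟩ := hr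
    rw [← hr, map_smul, LinearMap.smul_apply, smul_eq_mul]
    exact mul_nonneg hr₀ (hd k)
  by_cases hturn : ω (edge w i) (edge w (i + 1)) = 0
  · exact hofSMul h.areaForm_nonneg
      ((hw.sameRay_edge_succ hturn).exists_nonneg_left (hw.edge_ne_zero i))
  obtain ⟨j, hij, hji, hpos, hside⟩ := hw.exists_supporting_vertex (hw.edge_ne_zero i)
    h.areaForm_nonneg (h.inner_nonpos hw hrigid hturn)
  have hne : w j - w (i + 1) ≠ 0 := fun h₀ => by rw [h₀, map_zero] at hpos; exact hpos.false
  rcases hrigid (i + 1) j hij.le hji.le _ hne (Complex.orientation.areaForm_apply_self _) hside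
    with harc | harc
  · obtain ⟨r, hr⟩ := exists_smul_eq_of_areaForm_eq_zero hne (harc (i + 2) ⟨by omega, hij⟩)
    refine hofSMul hside ⟨r, nonneg_of_mul_nonneg_left ?_ hpos, hr⟩
    rw [← smul_eq_mul, ← map_smul, hr]
    exact h.areaForm_nonneg (i + 2)
  · have hback := harc (i + n) ⟨by omega, by omega⟩
    rw [hw.periodic, ← neg_sub (w (i + 1)) (w i), map_neg,
      ← Complex.orientation.areaForm_swap] at hback
    exact absurd hback hpos.ne'

lemma SupportsEdge.forall (h : SupportsEdge w i) (hw : IsSeparatedChain n w)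
    (hrigid : IsFlipRigid n w) (j : ℕ) : SupportsEdge w j := by
  have hge (k : ℕ) (hk : i ≤ k) : SupportsEdge w k := by
    induction k, hk using Nat.le_induction with
    | base => exact h
    | succ k _ ih => exact ih.succ hw hrigid
  have hper : Function.Periodic (SupportsEdge w) n := fun k => by
    simp only [SupportsEdge, periodic_edge hw.periodic k, hw.periodic k]
  have := hge (j + i * n) (le_add_left (Nat.le_mul_of_pos_right i hw.pos))
  rwa [← smul_eq_mul, hper.nsmul] at this

lemma IsFlipRigid.conj (h : IsFlipRigid n w) : IsFlipRigid n (conj ∘ w) := by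
  intro i j hij hji d hd
  have hω (x y : ℂ) : ω d (conj x - conj y) = ω (-conj d) (x - y) := by
    rw [← map_sub, ← Complex.conj_conj d, areaForm_conj, map_neg, LinearMap.neg_apply,
      Complex.conj_conj]
  simp only [Function.comp_apply, hω]
  exact h i j hij hji _ (neg_ne_zero.2 ((map_ne_zero _).2 hd))

/-- Turning the polygon over about the real axis of the plane. -/
lemma joinedIn_conj {ℓ : ℕ → ℝ} (hw : w ∈ chainSpace ℂ n ℓ) :
    JoinedIn (chainSpace Space n ℓ) (inPlane ∘ w) (inPlane ∘ conj ∘ w) := by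
  refine JoinedIn.ofLine (f := fun t => turn 0 1 (t * Real.pi) ∘ w)
    (continuous_pi fun k => (continuous_turn _ _ _).comp
      (continuous_mul_const Real.pi)).continuousOn ?_ ?_ ?_
  · ext1 k
    simp only [Function.comp_apply, zero_mul, turn_zero]
  · ext1 k
    simp only [Function.comp_apply, one_mul, turn_pi]
    congr 1
    simp [reflectLine, Complex.ext_iff, two_mul]
  · rintro _ ⟨t, -, rfl⟩
    exact (comp_mem_chainSpace _ w).2 hw

lemma exists_forall_supportsEdge {v : ℕ → ℂ} {ℓ : ℕ → ℝ} (hv : v ∈ chainSpace ℂ n ℓ) :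
    ∃ w ∈ chainSpace ℂ n ℓ, (∀ i, SupportsEdge w i) ∧ IsFlipRigid n w ∧
      JoinedIn (chainSpace Space n ℓ) (inPlane ∘ v) (inPlane ∘ w) := by
  obtain ⟨w, hw, hrigid, hjoin⟩ := exists_isFlipRigid hv
  obtain ⟨i, hi | hi⟩ := exists_supportsEdge_or hw.1 hrigid
  · exact ⟨w, hw, hi.forall hw.1 hrigid, hrigid, hjoin⟩
  · have hconj := joinedIn_conj hw
    have hw' := (comp_mem_chainSpace inPlane _).1 hconj.target_mem
    exact ⟨conj ∘ w, hw', hi.forall hw'.1 hrigid.conj, hrigid.conj, hjoin.trans hconj⟩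

end WeaklyConvex

/-! ### Relabelling the vertices -/

section Shift

variable {V : Type*} {n : ℕ}

/-- The chain `v` relabelled so as to start at the vertex `v a`. -/
def shift {α : Type*} (a : ℕ) (v : ℕ → α) (k : ℕ) : α := v (k + a)

lemma shift_mul_sub_shift {α : Type*} {v : ℕ → α} (hv : Function.Periodic v n) (hn : 0 < n)
    (a : ℕ) : shift (a * n - a) (shift a v) = v := by
  ext1 k
  rw [shift, shift, add_assoc, Nat.sub_add_cancel (Nat.le_mul_of_pos_right a hn), ← smul_eq_mul,
    hv.nsmul]

lemma edge_shift [AddCommGroup V] (a : ℕ) (v : ℕ → V) (i : ℕ) :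
    edge (shift a v) i = edge v (i + a) := by
  simp only [edge, shift, add_right_comm i 1 a]

variable [NormedAddCommGroup V] [NormedSpace ℝ V] {v u : ℕ → V} {ℓ : ℕ → ℝ}

lemma shift_mem_chainSpace (hv : v ∈ chainSpace V n ℓ) (a : ℕ) :
    shift a v ∈ chainSpace V n (shift a ℓ) := by
  have hpoint (i : ℕ) : edgePoint (shift a v) i = edgePoint v (i + a) := by
    ext s
    simp only [edgePoint, shift, add_right_comm i 1 a]
  refine ⟨⟨hv.1.three_le, fun i => ?_, fun i => ?_, fun i m => ?_⟩, fun i => ?_⟩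
  · simp only [shift, add_right_comm i n a, hv.1.periodic _]
  · rw [hpoint, hpoint, add_right_comm i 1 a]
    exact hv.1.ne_succ (i + a)
  · rw [hpoint, hpoint, add_right_comm i m a]
    exact hv.1.ne_add (i + a) m
  · simp only [shift, add_right_comm i 1 a, hv.2]

lemma joinedIn_shift (h : JoinedIn (chainSpace V n ℓ) v u) (a : ℕ) :
    JoinedIn (chainSpace V n (shift a ℓ)) (shift a v) (shift a u) :=
  (h.map (f := shift a) (continuous_pi fun k => continuous_apply (k + a))).mono <| by
    rintro _ ⟨x, hx, rfl⟩
    exact shift_mem_chainSpace hx a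

lemma joinedIn_of_shift (hv : v ∈ chainSpace V n ℓ) {a : ℕ}
    (h : JoinedIn (chainSpace V n (shift a ℓ)) (shift a v) u) :
    JoinedIn (chainSpace V n ℓ) v (shift (a * n - a) u) := by
  have hℓ : Function.Periodic ℓ n := fun i => by
    rw [← hv.2, ← hv.2, add_right_comm, hv.1.periodic, hv.1.periodic]
  have := joinedIn_shift h (a * n - a)
  rwa [shift_mul_sub_shift hv.1.periodic hv.1.pos, shift_mul_sub_shift hℓ hv.1.pos] at this

lemma SupportsEdge.shift {w : ℕ → ℂ} (a : ℕ) {i : ℕ} (h : SupportsEdge w (i + a)) :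
    SupportsEdge (shift a w) i := fun k => by
  rw [edge_shift]
  exact h (k + a)

lemma IsFlipRigid.shift {w : ℕ → ℂ} (h : IsFlipRigid n w) (hw : Function.Periodic w n) (hn : 0 < n)
    (a : ℕ) :
    IsFlipRigid n (shift a w) := by
  intro i j hij hji d hd hj hside
  refine (h (i + a) (j + a) (by omega) (by omega) d hd hj fun k => ?_).imp
    (fun harc k ⟨hik, hkj⟩ => harc (k + a) ⟨by omega, by omega⟩)
    fun harc k ⟨hjk, hki⟩ => harc (k + a) ⟨by omega, by omega⟩
  rw [← congrFun (shift_mul_sub_shift hw hn a) k]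
  exact hside _

end Shift

/-! ### Strict convexity -/

section Corner

variable {n x y : ℕ} {w : ℕ → ℂ}

/-- The chain makes a proper left turn at the vertex `w k`, where `k ≥ 1`. -/
def IsLeftTurn (w : ℕ → ℂ) (k : ℕ) : Prop := 0 < ω (edge w (k - 1)) (edge w k)

lemma IsLeftTurn.le_of_isStraight {k : ℕ} (hk : IsLeftTurn w k) (h : IsStraight x y w)
    (hxk : x < k) : y ≤ k := by
  by_contra! hky
  have hzero := h (k - 1) (by omega) (by omega)
  rw [Nat.sub_add_cancel (by omega)] at hzero
  exact hk.ne' hzero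

lemma exists_isLeftTurn (hw : IsSeparatedChain n w) (hs : ∀ i, SupportsEdge w i) (i : ℕ) :
    ∃ j > i, IsStraight i j w ∧ IsLeftTurn w j := by
  classical
  have hex : ∃ k, i ≤ k ∧ ω (edge w k) (edge w (k + 1)) ≠ 0 := by
    by_contra! hall
    obtain ⟨r, hr, hclosed⟩ := hw.exists_pos_smul_edge_eq_sub (a := i) (b := i + n) (j := i)
      (fun k hk _ => hall k hk) le_rfl (Nat.lt_add_of_pos_right hw.pos) le_rfl le_rfl
      (Nat.lt_add_of_pos_right hw.pos)
    rw [hw.periodic, sub_self] at hclosed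
    exact smul_ne_zero hr.ne' (hw.edge_ne_zero i) hclosed
  obtain ⟨hik, hk⟩ := Nat.find_spec hex
  exact ⟨Nat.find hex + 1, Nat.lt_succ_of_le hik,
    fun l hil hl => by_contra fun hne => Nat.find_min hex (by omega) ⟨hil, hne⟩,
    ((hs _).areaForm_nonneg _).lt_of_ne' hk⟩

/-- The chain turns left at `w b`, `w c` and `w n = w 0`, and these three vertices span a
counterclockwise triangle. -/
structure IsTurningTriangle (n b c : ℕ) (w : ℕ → ℂ) : Prop where
  pos : 0 < b
  lt : b < c
  lt_length : c < n
  isLeftTurn_left : IsLeftTurn w b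
  isLeftTurn_right : IsLeftTurn w c
  isLeftTurn_length : IsLeftTurn w n
  areaForm_pos : 0 < ω (w b - w 0) (w c - w b)

lemma exists_isTurningTriangle (hw : IsSeparatedChain n w) (hs : ∀ i, SupportsEdge w i)
    (hn : IsLeftTurn w n) : ∃ b c, IsTurningTriangle n b c w := by
  obtain ⟨b, hb₀, hb, hbturn⟩ := exists_isLeftTurn hw hs 0
  obtain ⟨c, hbc, hc, hcturn⟩ := exists_isLeftTurn hw hs b
  obtain ⟨r, hr, hrb⟩ := hw.exists_pos_smul_edge_eq_sub (j := b - 1) hb le_rfl hb₀ le_rfl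
    (Nat.zero_le _) (by omega)
  obtain ⟨s, hs, hsc⟩ := hw.exists_pos_smul_edge_eq_sub hc le_rfl hbc le_rfl le_rfl hbc
  have hpos : 0 < ω (w b - w 0) (w c - w b) := by
    rw [← hrb, ← hsc, map_smul, map_smul, LinearMap.smul_apply]
    exact smul_pos hs (smul_pos hr hbturn)
  have hbn : b < n := by
    refine (hn.le_of_isStraight hb hw.pos).lt_of_ne ?_
    rintro rfl
    rw [hw.periodic.eq, sub_self, map_zero, LinearMap.zero_apply] at hpos
    exact hpos.false
  have hcn : c < n := by
    refine (hn.le_of_isStraight hc hbn).lt_of_ne ?_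
    rintro rfl
    rw [hw.periodic.eq, ← neg_sub, map_neg, LinearMap.neg_apply,
      Complex.orientation.areaForm_apply_self, neg_zero] at hpos
    exact hpos.false
  exact ⟨b, c, hb₀, hbc, hcn, hbturn, hcturn, hn, hpos⟩

end Corner

section Bend

variable {n b c : ℕ} {w : ℕ → ℂ} {θ ℓ : ℕ → ℝ}

lemma areaForm_mul_left_mul (κ x y : ℂ) : ω (κ * x) (κ * y) = ‖κ‖ ^ 2 * ω x y := by
  rw [Complex.areaForm, Complex.areaForm, map_mul, mul_mul_mul_comm, Complex.conj_mul',
    ← Complex.ofReal_pow, Complex.im_ofReal_mul]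

lemma areaForm_exp_mul_I (α β : ℝ) :
    ω (Complex.exp (α * Complex.I)) (Complex.exp (β * Complex.I)) = Real.sin (β - α) := by
  rw [Complex.areaForm, ← Complex.exp_conj, ← Complex.exp_add, map_mul, Complex.conj_ofReal,
    Complex.conj_I, ← Complex.exp_ofReal_mul_I_im]
  congr 2
  push_cast
  ring

lemma IsTurningTriangle.closingFactor_eq (h : IsTurningTriangle n b c w) {x y l m : ℕ} (σ : ℝ)
    (hstraight : IsStraight x y w) (hxl : x ≤ l) (hly : l < y) (hxm : x ≤ m) (hmy : m < y) :
    closingFactor n b c σ w θ l = closingFactor n b c σ w θ m := by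
  have hb := h.isLeftTurn_left.le_of_isStraight hstraight
  have hc := h.isLeftTurn_right.le_of_isStraight hstraight
  have hlb : l < b ↔ m < b := by omega
  have hlc : l < c ↔ m < c := by omega
  simp only [closingFactor, hlb, hlc]

/-- Every straight arc of `w` from `w 0` to `w n` bends to the left in `u`. -/
def BendsStraightArcs (n : ℕ) (w u : ℕ → ℂ) : Prop :=
  ∀ ⦃x y l m⦄, IsStraight x y w → y ≤ n → x ≤ l → l < m → m < y → 0 < ω (edge u l) (edge u m)

lemma IsTurningTriangle.bendsStraightArcs_perturb (h : IsTurningTriangle n b c w)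
    (hw : IsSeparatedChain n w) (hclosable : IsClosable n b c w θ)
    (hθ : ∀ l m, l < m → m < n → θ m - θ l ∈ Ioo 0 Real.pi) :
    BendsStraightArcs n w (perturb n b c 1 w θ) := by
  intro x y l m hstraight hyn hxl hlm hmy
  have hbc := h.lt.le
  have hcn := h.lt_length.le
  obtain ⟨r, hr, hrm⟩ := (hw.sameRay_edge hstraight hxl hlm.le hmy).exists_pos_left
    (hw.edge_ne_zero l) (hw.edge_ne_zero m)
  rw [edge_perturb hbc hcn hclosable (by omega), edge_perturb hbc hcn hclosable (by omega),
    h.closingFactor_eq 1 hstraight hxl (by omega) (by omega) hmy, areaForm_mul_left_mul,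
    norm_closingFactor hclosable (one_pow 2), one_pow, one_mul, rotEdge, rotEdge, ← hrm,
    smul_mul_assoc, map_smul, areaForm_mul_left_mul, areaForm_exp_mul_I]
  have := norm_pos_iff.2 (hw.edge_ne_zero l)
  have := Real.sin_pos_of_mem_Ioo (hθ l m hlm (by omega))
  positivity

lemma BendsStraightArcs.areaForm_sub_pos {u : ℕ → ℂ} (h : BendsStraightArcs n w u)
    {x y p q r : ℕ} (hstraight : IsStraight x y w) (hyn : y ≤ n) (hxp : x ≤ p) (hpq : p < q)
    (hqr : q < r) (hry : r ≤ y) : 0 < ω (u q - u p) (u r - u q) := by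
  rw [← sum_edge_Ico u hpq.le, ← sum_edge_Ico u hqr.le, map_sum]
  refine Finset.sum_pos (fun m hm => ?_) (Finset.nonempty_Ico.2 hqr)
  rw [map_sum, LinearMap.sum_apply]
  refine Finset.sum_pos (fun l hl => ?_) (Finset.nonempty_Ico.2 hpq)
  rw [Finset.mem_Ico] at hl hm
  exact h hstraight hyn (hxp.trans hl.1) (by omega) (by omega)

/-- The closed chain `u` of `n` edges is a strictly convex counterclockwise polygon: all other
vertices lie to the left of every edge. -/
def IsStrictlyConvex (n : ℕ) (u : ℕ → ℂ) : Prop :=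
  ∀ i m, 2 ≤ m → m < n → 0 < ω (edge u i) (u (i + m) - u i)

lemma isStrictlyConvex_of_forall_lt (hn : 0 < n) {u : ℕ → ℂ} (hu : Function.Periodic u n)
    (h : ∀ i < n, ∀ m, 2 ≤ m → m < n → 0 < ω (edge u i) (u (i + m) - u i)) :
    IsStrictlyConvex n u :=
  forall_of_periodic (fun i => by
    simp only [periodic_edge hu i, hu i, add_right_comm i n, hu _]) hn h

lemma IsStrictlyConvex.shift {u : ℕ → ℂ} (h : IsStrictlyConvex n u) (a : ℕ) :
    IsStrictlyConvex n (shift a u) := fun i m h₂ hm => by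
  rw [edge_shift]
  simpa only [_root_.shift, add_right_comm i m a] using h (i + a) m h₂ hm

lemma BendsStraightArcs.areaForm_pos {u : ℕ → ℂ} (hbends : BendsStraightArcs n w u)
    (hu : Function.Periodic u n) (hw : IsSeparatedChain n w) (hrigid : IsFlipRigid n w)
    (hs : ∀ i, SupportsEdge w i) (hn : IsLeftTurn w n) {i m : ℕ} (hi : i < n) (h₂ : 2 ≤ m)
    (hm : m < n) (hzero : ω (edge w i) (w (i + m) - w i) = 0) :
    0 < ω (edge u i) (u (i + m) - u i) := by
  have hne := hw.edge_ne_zero i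
  rcases hrigid i (i + m) (by omega) (by omega) _ hne hzero (hs i) with harc | harc
  · have hstraight := isStraight_of_areaForm_eq_zero hne harc
    have hpos := hbends.areaForm_sub_pos hstraight (hn.le_of_isStraight hstraight hi) le_rfl
      (Nat.lt_succ_self i) (Nat.add_lt_add_left h₂ i) le_rfl
    rwa [← sub_sub_sub_cancel_right (u (i + m)) _ (u i), map_sub,
      Complex.orientation.areaForm_apply_self, sub_zero] at hpos
  · have hline : ∀ l ∈ Icc (i + m) (i + 1 + n), ω (edge w i) (w l - w i) = 0 := by
      rintro l ⟨hl, hl'⟩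
      rcases hl'.eq_or_lt with rfl | hlt
      · rw [hw.periodic, ← edge, Complex.orientation.areaForm_apply_self]
      · exact harc l ⟨hl, by omega⟩
    have hnm : n ≤ i + m := by
      by_contra! hlt
      have := hn.le_of_isStraight (isStraight_of_areaForm_eq_zero hne hline) hlt
      omega
    obtain ⟨k, hk⟩ := Nat.exists_eq_add_of_le' hnm
    have hstraight : IsStraight k (i + 1) w :=
      isStraight_of_areaForm_eq_zero hne fun l ⟨hl, hl'⟩ => by
        rw [← hw.periodic]
        exact hline (l + n) ⟨by omega, by omega⟩
    rw [hk, hu, ← neg_sub, map_neg, ← Complex.orientation.areaForm_swap]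
    exact hbends.areaForm_sub_pos hstraight hi le_rfl (by omega) (Nat.lt_succ_self i) le_rfl

lemma exists_angle_sub_mem_Ioo (n : ℕ) {P : (ℕ → ℝ) → Prop} (hP : ∀ᶠ θ in 𝓝 0, P θ) :
    ∃ θ, P θ ∧ ∀ l m, l < m → m < n → θ m - θ l ∈ Ioo 0 Real.pi := by
  have hscale : Tendsto (fun (ε : ℝ) (l : ℕ) => ε * l) (𝓝[>] 0) (𝓝 0) :=
    (Continuous.tendsto' (by fun_prop) _ _ (by ext1; exact zero_mul _)).mono_left
      nhdsWithin_le_nhds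
  have hsmall : ∀ᶠ ε : ℝ in 𝓝[>] 0, ε * n < Real.pi :=
    ((continuous_mul_const (n : ℝ)).continuousAt.eventually_lt_const
      (by simpa using Real.pi_pos)).filter_mono nhdsWithin_le_nhds
  obtain ⟨ε, ⟨hPε, hεn⟩, hε : 0 < ε⟩ :=
    (((hscale.eventually hP).and hsmall).and self_mem_nhdsWithin).exists
  refine ⟨_, hPε, fun l m hlm hmn => ?_⟩
  have hlm' : (l : ℝ) < m := Nat.cast_lt.2 hlm
  have hmn' : (m : ℝ) < n := Nat.cast_lt.2 hmn
  rw [← mul_sub]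
  refine ⟨mul_pos hε (sub_pos.2 hlm'), (mul_lt_mul_of_pos_left ?_ hε).trans hεn⟩
  linarith [l.cast_nonneg (α := ℝ)]

lemma eventually_forall_areaForm_pos (n : ℕ) (w : ℕ → ℂ) :
    ∀ᶠ u in 𝓝 w, ∀ i < n, ∀ m < n, 0 < ω (edge w i) (w (i + m) - w i) →
      0 < ω (edge u i) (u (i + m) - u i) := by
  refine (eventually_all_finite (finite_lt_nat n)).2 fun i _ =>
    (eventually_all_finite (finite_lt_nat n)).2 fun m _ => ?_
  rw [eventually_imp_distrib_left]
  have hcont : Continuous fun u : ℕ → ℂ => ω (edge u i) (u (i + m) - u i) := by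
    simp only [Complex.areaForm, edge]
    fun_prop
  exact hcont.continuousAt.eventually_const_lt

lemma exists_isStrictlyConvex_of_isLeftTurn (hw : w ∈ chainSpace ℂ n ℓ)
    (hs : ∀ i, SupportsEdge w i) (hrigid : IsFlipRigid n w) (hn : IsLeftTurn w n) :
    ∃ u, IsStrictlyConvex n u ∧ JoinedIn (chainSpace ℂ n ℓ) w u := by
  obtain ⟨b, c, h⟩ := exists_isTurningTriangle hw.1 hs hn
  have hbc := h.lt.le
  have hcn := h.lt_length.le
  have hσ : (1 : ℝ) ^ 2 = 1 := one_pow 2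
  have hpos : 0 < 1 * ω (w b - w 0) (w c - w b) := by rw [one_mul]; exact h.areaForm_pos
  obtain ⟨θ, ⟨hclosable, hjoin, hopen⟩, hθ⟩ := exists_angle_sub_mem_Ioo n <|
    (eventually_isClosable (isClosable_zero hw.1.periodic hbc hcn h.areaForm_pos.ne')).and <|
    (eventually_joinedIn_perturb hw hbc hcn hσ hpos).and <|
    (tendsto_perturb hw.1.periodic hbc hcn hσ hpos).eventually (eventually_forall_areaForm_pos n w)
  have hbends := h.bendsStraightArcs_perturb hw.1 hclosable hθ
  refine ⟨_, isStrictlyConvex_of_forall_lt hw.1.pos periodic_perturb fun i hi m h₂ hm => ?_, hjoin⟩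
  rcases (hs i (i + m)).eq_or_lt with hzero | hlt
  · exact hbends.areaForm_pos periodic_perturb hw.1 hrigid hs hn hi h₂ hm hzero.symm
  · exact hopen i hi m hm hlt

lemma exists_isStrictlyConvex {v : ℕ → ℂ} (hv : v ∈ chainSpace ℂ n ℓ) :
    ∃ u, IsStrictlyConvex n u ∧ JoinedIn (chainSpace Space n ℓ) (inPlane ∘ v) (inPlane ∘ u) := by
  obtain ⟨w, hw, hs, hrigid, hjoin⟩ := exists_forall_supportsEdge hv
  obtain ⟨a, ha, -, hturn⟩ := exists_isLeftTurn hw.1 hs 0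
  have hturn' : IsLeftTurn (shift a w) n := by
    have hindex : n - 1 + a = a - 1 + n := by have := hw.1.pos; omega
    rwa [IsLeftTurn, edge_shift, edge_shift, hindex, add_comm n a,
      periodic_edge hw.1.periodic, periodic_edge hw.1.periodic]
  obtain ⟨u, hu, hjoin'⟩ := exists_isStrictlyConvex_of_isLeftTurn (shift_mem_chainSpace hw a)
    (fun i => (hs (i + a)).shift a) (hrigid.shift hw.1.periodic hw.1.pos a) hturn'
  exact ⟨_, hu.shift (a * n - a), hjoin.trans (joinedIn_comp inPlane (joinedIn_of_shift hw hjoin'))⟩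

end Bend

/-! ### Convex configurations -/

lemma exists_add_mod_eq {n i j : ℕ} (hi : i < n) (hj : j < n) (hji : j ≠ i) :
    ∃ m, 0 < m ∧ m < n ∧ (i + m) % n = j := by
  rcases hji.lt_or_gt with h | h
  · refine ⟨j + n - i, by omega, by omega, ?_⟩
    rw [Nat.add_sub_cancel' (by omega), Nat.add_mod_right, Nat.mod_eq_of_lt hj]
  · refine ⟨j - i, by omega, by omega, ?_⟩
    rw [Nat.add_sub_cancel' h.le, Nat.mod_eq_of_lt hj]

lemma exists_linearMap_areaForm {W : Type*} [NormedAddCommGroup W] [InnerProductSpace ℝ W]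
    (g : ℂ →ᵃⁱ[ℝ] W) (d : ℂ) : ∃ f : W →ₗ[ℝ] ℝ, ∀ z z', f (g z) = f (g z') - ω d (z - z') := by
  refine ⟨-(innerSL ℝ (g.linearIsometry (J d)) : W →ₗ[ℝ] ℝ), fun z z' => ?_⟩
  have h : ⟪g.linearIsometry (J d), g z - g z'⟫ = ω d (z - z') := by
    rw [← vsub_eq_sub, ← g.map_vsub, LinearIsometry.inner_map_map,
      Complex.orientation.inner_rightAngleRotation_left, vsub_eq_sub]
  rw [← h, inner_sub_right, LinearMap.neg_apply, LinearMap.neg_apply, ContinuousLinearMap.coe_coe,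
    innerSL_apply_apply, innerSL_apply_apply]
  ring

section Convex

variable {n : ℕ} {u : ℕ → ℂ}

namespace IsStrictlyConvex

lemma supportsEdge (h : IsStrictlyConvex n u) (hu : Function.Periodic u n) (hn : 0 < n) (i : ℕ) :
    SupportsEdge u i := fun k => by
  obtain ⟨j, ⟨hij, hji⟩, hj⟩ := range_eq_image_Ico_of_periodic hu hn i ▸ mem_range_self (f := u) k
  rw [← hj]
  obtain ⟨m, rfl⟩ := Nat.exists_eq_add_of_le hij
  match m with
  | 0 => rw [add_zero, sub_self, map_zero]
  | 1 => rw [← edge, Complex.orientation.areaForm_apply_self]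
  | m + 2 => exact (h i (m + 2) (by omega) (by omega)).le

lemma areaForm_edge_add_edge_pos (h : IsStrictlyConvex n u) (hu : Function.Periodic u n)
    (hn : 3 ≤ n) (i : ℕ) {m : ℕ} (hm : 0 < m) (hmn : m < n) :
    0 < ω (edge u i + edge u (i + 1)) (u (i + 1 + m) - u (i + 1)) := by
  have hs := h.supportsEdge hu (by omega)
  rw [map_add, LinearMap.add_apply]
  rcases (Nat.succ_le_of_lt hm).eq_or_lt with rfl | hm₂
  · refine add_pos_of_pos_of_nonneg ?_ (hs (i + 1) _)
    rw [← sub_sub_sub_cancel_right _ _ (u i), map_sub, ← edge,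
      Complex.orientation.areaForm_apply_self, sub_zero]
    exact h i 2 le_rfl (by omega)
  · exact add_pos_of_nonneg_of_pos ((hs i).areaForm_nonneg _) (h (i + 1) m hm₂ hmn)

variable (g : ℂ →ᵃⁱ[ℝ] E3)

lemma notMem_convexHull (h : IsStrictlyConvex n u) (hu : Function.Periodic u n) (hn : 3 ≤ n)
    {i : ℕ} (hi : i < n) :
    (g ∘ u) i ∉ convexHull ℝ {x | ∃ j, j < n ∧ j ≠ i ∧ x = (g ∘ u) j} := by
  have hprev (m : ℕ) : u (i + (n - 1) + 1 + m) = u (i + m) := by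
    rw [← hu (i + m)]
    congr 1
    omega
  obtain ⟨f, hf⟩ := exists_linearMap_areaForm g (edge u (i + (n - 1)) + edge u (i + (n - 1) + 1))
  have hsub : {x | ∃ j, j < n ∧ j ≠ i ∧ x = (g ∘ u) j} ⊆ {x | f x < f (g (u i))} := by
    rintro _ ⟨j, hj, hji, rfl⟩
    obtain ⟨m, hm, hmn, rfl⟩ := exists_add_mod_eq hi hj hji
    have hpos := h.areaForm_edge_add_edge_pos hu hn (i + (n - 1)) hm hmn
    rw [hprev, ← add_zero (i + (n - 1) + 1), hprev, add_zero, add_zero] at hpos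
    change f (g (u ((i + m) % n))) < f (g (u i))
    rw [hu.map_mod_nat, hf _ (u i)]
    exact sub_lt_self _ hpos
  exact fun hmem => lt_irrefl (f (g (u i))) <|
    convexHull_min hsub (convex_halfSpace_lt f.isLinear _) hmem

lemma exists_supporting_functional (h : IsStrictlyConvex n u) (hu : Function.Periodic u n)
    {i : ℕ} (hi : i < n) :
    ∃ f : E3 →ₗ[ℝ] ℝ, f ((g ∘ u) i) = f ((g ∘ u) ((i + 1) % n)) ∧
      ∀ j, j < n → j ≠ i → j ≠ (i + 1) % n → f ((g ∘ u) j) < f ((g ∘ u) i) := by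
  obtain ⟨f, hf⟩ := exists_linearMap_areaForm g (edge u i)
  refine ⟨f, ?_, fun j hj hji hji' => ?_⟩
  · rw [Function.comp_apply, Function.comp_apply, hu.map_mod_nat, hf (u (i + 1)) (u i), ← edge,
      Complex.orientation.areaForm_apply_self, sub_zero]
  · obtain ⟨m, hm, hmn, rfl⟩ := exists_add_mod_eq hi hj hji
    have hm₁ : m ≠ 1 := by
      rintro rfl
      exact hji' rfl
    rw [Function.comp_apply, Function.comp_apply, hu.map_mod_nat, hf _ (u i)]
    exact sub_lt_self _ (h i m (by omega) hmn)

lemma isConvexConfiguration (h : IsStrictlyConvex n u) (hu : Function.Periodic u n) (hn : 3 ≤ n) :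
    IsConvexConfiguration n (g ∘ u) := by
  refine ⟨⟨(⊤ : AffineSubspace ℝ ℂ).map g.toAffineMap, ?_, fun i _ => mem_image_of_mem g trivial⟩,
    fun i hi => h.notMem_convexHull g hu hn hi, fun i hi => h.exists_supporting_functional g hu hi⟩
  rw [AffineSubspace.map_direction, AffineSubspace.direction_top, Submodule.map_top,
    LinearMap.finrank_range_of_inj (f := g.linear) g.linearIsometry.injective,
    Complex.finrank_real_complex]

end IsStrictlyConvex

end Convex

/-! ### Planar chains in space -/

lemma nonempty_linearIsometryEquiv {V W : Type*} [NormedAddCommGroup V] [InnerProductSpace ℝ V]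
    [FiniteDimensional ℝ V] [NormedAddCommGroup W] [InnerProductSpace ℝ W] [FiniteDimensional ℝ W]
    (h : Module.finrank ℝ V = Module.finrank ℝ W) : Nonempty (V ≃ₗᵢ[ℝ] W) :=
  ⟨(stdOrthonormalBasis ℝ V).equiv (stdOrthonormalBasis ℝ W) (finCongr h)⟩

lemma exists_affineIsometry {S : AffineSubspace ℝ E3} (hS : Module.finrank ℝ S.direction = 2)
    {p : E3} (hp : p ∈ S) : ∃ F : Space →ᵃⁱ[ℝ] E3, ∀ x ∈ S, ∃ z, F (inPlane z) = x := by
  have hperp : Module.finrank ℝ S.directionᗮ = 1 := by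
    have h := S.direction.finrank_add_finrank_orthogonal
    rw [hS, finrank_euclideanSpace_fin] at h
    omega
  obtain ⟨e⟩ := nonempty_linearIsometryEquiv (Complex.finrank_real_complex.trans hS.symm)
  obtain ⟨e'⟩ := nonempty_linearIsometryEquiv ((Module.finrank_self ℝ).trans hperp.symm)
  let F := ((LinearIsometryEquiv.withLpProdCongr 2 e e').trans
    S.direction.orthogonalDecomposition.symm).toAffineIsometryEquiv.trans
      (AffineIsometryEquiv.vaddConst ℝ p)
  refine ⟨F.toAffineIsometry, fun x hx => ⟨e.symm ⟨x - p, S.vsub_mem_direction hx hp⟩, ?_⟩⟩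
  simp [F, inPlane_apply]

lemma IsSimpleClosedChain.comp_mod {n : ℕ} {v : ℕ → E3} (hv : IsSimpleClosedChain n v) :
    IsSimpleClosedChain n fun k => v (k % n) := by
  refine ⟨hv.1, fun i j hi hj => ?_, fun i j hij hj => ?_⟩
  · simpa only [Nat.mod_eq_of_lt hi, Nat.mod_eq_of_lt hj] using hv.2.1 i j hi hj
  · simpa only [Nat.mod_mod, Nat.mod_eq_of_lt (hij.trans hj), Nat.mod_eq_of_lt hj, Nat.zero_mod]
      using hv.2.2 i j hij hj

lemma exists_isClosedChainMotion {n : ℕ} {ℓ : ℕ → ℝ} {v w : ℕ → E3}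
    (h : JoinedIn (chainSpace E3 n ℓ) (fun k => v (k % n)) w) :
    ∃ γ, IsClosedChainMotion n v γ ∧ γ 1 = w := by
  have hlength {x : ℕ → E3} (hx : x ∈ chainSpace E3 n ℓ) (i : ℕ) :
      ‖x ((i + 1) % n) - x i‖ = ℓ i := by
    rw [hx.1.periodic.map_mod_nat, ← dist_eq_norm_sub', hx.2]
  have hsource := hlength h.source_mem
  simp only [Nat.mod_mod] at hsource
  obtain ⟨γ, hγ⟩ := h
  have hmem (t : ℝ) : γ.extend t ∈ chainSpace E3 n ℓ := hγ _
  refine ⟨γ.extend, ⟨fun i _ => ?_, fun i hi => ?_, fun t _ => (hmem t).1.isSimpleClosedChain,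
    fun t _ i hi => ?_⟩, γ.extend_one⟩
  · exact ((continuous_apply i).comp γ.continuous_extend).continuousOn
  · simp only [γ.extend_zero, Nat.mod_eq_of_lt hi]
  · rw [hlength (hmem t), ← hsource, Nat.mod_eq_of_lt hi]

/-- Every simple closed polygonal chain lying in a plane of ℝ³
(a planar simple polygon) can be convexified by a motion in ℝ³. -/
theorem convexifiable_of_planar (n : ℕ) (v : ℕ → E3)
    (hsimple : IsSimpleClosedChain n v)
    (S : AffineSubspace ℝ E3) (hS : Module.finrank ℝ S.direction = 2)
    (hplanar : ∀ i, i < n → v i ∈ S) :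
    CanBeConvexified n v := by
  have hn : 0 < n := Nat.zero_lt_of_lt hsimple.1
  obtain ⟨F, hF⟩ := exists_affineIsometry hS (hplanar 0 hn)
  choose z hz using fun k => hF _ (hplanar (k % n) (Nat.mod_lt k hn))
  have hlift : F ∘ inPlane ∘ z = fun k => v (k % n) := funext hz
  have hv : (fun k => v (k % n)) ∈ chainSpace E3 n fun k => dist (v (k % n)) (v ((k + 1) % n)) :=
    ⟨hsimple.comp_mod.isSeparatedChain fun k => by simp only [Nat.add_mod_right], fun _ => rfl⟩
  rw [← hlift, comp_mem_chainSpace, comp_mem_chainSpace] at hv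
  obtain ⟨u, hu, hjoin⟩ := exists_isStrictlyConvex hv
  have hu' := ((comp_mem_chainSpace inPlane u).1 hjoin.target_mem).1
  obtain ⟨γ, hγ, hγ₁⟩ := exists_isClosedChainMotion (hlift ▸ joinedIn_comp F hjoin)
  exact ⟨γ, hγ, hγ₁ ▸ hu.isConvexConfiguration (F.comp inPlane) hu'.periodic hu'.three_le⟩
end
end
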